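/- arXiv:1602.02973 — 6 statements merged into one kernel-verified Lean document; each statement's English description precedes it below -/
import Mathlib

section
/- Let f : ℂ^k → ℂ^k be continuous and let Λ : ℂ^s → ℂ^s be the diagonal linear map with diagonal entries λ_1, …, λ_s ∈ ℂ satisfying 0 < |λ_j| < 1 for all j. Suppose P : D_s → ℂ^k is analytic, the derivative DP(0) : ℂ^s → ℂ^k is injective, and f(P(z)) = P(Λz) for all z ∈ D_s. Then P is injective on D_s. -/
/-- An analytic parameterization `P` of the unit polydisk solving the invariance
equation `f ∘ P = P ∘ Λ`, where `Λ` is diagonal with entries `λ_j`, `0 < |λ_j| < 1`, and whose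
differential at `0` is injective, is injective on the whole unit polydisk. -/
theorem parameterization_injective
    {k s : ℕ} (f : (Fin k → ℂ) → (Fin k → ℂ)) (hf : Continuous f)
    (lam : Fin s → ℂ) (hlam : ∀ j, 0 < ‖lam j‖ ∧ ‖lam j‖ < 1)
    (P : (Fin s → ℂ) → (Fin k → ℂ))
    (hP : AnalyticOnNhd ℂ P {z | ∀ j, ‖z j‖ < 1})
    (hDP : Function.Injective (fderiv ℂ P 0))
    (hconj : ∀ z ∈ {z : Fin s → ℂ | ∀ j, ‖z j‖ < 1},
      f (P z) = P (fun j => lam j * z j)) :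
    Set.InjOn P {z | ∀ j, ‖z j‖ < 1} := by
  have h0 : (0 : Fin s → ℂ) ∈ {z : Fin s → ℂ | ∀ j, ‖z j‖ < 1} := by
    intro j; simp
  have hs : HasStrictFDerivAt P (fderiv ℂ P 0) 0 := (hP 0 h0).hasStrictFDerivAt
  obtain ⟨L, hL⟩ := LinearMap.exists_leftInverse_of_injective
    (fderiv ℂ P 0 : (Fin s → ℂ) →ₗ[ℂ] (Fin k → ℂ)) (LinearMap.ker_eq_bot.2 hDP)
  have hg := (LinearMap.toContinuousLinearMap L).hasStrictFDerivAt.comp (0 : Fin s → ℂ) hs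
  have hid : (LinearMap.toContinuousLinearMap L).comp (fderiv ℂ P 0)
      = ((ContinuousLinearEquiv.refl ℂ (Fin s → ℂ)) : (Fin s → ℂ) →L[ℂ] (Fin s → ℂ)) := by
    ext1 v
    exact LinearMap.congr_fun hL v
  rw [hid] at hg
  have hsrc := (hg.toOpenPartialHomeomorph _).open_source.mem_nhds
    hg.mem_toOpenPartialHomeomorph_source
  have hinj := (hg.toOpenPartialHomeomorph _).injOn
  have hlim : ∀ z : Fin s → ℂ, Filter.Tendsto (fun n : ℕ => fun j => lam j ^ n * z j)
      Filter.atTop (nhds 0) := by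
    intro z
    rw [tendsto_pi_nhds]
    intro j
    simpa using (tendsto_pow_atTop_nhds_zero_of_norm_lt_one (hlam j).2).mul_const (z j)
  have hmem : ∀ z ∈ {z : Fin s → ℂ | ∀ j, ‖z j‖ < 1}, ∀ n : ℕ,
      (fun j => lam j ^ n * z j) ∈ {z : Fin s → ℂ | ∀ j, ‖z j‖ < 1} := by
    intro z hz n j
    rw [norm_mul, norm_pow]
    exact lt_of_le_of_lt (mul_le_of_le_one_left (norm_nonneg _)
      (pow_le_one₀ (norm_nonneg _) (hlam j).2.le)) (hz j)
  intro z hz w hw hzw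
  have hiter : ∀ n : ℕ, P (fun j => lam j ^ n * z j) = P (fun j => lam j ^ n * w j) := by
    intro n
    induction n with
    | zero => simpa using hzw
    | succ n ih =>
      have h1 := hconj _ (hmem z hz n)
      have h2 := hconj _ (hmem w hw n)
      rw [ih, h2] at h1
      simpa [pow_succ', mul_assoc] using h1.symm
  obtain ⟨n, hn1, hn2⟩ := (((hlim z).eventually hsrc).and ((hlim w).eventually hsrc)).exists
  have heq := hinj hn1 hn2 (by
    rw [hg.toOpenPartialHomeomorph_coe]
    simp only [Function.comp_apply, hiter n])
  funext j
  exact mul_left_cancel₀ (pow_ne_zero n (norm_pos_iff.1 (hlam j).1)) (congrFun heq j)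
end

section
/- (Interval Newton method with parameter.) Let m > k, let F : ℝ^m → ℝ^k be C¹, let X = Π_{i=1}^{m−k}[a_i,b_i] ⊂ ℝ^{m−k} and Y = Π_{i=1}^{k}[c_i,d_i] ⊂ ℝ^k be compact boxes, and let y_0 ∈ int Y. For x ∈ ℝ^{m−k} write F_x(y) = F(x,y). Suppose every matrix M ∈ [D_y F(X×Y)] (the interval hull over X×Y of the k×k Jacobian of F in the y-variables) is invertible, and that for every x ∈ X and every M ∈ [D_y F(X×Y)], the point y_0 − M^{-1} F(x, y_0) lies in int Y. Then there exists a function q : X → Y such that F(x, q(x)) = 0 for all x ∈ X. -/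
open Set Matrix

theorem fderiv_inr_eq_mulVec {n k : ℕ} (L : ((Fin n → ℝ) × (Fin k → ℝ)) →L[ℝ] (Fin k → ℝ))
    (v : Fin k → ℝ) (i : Fin k) :
    L ((0 : Fin n → ℝ), v) i = ∑ j, L ((0 : Fin n → ℝ), Pi.single j 1) i * v j := by
  have h1 : ((0 : Fin n → ℝ), v) = ∑ j, v j • ((0 : Fin n → ℝ), (Pi.single j 1 : Fin k → ℝ)) := by
    ext j
    · simp [Prod.fst_sum]
    · simp [Prod.snd_sum, Finset.sum_apply, Pi.single_apply]
  rw [h1, map_sum, Finset.sum_apply]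
  refine Finset.sum_congr rfl fun j _ => ?_
  rw [map_smul, Pi.smul_apply, smul_eq_mul, mul_comm]

/-- Interval Newton method with parameter (Theorem 4.3 of the paper).
If every matrix `M` in the interval hull of the `y`-Jacobian of `F` over the box `X × Y`
is invertible, and the Newton image `y₀ - M⁻¹ F(x, y₀)` lies in the interior of `Y` for
every `x ∈ X` and every such `M`, then there is `q : X → Y` with `F(x, q(x)) = 0` on `X`. -/
theorem interval_newton_with_parameter
    {m k : ℕ} (hmk : k < m)
    (F : ((Fin (m - k) → ℝ) × (Fin k → ℝ)) → (Fin k → ℝ))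
    (hF : ContDiff ℝ 1 F)
    (a b : Fin (m - k) → ℝ) (c d : Fin k → ℝ)
    (X : Set (Fin (m - k) → ℝ)) (hX : X = univ.pi fun i => Icc (a i) (b i))
    (Y : Set (Fin k → ℝ)) (hY : Y = univ.pi fun i => Icc (c i) (d i))
    (y0 : Fin k → ℝ) (hy0 : y0 ∈ interior Y)
    (hull : Set (Matrix (Fin k) (Fin k) ℝ))
    (hhull : hull = {M | ∀ i j, M i j ∈ Icc
      (sInf ((fun q => fderiv ℝ F q ((0 : Fin (m - k) → ℝ), Pi.single j 1) i) '' (X ×ˢ Y)))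
      (sSup ((fun q => fderiv ℝ F q ((0 : Fin (m - k) → ℝ), Pi.single j 1) i) '' (X ×ˢ Y)))})
    (hinv : ∀ M ∈ hull, IsUnit M)
    (hNewton : ∀ x ∈ X, ∀ M ∈ hull, y0 - M⁻¹ *ᵥ F (x, y0) ∈ interior Y) :
    ∃ q : (Fin (m - k) → ℝ) → (Fin k → ℝ), ∀ x ∈ X, q x ∈ Y ∧ F (x, q x) = 0 := by
  have hcontJ : ∀ i j, Continuous
      (fun q => fderiv ℝ F q ((0 : Fin (m - k) → ℝ), Pi.single j 1) i) := by
    intro i j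
    have h := hF.continuous_fderiv (by norm_num)
    exact (continuous_apply i).comp (h.clm_apply continuous_const)
  have hXc : IsCompact X := by
    rw [hX]; exact isCompact_univ_pi fun i => isCompact_Icc
  have hYc : IsCompact Y := by
    rw [hY]; exact isCompact_univ_pi fun i => isCompact_Icc
  have hYconv : Convex ℝ Y := by
    rw [hY]; exact convex_pi fun i _ => convex_Icc _ _
  have hmem : ∀ i j, ∀ p ∈ X ×ˢ Y, fderiv ℝ F p ((0 : Fin (m - k) → ℝ), Pi.single j 1) i ∈ Icc
      (sInf ((fun q => fderiv ℝ F q ((0 : Fin (m - k) → ℝ), Pi.single j 1) i) '' (X ×ˢ Y)))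
      (sSup ((fun q => fderiv ℝ F q ((0 : Fin (m - k) → ℝ), Pi.single j 1) i) '' (X ×ˢ Y))) := by
    intro i j p hp
    have hc := (hXc.prod hYc).image (hcontJ i j)
    exact ⟨csInf_le hc.bddBelow (mem_image_of_mem _ hp), le_csSup hc.bddAbove (mem_image_of_mem _ hp)⟩
  have hdiff : Differentiable ℝ F := hF.differentiable (by norm_num)
  -- row-wise mean value theorem
  have hmv : ∀ x ∈ X, ∀ y ∈ Y, ∃ M ∈ hull, F (x, y) - F (x, y0) = M *ᵥ (y - y0) := by
    intro x hx y hy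
    have hy0' := interior_subset hy0
    have hrow : ∀ i, ∃ z ∈ Y, F (x, y) i - F (x, y0) i = fderiv ℝ F (x, z) (0, y - y0) i := by
      intro i
      have hd : ∀ t : ℝ, HasDerivAt (fun t : ℝ => F (x, y0 + t • (y - y0)) i)
          (fderiv ℝ F (x, y0 + t • (y - y0)) (0, y - y0) i) t := by
        intro t
        have h1 : HasDerivAt (fun t : ℝ => y0 + t • (y - y0)) (y - y0) t := by
          simpa using ((hasDerivAt_id t).smul_const (y - y0)).const_add y0
        have h2 : HasDerivAt (fun t : ℝ => (x, y0 + t • (y - y0))) (0, y - y0) t :=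
          (hasDerivAt_const t x).prodMk h1
        have h3 := (hdiff (x, y0 + t • (y - y0))).hasFDerivAt.comp_hasDerivAt t h2
        exact (hasDerivAt_pi.1 h3) i
      obtain ⟨t, ht, hte⟩ := exists_hasDerivAt_eq_slope _ _ (zero_lt_one' ℝ)
        (fun t _ => (hd t).continuousAt.continuousWithinAt) (fun t _ => hd t)
      refine ⟨y0 + t • (y - y0), hYconv.add_smul_sub_mem hy0' hy ⟨ht.1.le, ht.2.le⟩, ?_⟩
      rw [hte]; simp
    choose z hz hze using hrow
    refine ⟨Matrix.of fun i j => fderiv ℝ F (x, z i) ((0 : Fin (m - k) → ℝ), Pi.single j 1) i, ?_, ?_⟩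
    · rw [hhull]
      intro i j
      exact hmem i j (x, z i) ⟨hx, hz i⟩
    · ext i
      rw [Pi.sub_apply, hze i, fderiv_inr_eq_mulVec]
      rfl
  have hsol : ∀ x ∈ X, ∃ y ∈ Y, F (x, y) = 0 := by
    intro x hx
    have hfc : Continuous fun y => F (x, y) := hF.continuous.comp (by fun_prop)
    let T : Set ℝ := {t | ∃ y ∈ Y, F (x, y) = (1 - t) • F (x, y0)}
    have hTclosed : IsClosed (T ∩ Icc 0 1) := by
      have hK : IsCompact {p : ℝ × (Fin k → ℝ) | p ∈ Icc (0:ℝ) 1 ×ˢ Y ∧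
          F (x, p.2) = (1 - p.1) • F (x, y0)} := by
        refine (isCompact_Icc.prod hYc).inter_right (isClosed_eq ?_ ?_)
        · exact hfc.comp continuous_snd
        · fun_prop
      have h := (hK.image continuous_fst).isClosed
      convert h using 1
      ext t
      constructor
      · rintro ⟨⟨y, hy, hye⟩, ht⟩
        exact ⟨(t, y), ⟨⟨ht, hy⟩, hye⟩, rfl⟩
      · rintro ⟨⟨t', y⟩, ⟨⟨ht, hy⟩, hye⟩, rfl⟩
        exact ⟨⟨y, hy, hye⟩, ht⟩
    have h0 : (0 : ℝ) ∈ T := ⟨y0, interior_subset hy0, by simp⟩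
    have hsub : Icc (0 : ℝ) 1 ⊆ T := by
      refine hTclosed.Icc_subset_of_forall_mem_nhdsWithin h0 ?_
      rintro t ⟨⟨y, hy, hye⟩, ht0, ht1⟩
      -- the solution is interior
      have hyint : y ∈ interior Y := by
        obtain ⟨M, hM, hMe⟩ := hmv x hx y hy
        have hdet := (Matrix.isUnit_iff_isUnit_det M).1 (hinv M hM)
        have h1 : y - y0 = M⁻¹ *ᵥ (-(t • F (x, y0))) := by
          have : M *ᵥ (y - y0) = -(t • F (x, y0)) := by
            rw [← hMe, hye]; module
          rw [← this, Matrix.mulVec_mulVec, Matrix.nonsing_inv_mul M hdet, Matrix.one_mulVec]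
        have h2 : y = y0 + t • ((y0 - M⁻¹ *ᵥ F (x, y0)) - y0) := by
          rw [Matrix.mulVec_neg, Matrix.mulVec_smul] at h1
          rw [← sub_add_cancel y y0, h1]; module
        rw [h2]
        exact hYconv.interior.add_smul_sub_mem hy0 (hNewton x hx M hM) ⟨ht0, ht1.le⟩
      -- local surjectivity
      have hstrict : HasStrictFDerivAt (fun y => F (x, y))
          ((fderiv ℝ F (x, y)).comp (ContinuousLinearMap.inr ℝ (Fin (m - k) → ℝ) (Fin k → ℝ))) y :=
        (hF.contDiffAt.hasStrictFDerivAt (x := (x, y)) (by norm_num)).comp y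
          ((hasStrictFDerivAt_const x y).prodMk (hasStrictFDerivAt_id y))
      let J : Matrix (Fin k) (Fin k) ℝ :=
        Matrix.of fun i j => fderiv ℝ F (x, y) ((0 : Fin (m - k) → ℝ), Pi.single j 1) i
      have hJ : J ∈ hull := by
        rw [hhull]
        intro i j
        exact hmem i j (x, y) ⟨hx, hy⟩
      have hJdet := (Matrix.isUnit_iff_isUnit_det J).1 (hinv J hJ)
      have hsurj : ((fderiv ℝ F (x, y)).comp
          (ContinuousLinearMap.inr ℝ (Fin (m - k) → ℝ) (Fin k → ℝ))).range = ⊤ := by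
        rw [LinearMap.range_eq_top]
        intro w
        refine ⟨J⁻¹ *ᵥ w, ?_⟩
        have : ∀ v, fderiv ℝ F (x, y) ((0 : Fin (m - k) → ℝ), v) = J *ᵥ v := by
          intro v; ext i; rw [fderiv_inr_eq_mulVec]; rfl
        change fderiv ℝ F (x, y) ((0 : Fin (m - k) → ℝ), J⁻¹ *ᵥ w) = w
        rw [this, Matrix.mulVec_mulVec, Matrix.mul_nonsing_inv J hJdet, Matrix.one_mulVec]
      have hmap := hstrict.map_nhds_eq_of_surj hsurj
      have himg : (fun y => F (x, y)) '' Y ∈ nhds (F (x, y)) := by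
        rw [← hmap]
        exact Filter.image_mem_map (mem_interior_iff_mem_nhds.1 hyint)
      have hc : Continuous fun s : ℝ => (1 - s) • F (x, y0) := by fun_prop
      refine mem_nhdsWithin_of_mem_nhds ?_
      rw [hye] at himg
      filter_upwards [hc.continuousAt.preimage_mem_nhds himg] with s hs
      obtain ⟨y', hy', he⟩ := hs
      exact ⟨y', hy', he⟩
    obtain ⟨y, hy, hye⟩ := hsub (right_mem_Icc.2 zero_le_one)
    exact ⟨y, hy, by simpa using hye⟩
  choose! q hq using hsol
  exact ⟨q, hq⟩
end

section
/- (Directed interval Newton theorem.) Let m > k, let F : ℝ^m → ℝ^k be C¹, let p* ∈ ℝ^m, let A_1 be an m×(m−k) real matrix and A_2 an m×k real matrix. Let X ⊂ ℝ^{m−k} and Y ⊂ ℝ^k be compact boxes (products of closed intervals), and let x_0 ∈ X, y_0 ∈ Y. Define S_{X,y_0} = {p* + A_1 x + A_2 y_0 : x ∈ X} and S_{X,Y} = {p* + A_1 x + A_2 y : x ∈ X, y ∈ Y}. Assume: (i) for every matrix M ∈ [DF(S_{X,Y})], the k×k matrix M A_2 is invertible; (ii) for every x ∈ X, every M ∈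 [DF(S_{X,Y})] and every M' ∈ [DF(S_{X,y_0})], the point y_0 − (M A_2)^{-1} ( F(p* + A_1 x_0 + A_2 y_0) + M' A_1 (x − x_0) ) lies in Y. Then there exists a function q : X → Y such that F(p* + A_1 x + A_2 q(x)) = 0 for all x ∈ X; moreover q is as smooth as F (in particular C¹). -/
open Set Matrix

theorem euler_zero {E : Type*} [NormedAddCommGroup E] [NormedSpace ℝ E]
    (Y : Set E) (hYc : IsCompact Y) (hYv : Convex ℝ Y) (G : E → E) (hG : ContDiff ℝ 1 G)
    (y0 : E) (hy0 : y0 ∈ Y)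
    (h : ∀ y ∈ Y, ∃ v, fderiv ℝ G y v = - G y0 ∧ y0 + v ∈ Y) : ∃ y ∈ Y, G y = 0 := by
  obtain ⟨C0, hC0⟩ := hYc.isBounded.exists_norm_le
  obtain ⟨C, hCpos, hC⟩ : ∃ C > 0, ∀ v, y0 + v ∈ Y → ‖v‖ ≤ C := by
    refine ⟨2 * |C0| + 1, by positivity, fun v hv => ?_⟩
    have h1 := hC0 _ hv
    have h2 := hC0 _ hy0
    have h3 : ‖v‖ ≤ ‖y0 + v‖ + ‖y0‖ := by
      have := norm_sub_le (y0 + v) y0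
      simpa using this
    have := le_abs_self C0
    linarith
  have hdiff : Differentiable ℝ G := hG.differentiable (by norm_num)
  have hcont : Continuous (fderiv ℝ G) := hG.continuous_fderiv (by norm_num)
  have huc := hYc.uniformContinuousOn_of_continuous hcont.continuousOn
  rw [Metric.uniformContinuousOn_iff] at huc
  have key : ∀ ε > 0, ∃ y ∈ Y, ‖G y‖ ≤ ε * C := by
    intro ε hε
    obtain ⟨δ, hδ, hu⟩ := huc ε hε
    obtain ⟨N, hN⟩ := exists_nat_gt (C / δ)
    have hNpos : (0 : ℝ) < N := lt_of_le_of_lt (by positivity) hN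
    have hCN : C / N < δ := by
      rw [div_lt_iff₀ hδ] at hN
      rw [div_lt_iff₀ hNpos]; linarith
    have hin : ∀ (s : ℝ) (u : E), 0 ≤ s → s ≤ 1 → y0 + u ∈ Y → y0 + s • u ∈ Y := by
      intro s u hs hs1 hu'
      have := hYv hy0 hu' (sub_nonneg.2 hs1) hs (by ring)
      convert this using 1
      module
    have ind : ∀ n : ℕ, n ≤ N → ∃ u, y0 + u ∈ Y ∧
        ‖G (y0 + ((n : ℝ) / N) • u) - (1 - (n : ℝ) / N) • G y0‖ ≤ n * (ε * (C / N)) := by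
      intro n
      induction n with
      | zero => intro _; exact ⟨0, by simpa using hy0, by simp⟩
      | succ n ih =>
        intro hn
        obtain ⟨u, hu1, hu2⟩ := ih (by omega)
        have hn' : ((n : ℝ) + 1) ≤ N := by exact_mod_cast hn
        have hyY : y0 + ((n : ℝ) / N) • u ∈ Y :=
          hin _ _ (by positivity) (by rw [div_le_one hNpos]; linarith) hu1
        set y := y0 + ((n : ℝ) / N) • u with hy
        obtain ⟨v, hv1, hv2⟩ := h y hyY
        have hn1 : (0 : ℝ) < n + 1 := by positivity
        refine ⟨((n : ℝ) / (n + 1)) • u + (1 / ((n : ℝ) + 1)) • v, ?_, ?_⟩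
        · have := hYv hu1 hv2 (a := (n : ℝ) / (n + 1)) (b := 1 / ((n : ℝ) + 1))
            (by positivity) (by positivity) (by field_simp)
          convert this using 1
          have e : y0 = ((n : ℝ) / (n + 1)) • y0 + (1 / ((n : ℝ) + 1)) • y0 := by
            rw [← add_smul, show (n : ℝ) / (n + 1) + 1 / ((n : ℝ) + 1) = 1 by field_simp, one_smul]
          rw [smul_add, smul_add]
          nth_rewrite 1 [e]
          abel
        · have e : y0 + (((n + 1 : ℕ) : ℝ) / N) •
              (((n : ℝ) / (n + 1)) • u + (1 / ((n : ℝ) + 1)) • v) = y + (1 / (N : ℝ)) • v := by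
            have e3 : (((n + 1 : ℕ) : ℝ) / N) * ((n : ℝ) / (n + 1)) = n / N := by
              push_cast; field_simp
            have e4 : (((n + 1 : ℕ) : ℝ) / N) * (1 / ((n : ℝ) + 1)) = 1 / N := by
              push_cast; field_simp
            rw [hy, smul_add, smul_smul, smul_smul, ← add_assoc, e3, e4]
          have hy'Y : y + (1 / (N : ℝ)) • v ∈ Y := by
            rw [← e]
            apply hin _ _ (by positivity)
            · rw [div_le_one hNpos]; exact_mod_cast hn
            · have := hYv hu1 hv2 (a := (n : ℝ) / (n + 1)) (b := 1 / ((n : ℝ) + 1))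
                (by positivity) (by positivity) (by field_simp)
              convert this using 1
              have e : y0 = ((n : ℝ) / (n + 1)) • y0 + (1 / ((n : ℝ) + 1)) • y0 := by
                rw [← add_smul, show (n : ℝ) / (n + 1) + 1 / ((n : ℝ) + 1) = 1 by field_simp,
                  one_smul]
              rw [smul_add, smul_add]
              nth_rewrite 1 [e]
              abel
          rw [e]
          have hvn : ‖(1 / (N : ℝ)) • v‖ ≤ C / N := by
            rw [norm_smul, Real.norm_of_nonneg (by positivity), one_div, inv_mul_eq_div]
            exact div_le_div_of_nonneg_right (hC v hv2) hNpos.le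
          have hmv := (hYv.inter (convex_ball y δ)).norm_image_sub_le_of_norm_fderiv_le'
            (f := G) (φ := fderiv ℝ G y) (C := ε) (x := y) (y := y + (1 / (N : ℝ)) • v)
            (fun x _ => hdiff x)
            (fun x hx => by
              have := hu x hx.1 y hyY hx.2
              rw [dist_eq_norm] at this
              exact this.le)
            ⟨hyY, Metric.mem_ball_self hδ⟩
            ⟨hy'Y, by rw [Metric.mem_ball, dist_eq_norm, add_sub_cancel_left]; linarith⟩
          rw [add_sub_cancel_left, map_smul, hv1] at hmv
          have e2 : G (y + (1 / (N : ℝ)) • v) - (1 - ((n + 1 : ℕ) : ℝ) / N) • G y0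
              = (G (y + (1 / (N : ℝ)) • v) - G y - (1 / (N : ℝ)) • (-G y0))
                + (G y - (1 - (n : ℝ) / N) • G y0) := by
            have : (((n + 1 : ℕ) : ℝ) / N) = n / N + 1 / N := by push_cast; ring
            rw [this]
            module
          rw [e2]
          refine (norm_add_le _ _).trans ?_
          have h3 : ε * ‖(1 / (N : ℝ)) • v‖ ≤ ε * (C / N) := by gcongr
          push_cast
          linarith
    obtain ⟨u, hu1, hu2⟩ := ind N le_rfl
    rw [div_self hNpos.ne'] at hu2
    refine ⟨y0 + (1 : ℝ) • u, by simpa using hu1, ?_⟩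
    rw [sub_self, zero_smul, sub_zero] at hu2
    refine hu2.trans (le_of_eq ?_)
    field_simp
  obtain ⟨y, hy, hmin⟩ := hYc.exists_isMinOn ⟨y0, hy0⟩ (hG.continuous.norm.continuousOn)
  refine ⟨y, hy, ?_⟩
  by_contra hne
  have hpos : 0 < ‖G y‖ := norm_pos_iff.2 hne
  obtain ⟨y1, hy1, hle⟩ := key (‖G y‖ / (2 * C)) (by positivity)
  have := hmin hy1
  simp only [mem_ofPred_eq] at this
  have h4 : ‖G y‖ / (2 * C) * C = ‖G y‖ / 2 := by field_simp
  linarith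

def hullOf {m k : ℕ} (F : (Fin m → ℝ) → (Fin k → ℝ)) (S : Set (Fin m → ℝ)) :
    Set (Matrix (Fin k) (Fin m) ℝ) :=
  {M | ∀ i j, M i j ∈ Icc
      (sInf ((fun z => fderiv ℝ F z (Pi.single j 1) i) '' S))
      (sSup ((fun z => fderiv ℝ F z (Pi.single j 1) i) '' S))}

theorem hull_rows {m k : ℕ} (F : (Fin m → ℝ) → (Fin k → ℝ)) (hF : ContDiff ℝ 1 F)
    (S : Set (Fin m → ℝ)) (hS : IsCompact S) (ξ : Fin k → (Fin m → ℝ)) (hξ : ∀ i, ξ i ∈ S) :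
    (Matrix.of fun i j => fderiv ℝ F (ξ i) (Pi.single j 1) i) ∈ hullOf F S := by
  intro i j
  have hcont : Continuous (fderiv ℝ F) := hF.continuous_fderiv (by norm_num)
  have hc : Continuous (fun z => fderiv ℝ F z (Pi.single j 1) i) :=
    (continuous_apply i).comp (hcont.clm_apply continuous_const)
  have hK := hS.image hc
  exact ⟨csInf_le hK.bddBelow ⟨_, hξ i, rfl⟩, le_csSup hK.bddAbove ⟨_, hξ i, rfl⟩⟩

theorem rows_mulVec {m k : ℕ} (L : Fin k → ((Fin m → ℝ) →L[ℝ] (Fin k → ℝ))) (w : Fin m → ℝ)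
    (i : Fin k) :
    ((Matrix.of fun i j => L i (Pi.single j 1) i : Matrix (Fin k) (Fin m) ℝ) *ᵥ w) i
      = L i w i := by
  have := LinearMap.pi_apply_eq_sum_univ (L i : (Fin m → ℝ) →ₗ[ℝ] (Fin k → ℝ)) w
  simp only [ContinuousLinearMap.coe_coe] at this
  rw [this, Matrix.mulVec, dotProduct, Finset.sum_apply]
  refine Finset.sum_congr rfl fun j _ => ?_
  have e : (fun l => if j = l then (1 : ℝ) else 0) = Pi.single j 1 := by
    ext l; simp [Pi.single_apply, eq_comm]
  simp [e, mul_comm]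

theorem hull_mvt {m k : ℕ} (F : (Fin m → ℝ) → (Fin k → ℝ)) (hF : ContDiff ℝ 1 F)
    (S : Set (Fin m → ℝ)) (hS : IsCompact S) (hSv : Convex ℝ S) (z z' : Fin m → ℝ)
    (hz : z ∈ S) (hz' : z' ∈ S) : ∃ M ∈ hullOf F S, F z' - F z = M *ᵥ (z' - z) := by
  have hdiff : Differentiable ℝ F := hF.differentiable (by norm_num)
  have : ∀ i : Fin k, ∃ ξ ∈ segment ℝ z z', F z' i - F z i = fderiv ℝ F ξ (z' - z) i := by
    intro i
    have := domain_mvt (f := fun x => F x i) (s := univ) (x := z) (y := z')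
      (f' := fun x => (ContinuousLinearMap.proj i).comp (fderiv ℝ F x))
      (fun x _ => ((hasFDerivAt_pi'.1 (hdiff x).hasFDerivAt) i).hasFDerivWithinAt)
      convex_univ (mem_univ _) (mem_univ _)
    simpa using this
  choose ξ hξ hξe using this
  refine ⟨_, hull_rows F hF S hS ξ (fun i => hSv.segment_subset hz hz' (hξ i)), ?_⟩
  ext i
  rw [rows_mulVec (fun i => fderiv ℝ F (ξ i))]
  exact hξe i

theorem smooth_of_unique {E₁ E₂ : Type*} [NormedAddCommGroup E₁] [NormedSpace ℝ E₁]
    [FiniteDimensional ℝ E₁] [NormedAddCommGroup E₂] [NormedSpace ℝ E₂] [FiniteDimensional ℝ E₂]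
    (φ : E₁ × E₂ → E₂) (hφ : ContDiff ℝ 1 φ) (X : Set E₁) (Y : Set E₂) (hY : IsCompact Y)
    (q : E₁ → E₂) (hq : ∀ x ∈ X, q x ∈ Y ∧ φ (x, q x) = 0)
    (huniq : ∀ x ∈ X, ∀ y ∈ Y, φ (x, y) = 0 → y = q x)
    (hinj : ∀ x ∈ X, ∀ v, fderiv ℝ φ (x, q x) (0, v) = 0 → v = 0) : ContDiffOn ℝ 1 q X := by
  have : CompleteSpace (E₁ × E₂) := FiniteDimensional.complete ℝ _
  have hcont : ∀ x ∈ X, ContinuousWithinAt q X x := by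
    intro x hx
    refine hY.tendsto_nhds_of_unique_mapClusterPt
      (eventually_mem_nhdsWithin.mono fun x' hx' => (hq x' hx').1) ?_
    intro y hy hcl
    refine huniq x hx y hy ?_
    by_contra hne
    have hev : ∀ᶠ p in nhds (x, y), φ p ≠ 0 := hφ.continuous.continuousAt.eventually_ne hne
    rw [nhds_prod_eq, Filter.eventually_prod_iff] at hev
    obtain ⟨pa, ha, pb, hb, hab⟩ := hev
    have hf := hcl.frequently hb
    have hx' : ∀ᶠ x' in nhdsWithin x X, pa x' ∧ x' ∈ X :=
      (ha.filter_mono nhdsWithin_le_nhds).and eventually_mem_nhdsWithin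
    obtain ⟨x', hb', ha', hX'⟩ := (hf.and_eventually hx').exists
    exact hab ha' hb' (hq x' hX').2
  intro x hx
  let Φ : E₁ × E₂ → E₁ × E₂ := fun p => (p.1, φ p)
  have hΦ : ContDiff ℝ 1 Φ := contDiff_fst.prodMk hφ
  let L : E₁ × E₂ →L[ℝ] E₁ × E₂ :=
    (ContinuousLinearMap.fst ℝ E₁ E₂).prod (fderiv ℝ φ (x, q x))
  have hL : HasFDerivAt Φ L (x, q x) :=
    hasFDerivAt_fst.prodMk ((hφ.differentiable (by norm_num)) _).hasFDerivAt
  have hLinj : Function.Injective (L : E₁ × E₂ →ₗ[ℝ] E₁ × E₂) := by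
    rw [← LinearMap.ker_eq_bot, LinearMap.ker_eq_bot']
    rintro ⟨u, v⟩ h
    have h1 : u = 0 := congrArg Prod.fst h
    have h2 : fderiv ℝ φ (x, q x) (u, v) = 0 := congrArg Prod.snd h
    subst h1
    rw [hinj x hx v h2]
    rfl
  let e : (E₁ × E₂) ≃L[ℝ] (E₁ × E₂) :=
    (LinearEquiv.ofInjectiveEndo (L : E₁ × E₂ →ₗ[ℝ] E₁ × E₂) hLinj).toContinuousLinearEquiv
  have he : (e : E₁ × E₂ →L[ℝ] E₁ × E₂) = L := by
    ext p <;> rfl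
  rw [← he] at hL
  have hΦa : ContDiffAt ℝ 1 Φ (x, q x) := hΦ.contDiffAt
  have hinvC := hΦa.to_localInverse hL (by norm_num)
  have hleft := (hΦa.hasStrictFDerivAt' hL (by norm_num)).eventually_left_inverse
  have hval : Φ (x, q x) = (x, 0) := Prod.ext rfl (hq x hx).2
  rw [hval] at hinvC
  have hcomp : ContDiffAt ℝ 1 (fun x' : E₁ => (hΦa.localInverse hL (by norm_num) (x', 0)).2) x :=
    contDiff_snd.contDiffAt.comp x
      (hinvC.comp x (contDiff_id.prodMk contDiff_const).contDiffAt)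
  refine hcomp.contDiffWithinAt.congr_of_eventuallyEq_of_mem ?_ hx
  have htend : Filter.Tendsto (fun x' => (x', q x')) (nhdsWithin x X) (nhds (x, q x)) :=
    (continuousWithinAt_id (s := X)).prodMk (hcont x hx)
  filter_upwards [htend.eventually hleft, eventually_mem_nhdsWithin] with x' h1 h2
  have hval' : Φ (x', q x') = (x', 0) := Prod.ext rfl (hq x' h2).2
  rw [hval'] at h1
  exact (congrArg Prod.snd h1).symm

/-- Directed interval Newton theorem (Theorem 4.6 of the paper).
In the adapted coordinates `p* + A₁x + A₂y`, if every matrix `M` in the interval hull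
`[DF(S_{X,Y})]` has `M A₂` invertible and the directed Newton image lies in `Y`, then
there is a map `q : X → Y`, as smooth as `F` (in particular C¹ on `X`), with
`F(p* + A₁ x + A₂ q(x)) = 0` for all `x ∈ X`. -/
theorem directed_interval_newton
    {m k : ℕ} (hmk : k < m)
    (F : (Fin m → ℝ) → (Fin k → ℝ)) (hF : ContDiff ℝ 1 F)
    (pstar : Fin m → ℝ)
    (A1 : Matrix (Fin m) (Fin (m - k)) ℝ) (A2 : Matrix (Fin m) (Fin k) ℝ)
    (a b : Fin (m - k) → ℝ) (c d : Fin k → ℝ)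
    (X : Set (Fin (m - k) → ℝ)) (hX : X = univ.pi fun i => Icc (a i) (b i))
    (Y : Set (Fin k → ℝ)) (hY : Y = univ.pi fun i => Icc (c i) (d i))
    (x0 : Fin (m - k) → ℝ) (hx0 : x0 ∈ X) (y0 : Fin k → ℝ) (hy0 : y0 ∈ Y)
    (SXy0 SXY : Set (Fin m → ℝ))
    (hSXy0 : SXy0 = {z | ∃ x ∈ X, z = pstar + A1 *ᵥ x + A2 *ᵥ y0})
    (hSXY : SXY = {z | ∃ x ∈ X, ∃ y ∈ Y, z = pstar + A1 *ᵥ x + A2 *ᵥ y})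
    (hullXY hullXy0 : Set (Matrix (Fin k) (Fin m) ℝ))
    (hhullXY : hullXY = {M | ∀ i j, M i j ∈ Icc
      (sInf ((fun z => fderiv ℝ F z (Pi.single j 1) i) '' SXY))
      (sSup ((fun z => fderiv ℝ F z (Pi.single j 1) i) '' SXY))})
    (hhullXy0 : hullXy0 = {M | ∀ i j, M i j ∈ Icc
      (sInf ((fun z => fderiv ℝ F z (Pi.single j 1) i) '' SXy0))
      (sSup ((fun z => fderiv ℝ F z (Pi.single j 1) i) '' SXy0))})
    (hinv : ∀ M ∈ hullXY, IsUnit (M * A2))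
    (hNewton : ∀ x ∈ X, ∀ M ∈ hullXY, ∀ M' ∈ hullXy0,
      y0 - (M * A2)⁻¹ *ᵥ (F (pstar + A1 *ᵥ x0 + A2 *ᵥ y0) + (M' * A1) *ᵥ (x - x0)) ∈ Y) :
    ∃ q : (Fin (m - k) → ℝ) → (Fin k → ℝ),
      (∀ x ∈ X, q x ∈ Y ∧ F (pstar + A1 *ᵥ x + A2 *ᵥ q x) = 0) ∧
      ContDiffOn ℝ 1 q X := by
  subst hX hY
  set X := univ.pi fun i => Icc (a i) (b i) with hX
  set Y := univ.pi fun i => Icc (c i) (d i) with hY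
  have hXc : IsCompact X := isCompact_univ_pi fun i => isCompact_Icc
  have hYc : IsCompact Y := isCompact_univ_pi fun i => isCompact_Icc
  have hXv : Convex ℝ X := convex_pi fun i _ => convex_Icc _ _
  have hYv : Convex ℝ Y := convex_pi fun i _ => convex_Icc _ _
  change hullXY = hullOf F SXY at hhullXY
  change hullXy0 = hullOf F SXy0 at hhullXy0
  let L1 : (Fin (m - k) → ℝ) →L[ℝ] (Fin m → ℝ) := LinearMap.toContinuousLinearMap A1.mulVecLin
  let L2 : (Fin k → ℝ) →L[ℝ] (Fin m → ℝ) := LinearMap.toContinuousLinearMap A2.mulVecLin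
  let T : ((Fin (m - k) → ℝ) × (Fin k → ℝ)) →L[ℝ] (Fin m → ℝ) := L1.coprod L2
  let P : ((Fin (m - k) → ℝ) × (Fin k → ℝ)) → (Fin m → ℝ) := fun p =>
    pstar + A1 *ᵥ p.1 + A2 *ᵥ p.2
  have hPT : P = fun p => pstar + T p := by
    funext p
    simp [P, T, L1, L2, add_assoc]
  have hPc : ContDiff ℝ 1 P := by
    rw [hPT]; exact contDiff_const.add T.contDiff
  have hPd : ∀ p, HasFDerivAt P T p := by
    intro p; rw [hPT]; exact T.hasFDerivAt.const_add _
  have hTapp : ∀ u v, T (u, v) = A1 *ᵥ u + A2 *ᵥ v := by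
    intro u v; simp [T, L1, L2]
  have himg : ∀ W : Set ((Fin (m - k) → ℝ) × (Fin k → ℝ)), IsCompact W → Convex ℝ W →
      IsCompact (P '' W) ∧ Convex ℝ (P '' W) := by
    intro W hW hWv
    refine ⟨hW.image hPc.continuous, ?_⟩
    have : P '' W = (fun z => pstar + z) '' (T '' W) := by
      rw [image_image, hPT]
    rw [this]
    exact (hWv.is_linear_image T.isBoundedLinearMap.toIsLinearMap).translate pstar
  have hS1 : SXY = P '' (X ×ˢ Y) := by
    rw [hSXY]; ext z; constructor
    · rintro ⟨x, hx, y, hy, rfl⟩; exact ⟨(x, y), ⟨hx, hy⟩, rfl⟩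
    · rintro ⟨⟨x, y⟩, ⟨hx, hy⟩, rfl⟩; exact ⟨x, hx, y, hy, rfl⟩
  have hS0 : SXy0 = P '' (X ×ˢ {y0}) := by
    rw [hSXy0]; ext z; constructor
    · rintro ⟨x, hx, rfl⟩; exact ⟨(x, y0), ⟨hx, rfl⟩, rfl⟩
    · rintro ⟨⟨x, y⟩, ⟨hx, rfl⟩, rfl⟩; exact ⟨x, hx, rfl⟩
  obtain ⟨hc1, hv1⟩ := himg _ (hXc.prod hYc) (hXv.prod hYv)
  obtain ⟨hc0, hv0⟩ := himg _ (hXc.prod isCompact_singleton) (hXv.prod (convex_singleton y0))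
  rw [← hS1] at hc1 hv1
  rw [← hS0] at hc0 hv0
  have hFd : Differentiable ℝ F := hF.differentiable (by norm_num)
  -- pointwise derivative matrix
  have hpt : ∀ z ∈ SXY, ∃ M ∈ hullXY, ∀ w, fderiv ℝ F z w = M *ᵥ w := by
    intro z hz
    rw [hhullXY]
    refine ⟨_, hull_rows F hF SXY hc1 (fun _ => z) (fun _ => hz), fun w => ?_⟩
    ext i
    rw [rows_mulVec (fun _ => fderiv ℝ F z)]
  have hmem : ∀ x ∈ X, ∀ y ∈ Y, P (x, y) ∈ SXY := by
    intro x hx y hy; rw [hS1]; exact ⟨_, ⟨hx, hy⟩, rfl⟩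
  have hinj : ∀ M ∈ hullXY, ∀ v, M *ᵥ (A2 *ᵥ v) = 0 → v = 0 := by
    intro M hM v hv
    rw [mulVec_mulVec] at hv
    have hu := (Matrix.isUnit_iff_isUnit_det _).1 (hinv M hM)
    have := congrArg (fun w => (M * A2)⁻¹ *ᵥ w) hv
    simpa [mulVec_mulVec, Matrix.nonsing_inv_mul _ hu] using this
  let φ : ((Fin (m - k) → ℝ) × (Fin k → ℝ)) → (Fin k → ℝ) := fun p => F (P p)
  have hφ : ContDiff ℝ 1 φ := hF.comp hPc
  have hφd : ∀ p, fderiv ℝ φ p = (fderiv ℝ F (P p)).comp T := fun p =>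
    ((hFd (P p)).hasFDerivAt.comp p (hPd p)).fderiv
  have huniq : ∀ x ∈ X, ∀ y ∈ Y, ∀ y' ∈ Y, φ (x, y) = 0 → φ (x, y') = 0 → y = y' := by
    intro x hx y hy y' hy' h h'
    obtain ⟨M, hM, hMe⟩ := hull_mvt F hF SXY hc1 hv1 _ _ (hmem x hx y' hy') (hmem x hx y hy)
    rw [← hhullXY] at hM
    have e : P (x, y) - P (x, y') = A2 *ᵥ (y - y') := by
      simp only [P]; rw [mulVec_sub]; abel
    rw [e] at hMe
    change φ (x, y) - φ (x, y') = _ at hMe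
    rw [h, h', sub_zero] at hMe
    exact sub_eq_zero.1 (hinj M hM _ hMe.symm)
  have hex : ∀ x ∈ X, ∃ y ∈ Y, φ (x, y) = 0 := by
    intro x hx
    refine euler_zero Y hYc hYv (fun y => φ (x, y)) (hφ.comp (contDiff_const.prodMk contDiff_id))
      y0 hy0 ?_
    intro y hy
    obtain ⟨M, hM, hMe⟩ := hpt _ (hmem x hx y hy)
    obtain ⟨M', hM', hMe'⟩ := hull_mvt F hF SXy0 hc0 hv0 (P (x0, y0)) (P (x, y0))
      (by rw [hS0]; exact ⟨(x0, y0), ⟨hx0, rfl⟩, rfl⟩) (by rw [hS0]; exact ⟨(x, y0), ⟨hx, rfl⟩, rfl⟩)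
    rw [← hhullXy0] at hM'
    have e : P (x, y0) - P (x0, y0) = A1 *ᵥ (x - x0) := by
      simp only [P]; rw [mulVec_sub]; abel
    rw [e, mulVec_mulVec] at hMe'
    have hN := hNewton x hx M hM M' hM'
    rw [← hMe'] at hN
    have e2 : F (pstar + A1 *ᵥ x0 + A2 *ᵥ y0) + (F (P (x, y0)) - F (P (x0, y0))) = φ (x, y0) := by
      simp only [φ, P]; abel
    rw [e2] at hN
    have hu := (Matrix.isUnit_iff_isUnit_det _).1 (hinv M hM)
    refine ⟨-((M * A2)⁻¹ *ᵥ φ (x, y0)), ?_, by rw [← sub_eq_add_neg]; exact hN⟩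
    have hd : HasFDerivAt (fun y => φ (x, y))
        ((fderiv ℝ φ (x, y)).comp (ContinuousLinearMap.inr ℝ _ _)) y :=
      ((hφ.differentiable (by norm_num)) (x, y)).hasFDerivAt.comp y (hasFDerivAt_prodMk_right x y)
    rw [hd.fderiv, hφd]
    simp only [ContinuousLinearMap.comp_apply, ContinuousLinearMap.inr_apply, hTapp, mulVec_zero,
      zero_add, hMe, mulVec_neg, mulVec_mulVec]
    rw [← Matrix.mul_assoc, Matrix.mul_nonsing_inv _ hu, one_mulVec]
  choose! q hq using hex
  refine ⟨q, hq, smooth_of_unique φ hφ X Y hYc q hq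
    (fun x hx y hy h => huniq x hx y hy _ (hq x hx).1 h (hq x hx).2) ?_⟩
  intro x hx v hv
  obtain ⟨M, hM, hMe⟩ := hpt _ (hmem x hx _ (hq x hx).1)
  rw [hφd, ContinuousLinearMap.comp_apply, hTapp, mulVec_zero, zero_add, hMe] at hv
  exact hinj M hM v hv
end

section
/- Under the assumptions of the directed interval Newton theorem (F : ℝ^m → ℝ^k C¹; A_1 an m×(m−k) matrix, A_2 an m×k matrix; X, Y compact boxes; every M ∈ [DF(S_{X,Y})] has M A_2 invertible; and the Newton inclusion holds so that there is a C¹ map q : X → Y with F(p* + A_1 x + A_2 q(x)) = 0 for all x ∈ X), the derivative of q satisfies, for every x in the interior of X: DF(p_x)(A_1 + A_2 Dq(x)) = 0 where p_x = p* + A_1 x + A_2 q(x), and consequently Dq(x) = −(DF(p_x) A_2)^{-1} DF(p_x) A_1. -/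
open Set Matrix

/-- The Jacobian matrix of a map `F : ℝ^m → ℝ^k` at a point. -/
noncomputable def jacobian {m k : ℕ} (F : (Fin m → ℝ) → (Fin k → ℝ)) (z : Fin m → ℝ) :
    Matrix (Fin k) (Fin m) ℝ :=
  Matrix.of fun i j => fderiv ℝ F z (Pi.single j 1) i

/-- Derivative of the implicit curve from the directed interval Newton theorem
(Corollary 4.10 of the paper).  Under the assumptions of the directed Newton theorem, the
implicitly defined `q` satisfies `DF(p_x)(A₁ + A₂ Dq(x)) = 0` and
`Dq(x) = -(DF(p_x) A₂)⁻¹ DF(p_x) A₁` on the interior of `X`. -/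
theorem directed_newton_derivative_bound
    {m k : ℕ} (hmk : k < m)
    (F : (Fin m → ℝ) → (Fin k → ℝ)) (hF : ContDiff ℝ 1 F)
    (pstar : Fin m → ℝ)
    (A1 : Matrix (Fin m) (Fin (m - k)) ℝ) (A2 : Matrix (Fin m) (Fin k) ℝ)
    (a b : Fin (m - k) → ℝ) (c d : Fin k → ℝ)
    (X : Set (Fin (m - k) → ℝ)) (hX : X = univ.pi fun i => Icc (a i) (b i))
    (Y : Set (Fin k → ℝ)) (hY : Y = univ.pi fun i => Icc (c i) (d i))
    (SXY : Set (Fin m → ℝ))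
    (hSXY : SXY = {z | ∃ x ∈ X, ∃ y ∈ Y, z = pstar + A1 *ᵥ x + A2 *ᵥ y})
    (hullXY : Set (Matrix (Fin k) (Fin m) ℝ))
    (hhullXY : hullXY = {M | ∀ i j, M i j ∈ Icc
      (sInf ((fun z => fderiv ℝ F z (Pi.single j 1) i) '' SXY))
      (sSup ((fun z => fderiv ℝ F z (Pi.single j 1) i) '' SXY))})
    (hinv : ∀ M ∈ hullXY, IsUnit (M * A2))
    (q : (Fin (m - k) → ℝ) → (Fin k → ℝ))
    (hq1 : ContDiffOn ℝ 1 q X)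
    (hqd : ∀ x ∈ interior X, DifferentiableAt ℝ q x)
    (hq : ∀ x ∈ X, q x ∈ Y ∧ F (pstar + A1 *ᵥ x + A2 *ᵥ q x) = 0) :
    ∀ x ∈ interior X,
      jacobian F (pstar + A1 *ᵥ x + A2 *ᵥ q x) * (A1 + A2 * jacobian q x) = 0 ∧
      jacobian q x =
        -((jacobian F (pstar + A1 *ᵥ x + A2 *ᵥ q x) * A2)⁻¹ *
          (jacobian F (pstar + A1 *ᵥ x + A2 *ᵥ q x) * A1)) := by
  intro x hx
  have jac_mulVec : ∀ {m k : ℕ} (G : (Fin m → ℝ) → (Fin k → ℝ)) (z v : Fin m → ℝ),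
      jacobian G z *ᵥ v = fderiv ℝ G z v := by
    intro m k G z v
    have : jacobian G z = LinearMap.toMatrix' (fderiv ℝ G z : (Fin m → ℝ) →ₗ[ℝ] (Fin k → ℝ)) := by
      ext i j
      simp [jacobian, LinearMap.toMatrix'_apply]
    rw [this, LinearMap.toMatrix'_mulVec]
    rfl
  have hxX : x ∈ X := interior_subset hx
  set p := pstar + A1 *ᵥ x + A2 *ᵥ q x with hp
  have hFd : HasFDerivAt F (fderiv ℝ F p) p :=
    ((hF.differentiable (by norm_num)) p).hasFDerivAt
  have hqx : HasFDerivAt q (fderiv ℝ q x) x := (hqd x hx).hasFDerivAt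
  let L1 := (Matrix.mulVecLin A1).toContinuousLinearMap
  let L2 := (Matrix.mulVecLin A2).toContinuousLinearMap
  have hg : HasFDerivAt (fun x => pstar + A1 *ᵥ x + A2 *ᵥ q x)
      (L1 + L2.comp (fderiv ℝ q x)) x :=
    (L1.hasFDerivAt.const_add pstar).add (L2.hasFDerivAt.comp x hqx)
  have hc : HasFDerivAt (fun x => F (pstar + A1 *ᵥ x + A2 *ᵥ q x))
      ((fderiv ℝ F p).comp (L1 + L2.comp (fderiv ℝ q x))) x :=
    HasFDerivAt.comp x hFd hg
  have h0 : HasFDerivAt (fun x => F (pstar + A1 *ᵥ x + A2 *ᵥ q x))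
      (0 : (Fin (m - k) → ℝ) →L[ℝ] (Fin k → ℝ)) x := by
    refine (hasFDerivAt_const (0 : Fin k → ℝ) x).congr_of_eventuallyEq ?_
    filter_upwards [mem_interior_iff_mem_nhds.mp hx] with y hy
    exact (hq y hy).2
  have heq := hc.unique h0
  have h1 : jacobian F p * (A1 + A2 * jacobian q x) = 0 := by
    apply Matrix.ext_of_mulVec_single
    intro j
    rw [← Matrix.mulVec_mulVec, Matrix.add_mulVec, ← Matrix.mulVec_mulVec, jac_mulVec, jac_mulVec,
      Matrix.zero_mulVec]
    exact DFunLike.congr_fun heq (Pi.single j 1)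
  refine ⟨h1, ?_⟩
  have hXc : IsCompact X := hX ▸ isCompact_univ_pi fun _ => isCompact_Icc
  have hYc : IsCompact Y := hY ▸ isCompact_univ_pi fun _ => isCompact_Icc
  have hSc : IsCompact SXY := by
    have : SXY = (fun w : (Fin (m - k) → ℝ) × (Fin k → ℝ) =>
        pstar + A1 *ᵥ w.1 + A2 *ᵥ w.2) '' (X ×ˢ Y) := by
      rw [hSXY]
      ext z
      constructor
      · rintro ⟨x, hx, y, hy, rfl⟩
        exact ⟨(x, y), ⟨hx, hy⟩, rfl⟩
      · rintro ⟨⟨x, y⟩, ⟨hx, hy⟩, rfl⟩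
        exact ⟨x, hx, y, hy, rfl⟩
    rw [this]
    refine (hXc.prod hYc).image ?_
    exact (continuous_const.add (L1.continuous.comp continuous_fst)).add
      (L2.continuous.comp continuous_snd)
  have hpS : p ∈ SXY := by
    rw [hSXY]
    exact ⟨x, hxX, q x, (hq x hxX).1, rfl⟩
  have hmem : jacobian F p ∈ hullXY := by
    rw [hhullXY]
    intro i j
    have hcont : Continuous (fun z => fderiv ℝ F z (Pi.single j 1) i) :=
      (continuous_apply i).comp ((hF.continuous_fderiv (by norm_num)).clm_apply continuous_const)
    have hI := hSc.image hcont
    exact ⟨csInf_le hI.bddBelow ⟨p, hpS, rfl⟩, le_csSup hI.bddAbove ⟨p, hpS, rfl⟩⟩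
  have hu := (Matrix.isUnit_iff_isUnit_det _).mp (hinv _ hmem)
  rw [Matrix.mul_add, ← Matrix.mul_assoc] at h1
  have h2 : jacobian F p * A2 * jacobian q x = -(jacobian F p * A1) :=
    eq_neg_of_add_eq_zero_right h1
  rw [← Matrix.mul_neg, ← h2, Matrix.nonsing_inv_mul_cancel_left _ _ hu]
end

section
/- (Existence of heteroclinic arcs for the Lomelí map.) Let f be the Lomelí map with parameters a = 44/100, b = 21/100, c = 35/100, α = −1/4, τ = −3/10 (which is a bijection of ℝ³). Then there exist two distinct fixed points p_1 ≠ p_2 of f and an injective continuous curve γ : [0,1] → ℝ³ such that γ(1) = f³(γ(0)) and every point q on the curve is heteroclinic from p_1 to p_2: lim_{n→∞} f^n(γ(s)) = p_2 and lim_{n→∞} f^{−n}(γ(s)) = p_1 for all s ∈ [0,1]. In particular the unstable manifold W^u(p_1) and the stable manifold W^s(p_2) intersect along a one-dimensional curve. -/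
open Filter

/-! ### Interval arithmetic used in the computer-assisted part -/

structure LI where
  m : Int
  r : Nat

structure LPrm where
  a : Nat
  b : Nat
  c : Nat
  T1 : Int
  T2 : Int
  al : Int

structure LNode where
  t : Int
  y : Int
  z : Int

/-- floor division by a natural number, written for kernel reduction -/
def lfd (z : Int) (d : Nat) : Int :=
  match z with
  | .ofNat n => .ofNat (Nat.div n d)
  | .negSucc n => .negSucc (Nat.div n d)

def lforceN {β : Type} (n : Nat) (k : Nat → β) : β :=
  match n with
  | 0 => k 0
  | n + 1 => k (n + 1)

def lforceZ {β : Type} (z : Int) (k : Int → β) : β :=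
  match z with
  | .ofNat n => lforceN n (fun n => k (.ofNat n))
  | .negSucc n => lforceN n (fun n => k (.negSucc n))

def LI.force {β : Type} (x : LI) (k : LI → β) : β :=
  lforceZ x.m (fun m => lforceN x.r (fun r => k ⟨m, r⟩))

theorem lforceN_eq {β : Type} (n : Nat) (k : Nat → β) : lforceN n k = k n := by
  cases n <;> rfl

theorem lforceZ_eq {β : Type} (n : Int) (k : Int → β) : lforceZ n k = k n := by
  cases n <;> simp [lforceZ, lforceN_eq]

theorem LI.force_eq {β : Type} (x : LI) (k : LI → β) : x.force k = k x := by
  simp [LI.force, lforceZ_eq, lforceN_eq]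

def labs (x : LI) : Nat := Nat.add (Int.natAbs x.m) x.r

/-- `k + c1 x + c2 y` (exact) -/
def lin2 (k : Int) (c1 c2 : Nat) (x y : LI) : LI :=
  ⟨Int.add k (Int.add (Int.mul (Int.ofNat c1) x.m) (Int.mul (Int.ofNat c2) y.m)),
   Nat.add (Nat.mul c1 x.r) (Nat.mul c2 y.r)⟩

def lprodr (x u : LI) : Nat :=
  Nat.add (Nat.mul x.r (labs u)) (Nat.mul (Int.natAbs x.m) u.r)

/-- `base + (k + x u + y v) / d`, where `k` is scaled by `2^80` and `d` is a numerical factor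
times `2^40` -/
def ldot (d : Nat) (base : LI) (k : Int) (x u y v : LI) : LI :=
  ⟨Int.add base.m (lfd (Int.add k (Int.add (Int.mul x.m u.m) (Int.mul y.m v.m))) d),
   Nat.add base.r (Nat.add (Nat.div (Nat.add (lprodr x u) (lprodr y v)) d) 2)⟩

structure LSt where
  c0 : LI
  c1 : LI
  c2 : LI
  t0 : LI
  t1 : LI
  t2 : LI
  o0 : LI
  o1 : LI
  o2 : LI
  s0 : LI
  s1 : LI
  s2 : LI
  b1 : LI
  b2 : LI

def lbox (ht ho hs : Nat) (c t o s : LI) : LI :=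
  ⟨c.m, Nat.add c.r (Nat.add (Nat.div (Nat.add (Nat.mul ht (labs t))
    (Nat.add (Nat.mul ho (labs o)) (Nat.mul hs (labs s)))) 1099511627776) 1)⟩

def lstep (P : LPrm) (ht ho hs : Nat) (S : LSt) : LSt :=
  (lin2 (Int.mul P.T1 1099511627776) (Nat.mul 2 P.a) P.b S.b2 S.b1).force fun A =>
  (lin2 (Int.mul P.T2 1099511627776) P.b (Nat.mul 2 P.c) S.b2 S.b1).force fun B =>
  (ldot 109951162777600 S.c0 (Int.mul P.al 1208925819614629174706176)
    S.c2 (lin2 (Int.mul P.T1 1099511627776) P.a P.b S.c2 S.c1)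
    S.c1 (lin2 (Int.mul P.T2 1099511627776) P.c 0 S.c1 S.c1)).force fun C =>
  (ldot 109951162777600 S.t0 0 S.t2 A S.t1 B).force fun t =>
  (ldot 109951162777600 S.o0 0 S.o2 A S.o1 B).force fun o =>
  (ldot 109951162777600 S.s0 0 S.s2 A S.s1 B).force fun s =>
  (lbox ht ho hs C t o s).force fun b =>
  ⟨S.c1, S.c2, C, S.t1, S.t2, t, S.o1, S.o2, o, S.s1, S.s2, s, S.b2, b⟩

def lrun (P : LPrm) (ht ho hs : Nat) : Nat → LSt → LSt
  | 0, S => S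
  | n + 1, S => lrun P ht ho hs n (lstep P ht ho hs S)

def lstart (ht ho hs : Nat) (c0 c1 c2 t0 t1 t2 o0 o1 o2 s0 s1 s2 : Int) : LSt :=
  ⟨⟨c0, 0⟩, ⟨c1, 0⟩, ⟨c2, 0⟩, ⟨t0, 0⟩, ⟨t1, 0⟩, ⟨t2, 0⟩, ⟨o0, 0⟩, ⟨o1, 0⟩, ⟨o2, 0⟩,
   ⟨s0, 0⟩, ⟨s1, 0⟩, ⟨s2, 0⟩,
   lbox ht ho hs ⟨c1, 0⟩ ⟨t1, 0⟩ ⟨o1, 0⟩ ⟨s1, 0⟩,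
   lbox ht ho hs ⟨c2, 0⟩ ⟨t2, 0⟩ ⟨o2, 0⟩ ⟨s2, 0⟩⟩

/-- numerical data of one side: parameters and enclosures -/
structure LSide where
  P : LPrm
  fp : LI
  ph : LI
  p : LI
  q : LI
  R2 : Nat
  kap : Nat

def lsub (x y : LI) : LI := ⟨Int.sub x.m y.m, Nat.add x.r y.r⟩

/-- `x2 + p x1 + q x0` -/
def lw (S : LSide) (x0 x1 x2 : LI) : LI := ldot 1099511627776 x2 0 S.p x1 S.q x0

def lconeOK (o s : LI) : Bool :=
  match Int.sub s.m (Int.ofNat (Nat.add (labs o) s.r)) with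
  | .ofNat (_ + 1) => true
  | _ => false

def lpos (z : Int) : Bool :=
  match z with
  | .ofNat (_ + 1) => true
  | _ => false

def lzero : LI := ⟨0, 0⟩

/-- `V = (d2 + p/2 d1)^2 + (q - p^2/4) d1^2` -/
def lV (S : LSide) (d1 d2 : LI) : LI :=
  (ldot 1099511627776 d2 0 S.ph d1 lzero lzero).force fun g =>
  (lsub S.q (ldot 1099511627776 lzero 0 S.ph S.ph lzero lzero)).force fun D =>
  (ldot 1099511627776 lzero 0 d1 d1 lzero lzero).force fun e =>
  ldot 1099511627776 lzero 0 g g D e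

def lfinal (S : LSide) (ht ho hs : Nat) (X : LSt) : Bool :=
  (lsub X.b1 S.fp).force fun d1 =>
  (lsub X.b2 S.fp).force fun d2 =>
  (lV S d1 d2).force fun V =>
  (lw S X.t0 X.t1 X.t2).force fun wt =>
  (lw S X.o0 X.o1 X.o2).force fun wo =>
  (lw S X.s0 X.s1 X.s2).force fun ws =>
  (lw S (lsub X.c0 S.fp) (lsub X.c1 S.fp) (lsub X.c2 S.fp)).force fun wc =>
  lforceN (Nat.add (Nat.add (Nat.div (Nat.add (Nat.mul ht (labs wt)) (Nat.mul ho (labs wo)))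
    1099511627776) 2) wc.r) fun err =>
  lforceZ (lfd (Int.mul (Int.ofNat hs) (Int.sub ws.m (Int.ofNat ws.r))) 1099511627776) fun gain =>
  Nat.ble 1 S.R2 && lpos (Int.sub (Int.ofNat S.R2) (Int.add V.m (Int.ofNat V.r)))
  && lpos (Int.sub (Int.add wc.m gain) (Int.ofNat err))
  && lpos (Int.sub gain (Int.add wc.m (Int.add (Int.ofNat err) (Int.ofNat S.kap))))
  && lconeOK X.o0 X.s0 && lconeOK X.o1 X.s1 && lconeOK X.o2 X.s2

def lside (S : LSide) (N : Nat) (ht ho hs : Nat)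
    (c0 c1 c2 t0 t1 t2 o0 o1 o2 s0 s1 s2 : Int) : Bool :=
  lfinal S ht ho hs (lrun S.P ht ho hs N
    (lstart ht ho hs c0 c1 c2 t0 t1 t2 o0 o1 o2 s0 s1 s2))

def sideF : LSide where
  P := ⟨44, 21, 35, -30, 0, -25⟩
  fp := ⟨738888664371, 4⟩
  ph := ⟨526398534594, 500⟩
  p := ⟨1052797069189, 1000⟩
  q := ⟨791009834003, 1000⟩
  R2 := 6267491156
  kap := 12578413022

def sideB : LSide where
  P := ⟨35, 21, 44, 0, 30, -25⟩
  fp := ⟨409035176038, 4⟩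
  ph := ⟨571228761474, 500⟩
  p := ⟨1142457522948, 1000⟩
  q := ⟨798139667938, 1000⟩
  R2 := 3749950377
  kap := 9488785348

/-- check of one segment (`ht` is the half width in the direction of the curve) -/
def lchk (NF NB ht ry rz : Nat) (c0 c1 c2 d0 d1 d2 : Int) : Bool :=
  lside sideF NF ht ry rz c0 c1 c2 d0 d1 d2
    0 (-1099511627776) (-219902325555) 0 1429365116109 (-1099511627776) &&
  lside sideB NB ht rz ry (Int.neg c2) (Int.neg c1) (Int.neg c0)
    (Int.neg d2) (Int.neg d1) (Int.neg d0)
    1099511627776 (-1429365116109) 0 219902325555 1099511627776 0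

def lpiece (A B : LNode) : Bool :=
  lforceZ (Int.add A.t B.t) fun c0 =>
  lforceZ (Int.add A.y B.y) fun c1 =>
  lforceZ (Int.add A.z B.z) fun c2 =>
  lforceZ (Int.mul 2 (Int.sub B.t A.t)) fun d0 =>
  lforceZ (Int.mul 2 (Int.sub B.y A.y)) fun d1 =>
  lforceZ (Int.mul 2 (Int.sub B.z A.z)) fun d2 =>
  lpos d0 && lchk 23 21 549755813888 43980465 41781442 c0 c1 c2 d0 d1 d2

def lchain : List LNode → Bool
  | [] => true
  | A :: l =>
    match l with
    | [] => true
    | B :: _ => lpiece A B && lchain l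

/-! ### Soundness of the interval arithmetic -/

def LI.mem (x : ℝ) (X : LI) : Prop := |x * 1099511627776 - (X.m : ℝ)| ≤ (X.r : ℝ)

theorem lfd_spec (z : ℤ) (d : ℕ) (hd : 0 < d) : |(z : ℝ) / d - (lfd z d : ℝ)| ≤ 1 := by
  have hd' : (0 : ℝ) < d := by exact_mod_cast hd
  have key : ∀ n : ℕ, ((n / d : ℕ) : ℝ) ≤ (n : ℝ) / d ∧ (n : ℝ) / d < ((n / d : ℕ) : ℝ) + 1 := by
    intro n
    constructor
    · exact Nat.cast_div_le
    · rw [div_lt_iff₀ hd']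
      have := Nat.lt_div_mul_add hd (a := n)
      have h2 : n < (n / d + 1) * d := by nlinarith
      exact_mod_cast h2
  cases z with
  | ofNat n =>
    obtain ⟨h1, h2⟩ := key n
    have e : lfd (Int.ofNat n) d = ((n / d : ℕ) : ℤ) := rfl
    rw [e, abs_le]
    simp only [Int.ofNat_eq_natCast, Int.cast_natCast]
    constructor <;> linarith
  | negSucc n =>
    have e : lfd (Int.negSucc n) d = Int.negSucc (n / d) := rfl
    have h3 : ((n / d : ℕ) : ℝ) * d ≤ n := by exact_mod_cast Nat.div_mul_le_self n d
    have h2 : n < (n / d + 1) * d := by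
      have := Nat.lt_div_mul_add hd (a := n)
      nlinarith
    have h2' : ((n : ℝ) + 1) ≤ (((n / d : ℕ) : ℝ) + 1) * d := by exact_mod_cast h2
    rw [e, Int.cast_negSucc, Int.cast_negSucc, abs_le]
    push_cast at *
    have h5 : ((n : ℝ) + 1) / d ≤ ((n / d : ℕ) : ℝ) + 1 := by rw [div_le_iff₀ hd']; exact h2'
    have h6 : ((n / d : ℕ) : ℝ) ≤ ((n : ℝ) + 1) / d := by rw [le_div_iff₀ hd']; linarith
    have h7 : (-(1 + (n : ℝ))) / d = - (((n : ℝ) + 1) / d) := by ring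
    have h8 : (-((n : ℝ) + 1)) / d = - (((n : ℝ) + 1) / d) := by ring
    first
      | rw [h7]
      | rw [h8]
    constructor <;> linarith

theorem lndiv (n d : ℕ) (hd : 0 < d) : (n : ℝ) / d ≤ ((Nat.div n d : ℕ) : ℝ) + 1 := by
  have hd' : (0 : ℝ) < d := by exact_mod_cast hd
  rw [div_le_iff₀ hd']
  have h2 : n < (n / d + 1) * d := by
    have := Nat.lt_div_mul_add hd (a := n)
    nlinarith
  have : (n : ℝ) ≤ (((n / d : ℕ) : ℝ) + 1) * d := by exact_mod_cast h2.le
  exact this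

theorem labs_spec {x : ℝ} {X : LI} (h : X.mem x) : |x * 1099511627776| ≤ (labs X : ℝ) := by
  have h1 : |(X.m : ℝ)| = ((Int.natAbs X.m : ℕ) : ℝ) := by
    rw [Nat.cast_natAbs]; simp
  have h2 : (labs X : ℝ) = ((Int.natAbs X.m : ℕ) : ℝ) + X.r := by
    show ((Int.natAbs X.m + X.r : ℕ) : ℝ) = _
    push_cast; ring
  rw [h2, ← h1]
  unfold LI.mem at h
  calc |x * 1099511627776| = |(X.m : ℝ) + (x * 1099511627776 - X.m)| := by congr 1; ring
    _ ≤ _ := (abs_add_le _ _).trans (by linarith)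

theorem lin2_mem {x y : ℝ} {X Y : LI} (k : ℤ) (c1 c2 : ℕ) (hx : X.mem x) (hy : Y.mem y) :
    (lin2 (Int.mul k 1099511627776) c1 c2 X Y).mem (k + c1 * x + c2 * y) := by
  unfold LI.mem at *
  have e1 : ((lin2 (Int.mul k 1099511627776) c1 c2 X Y).m : ℝ)
      = k * 1099511627776 + (c1 * X.m + c2 * Y.m) := by
    show (((k * 1099511627776 + ((c1 : ℤ) * X.m + (c2 : ℤ) * Y.m)) : ℤ) : ℝ) = _
    push_cast; ring
  have e2 : ((lin2 (Int.mul k 1099511627776) c1 c2 X Y).r : ℝ) = c1 * X.r + c2 * Y.r := by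
    show (((c1 * X.r + c2 * Y.r) : ℕ) : ℝ) = _
    push_cast; ring
  rw [e1, e2]
  have h1 : |(c1 : ℝ) * (x * 1099511627776 - X.m)| ≤ c1 * X.r := by
    rw [abs_mul, abs_of_nonneg (Nat.cast_nonneg c1)]
    exact mul_le_mul_of_nonneg_left hx (Nat.cast_nonneg c1)
  have h2 : |(c2 : ℝ) * (y * 1099511627776 - Y.m)| ≤ c2 * Y.r := by
    rw [abs_mul, abs_of_nonneg (Nat.cast_nonneg c2)]
    exact mul_le_mul_of_nonneg_left hy (Nat.cast_nonneg c2)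
  calc _ = |(c1 : ℝ) * (x * 1099511627776 - X.m) + (c2 : ℝ) * (y * 1099511627776 - Y.m)| := by
        congr 1; ring
    _ ≤ _ := (abs_add_le _ _).trans (add_le_add h1 h2)

theorem lprodr_spec {x u : ℝ} {X U : LI} (hx : X.mem x) (hu : U.mem u) :
    |x * 1099511627776 * (u * 1099511627776) - X.m * U.m| ≤ (lprodr X U : ℝ) := by
  have hU := labs_spec hu
  unfold LI.mem at hx hu
  have h1 : |(X.m : ℝ)| = ((Int.natAbs X.m : ℕ) : ℝ) := by
    rw [Nat.cast_natAbs]; simp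
  have e : (lprodr X U : ℝ) = X.r * labs U + ((Int.natAbs X.m : ℕ) : ℝ) * U.r := by
    show ((X.r * labs U + Int.natAbs X.m * U.r : ℕ) : ℝ) = _
    push_cast; ring
  rw [e, ← h1]
  calc _ = |(x * 1099511627776 - X.m) * (u * 1099511627776)
          + X.m * (u * 1099511627776 - U.m)| := by congr 1; ring
    _ ≤ _ := (abs_add_le _ _).trans (by
        apply add_le_add
        · rw [abs_mul (x * 1099511627776 - (X.m : ℝ))]
          exact mul_le_mul hx hU (abs_nonneg _) (Nat.cast_nonneg _)
        · rw [abs_mul]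
          exact mul_le_mul_of_nonneg_left hu (abs_nonneg _))

theorem ldot_mem {b x u y v : ℝ} {Bs X U Y W : LI} (D : ℕ) (hD : 0 < D) (d : ℕ)
    (hd : d = D * 1099511627776) (k : ℤ) (kr : ℝ)
    (hk : (k : ℝ) = kr * 1208925819614629174706176)
    (hb : Bs.mem b) (hx : X.mem x) (hu : U.mem u) (hy : Y.mem y) (hv : W.mem v) :
    (ldot d Bs k X U Y W).mem (b + (kr + x * u + y * v) / D) := by
  have hxu := lprodr_spec hx hu
  have hyv := lprodr_spec hy hv
  have hd0 : 0 < d := by rw [hd]; positivity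
  have hd' : (0 : ℝ) < d := by exact_mod_cast hd0
  have hDr : (0 : ℝ) < D := by exact_mod_cast hD
  have hdr : (d : ℝ) = D * 1099511627776 := by rw [hd]; push_cast; ring
  set Z : ℤ := k + (X.m * U.m + Y.m * W.m) with hZ
  have e1 : ((ldot d Bs k X U Y W).m : ℝ) = Bs.m + lfd Z d := by
    show (((Bs.m + lfd Z d) : ℤ) : ℝ) = _
    push_cast; ring
  set R : ℕ := lprodr X U + lprodr Y W with hR
  have e2 : ((ldot d Bs k X U Y W).r : ℝ) = Bs.r + ((Nat.div R d : ℕ) + 2) := by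
    show (((Bs.r + (Nat.div R d + 2)) : ℕ) : ℝ) = _
    push_cast; ring
  have h1 := lfd_spec Z d hd0
  have h2 := lndiv R d hd0
  unfold LI.mem at hb ⊢
  rw [e1, e2]
  have hR' : (R : ℝ) = lprodr X U + lprodr Y W := by rw [hR]; push_cast; ring
  have hZ' : (Z : ℝ) = k + (X.m * U.m + Y.m * W.m) := by rw [hZ]; push_cast; ring
  have h3 : |((x * 1099511627776 * (u * 1099511627776) - X.m * U.m)
      + (y * 1099511627776 * (v * 1099511627776) - Y.m * W.m)) / d| ≤ (R : ℝ) / d := by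
    rw [abs_div, abs_of_pos hd', hR']
    gcongr
    exact (abs_add_le _ _).trans (add_le_add hxu hyv)
  have h4 : (b + (kr + x * u + y * v) / D) * 1099511627776 - (Bs.m + lfd Z d)
      = (b * 1099511627776 - Bs.m) + (((x * 1099511627776 * (u * 1099511627776) - X.m * U.m)
      + (y * 1099511627776 * (v * 1099511627776) - Y.m * W.m)) / d) + ((Z : ℝ) / d - lfd Z d) := by
    rw [hZ', hk, hdr]
    field_simp
    ring
  rw [h4]
  refine (abs_add_le _ _).trans ?_
  have := abs_add_le (b * 1099511627776 - Bs.m) (((x * 1099511627776 * (u * 1099511627776) - X.m * U.m)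
      + (y * 1099511627776 * (v * 1099511627776) - Y.m * W.m)) / d)
  linarith

theorem ldot1_mem {b x u y v : ℝ} {Bs X U Y W : LI}
    (hb : Bs.mem b) (hx : X.mem x) (hu : U.mem u) (hy : Y.mem y) (hv : W.mem v) :
    (ldot 1099511627776 Bs 0 X U Y W).mem (b + (x * u + y * v)) := by
  have := ldot_mem 1 one_pos 1099511627776 (by norm_num) 0 0 (by norm_num) hb hx hu hy hv
  simpa using this

theorem lsub_mem {x y : ℝ} {X Y : LI} (hx : X.mem x) (hy : Y.mem y) :
    (lsub X Y).mem (x - y) := by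
  unfold LI.mem at *
  have e1 : ((lsub X Y).m : ℝ) = X.m - Y.m := by
    show ((X.m - Y.m : ℤ) : ℝ) = _
    push_cast; ring
  have e2 : ((lsub X Y).r : ℝ) = X.r + Y.r := by
    show ((X.r + Y.r : ℕ) : ℝ) = _
    push_cast; ring
  rw [e1, e2]
  calc _ = |(x * 1099511627776 - X.m) - (y * 1099511627776 - Y.m)| := by congr 1; ring
    _ ≤ _ := (abs_sub _ _).trans (add_le_add hx hy)

theorem lzero_mem : lzero.mem 0 := by simp [LI.mem, lzero]

theorem lint_mem (z : ℤ) : LI.mem ((z : ℝ) / 1099511627776) ⟨z, 0⟩ := by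
  unfold LI.mem
  have : (z : ℝ) / 1099511627776 * 1099511627776 - z = 0 := by field_simp; ring
  simp only [this]; simp

theorem lmul_le {h τ t : ℝ} {T : LI} (hτ : |τ| * 1099511627776 ≤ h) (ht : T.mem t) :
    |τ * t * 1099511627776| ≤ h * labs T / 1099511627776 := by
  have h1 := labs_spec ht
  have : τ * t * 1099511627776 = (τ * 1099511627776) * (t * 1099511627776) / 1099511627776 := by
    ring
  rw [this, abs_div, abs_mul, abs_mul τ]
  have e : |(1099511627776 : ℝ)| = 1099511627776 := by norm_num
  rw [e]
  gcongr
  exact le_trans (by positivity) hτ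

theorem lbox_mem {ht ho hs : ℕ} {τ o' s' c t o s : ℝ} {C T O S : LI}
    (h1 : |τ| * 1099511627776 ≤ ht) (h2 : |o'| * 1099511627776 ≤ ho)
    (h3 : |s'| * 1099511627776 ≤ hs)
    (hc : C.mem c) (hT : T.mem t) (hO : O.mem o) (hS : S.mem s) :
    (lbox ht ho hs C T O S).mem (c + (τ * t + o' * o + s' * s)) := by
  have a1 := lmul_le h1 hT
  have a2 := lmul_le h2 hO
  have a3 := lmul_le h3 hS
  set R : ℕ := ht * labs T + (ho * labs O + hs * labs S) with hR
  have e1 : ((lbox ht ho hs C T O S).m : ℝ) = C.m := rfl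
  have e2 : ((lbox ht ho hs C T O S).r : ℝ) = C.r + ((Nat.div R 1099511627776 : ℕ) + 1) := by
    show ((C.r + (Nat.div R 1099511627776 + 1) : ℕ) : ℝ) = _
    push_cast; ring
  have h5 := lndiv R 1099511627776 (by norm_num)
  have hR' : (R : ℝ) / (1099511627776 : ℕ) = ht * labs T / 1099511627776
     + ho * labs O / 1099511627776 + hs * labs S / 1099511627776 := by
    rw [hR]; push_cast; ring
  rw [hR'] at h5
  unfold LI.mem at *
  rw [e1, e2]
  have : (c + (τ * t + o' * o + s' * s)) * 1099511627776 - C.m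
     = (c * 1099511627776 - C.m) + τ * t * 1099511627776 + o' * o * 1099511627776
      + s' * s * 1099511627776 := by ring
  rw [this, abs_le]
  rw [abs_le] at hc a1 a2 a3
  constructor <;> linarith [hc.1, hc.2, a1.1, a1.2, a2.1, a2.2, a3.1, a3.2]

theorem lmem_mid {x y : ℝ} {X : LI} (hx : X.mem x) (hy : X.mem y) : X.mem ((x + y) / 2) := by
  unfold LI.mem at *
  rw [abs_le] at *
  constructor <;> linarith [hx.1, hx.2, hy.1, hy.2]

/-! ### Sequences, their differences, and soundness of the orbit enclosures -/

noncomputable def lsq (P : LPrm) (x0 x1 x2 : ℝ) : ℕ → ℝ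
  | 0 => x0
  | 1 => x1
  | 2 => x2
  | n + 3 => lsq P x0 x1 x2 n + ((P.al : ℝ)
      + lsq P x0 x1 x2 (n + 2) * (P.T1 + P.a * lsq P x0 x1 x2 (n + 2) + P.b * lsq P x0 x1 x2 (n + 1))
      + lsq P x0 x1 x2 (n + 1) * (P.T2 + P.c * lsq P x0 x1 x2 (n + 1))) / 100

noncomputable def ljr (A B : ℕ → ℝ) (d0 d1 d2 : ℝ) : ℕ → ℝ
  | 0 => d0
  | 1 => d1
  | 2 => d2
  | n + 3 => ljr A B d0 d1 d2 n
      + (ljr A B d0 d1 d2 (n + 2) * A n + ljr A B d0 d1 d2 (n + 1) * B n) / 100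

theorem lthree {p : ℕ → Prop} (h0 : p 0) (h1 : p 1) (h2 : p 2)
    (h : ∀ n, p n → p (n + 1) → p (n + 2) → p (n + 3)) (n : ℕ) : p n := by
  have : p n ∧ p (n + 1) ∧ p (n + 2) := by
    induction n with
    | zero => exact ⟨h0, h1, h2⟩
    | succ n ih => exact ⟨ih.2.1, ih.2.2, h n ih.1 ih.2.1 ih.2.2⟩
  exact this.1

noncomputable def lAm (P : LPrm) (X Y : ℕ → ℝ) (n : ℕ) : ℝ :=
  P.T1 + (2 * P.a : ℕ) * ((X (n + 2) + Y (n + 2)) / 2) + P.b * ((X (n + 1) + Y (n + 1)) / 2)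

noncomputable def lBm (P : LPrm) (X Y : ℕ → ℝ) (n : ℕ) : ℝ :=
  P.T2 + P.b * ((X (n + 2) + Y (n + 2)) / 2) + (2 * P.c : ℕ) * ((X (n + 1) + Y (n + 1)) / 2)

/-- the recurrence as a property of a sequence -/
def LRec (P : LPrm) (X : ℕ → ℝ) : Prop :=
  ∀ n, X (n + 3) = X n + ((P.al : ℝ) + X (n + 2) * (P.T1 + P.a * X (n + 2) + P.b * X (n + 1))
      + X (n + 1) * (P.T2 + P.c * X (n + 1))) / 100

theorem lsq_rec (P : LPrm) (x0 x1 x2 : ℝ) : LRec P (lsq P x0 x1 x2) := by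
  intro n
  rw [lsq]

theorem LRec.diff {P : LPrm} {X Y : ℕ → ℝ} (hX : LRec P X) (hY : LRec P Y) (n : ℕ) :
    Y (n + 3) - X (n + 3) = (Y n - X n) + ((Y (n + 2) - X (n + 2)) * lAm P X Y n
      + (Y (n + 1) - X (n + 1)) * lBm P X Y n) / 100 := by
  rw [hX n, hY n, lAm, lBm]
  push_cast
  ring

theorem LRec.diff_jr {P : LPrm} {X Y : ℕ → ℝ} (hX : LRec P X) (hY : LRec P Y)
    {α β γ t0 t1 t2 o0 o1 o2 s0 s1 s2 : ℝ}
    (h0 : Y 0 - X 0 = α * t0 + β * o0 + γ * s0)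
    (h1 : Y 1 - X 1 = α * t1 + β * o1 + γ * s1)
    (h2 : Y 2 - X 2 = α * t2 + β * o2 + γ * s2) (n : ℕ) :
    Y n - X n = α * ljr (lAm P X Y) (lBm P X Y) t0 t1 t2 n
      + β * ljr (lAm P X Y) (lBm P X Y) o0 o1 o2 n
      + γ * ljr (lAm P X Y) (lBm P X Y) s0 s1 s2 n := by
  induction n using lthree with
  | h0 => simpa [ljr] using h0
  | h1 => simpa [ljr] using h1
  | h2 => simpa [ljr] using h2
  | h n i0 i1 i2 =>
    rw [hX.diff hY, i0, i1, i2, ljr, ljr, ljr]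
    ring

/-- a box of initial conditions, with integer data at scale `2^40` -/
structure LBx where
  ht : ℕ
  ho : ℕ
  hs : ℕ
  c : Fin 3 → ℤ
  t : Fin 3 → ℤ
  o : Fin 3 → ℤ
  s : Fin 3 → ℤ

noncomputable def LBx.pt (b : LBx) (u : ℝ × ℝ × ℝ) (i : Fin 3) : ℝ :=
  (b.c i : ℝ) / 1099511627776 + (u.1 * ((b.t i : ℝ) / 1099511627776)
    + u.2.1 * ((b.o i : ℝ) / 1099511627776) + u.2.2 * ((b.s i : ℝ) / 1099511627776))

def LBx.In (b : LBx) (u : ℝ × ℝ × ℝ) : Prop :=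
  |u.1| * 1099511627776 ≤ b.ht ∧ |u.2.1| * 1099511627776 ≤ b.ho ∧ |u.2.2| * 1099511627776 ≤ b.hs

noncomputable def LBx.X (b : LBx) (P : LPrm) (u : ℝ × ℝ × ℝ) : ℕ → ℝ :=
  lsq P (b.pt u 0) (b.pt u 1) (b.pt u 2)

noncomputable def LBx.J (b : LBx) (P : LPrm) (d : Fin 3 → ℤ) (u u' : ℝ × ℝ × ℝ) : ℕ → ℝ :=
  ljr (lAm P (b.X P u) (b.X P u')) (lBm P (b.X P u) (b.X P u'))
    ((d 0 : ℝ) / 1099511627776) ((d 1 : ℝ) / 1099511627776) ((d 2 : ℝ) / 1099511627776)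

theorem LBx.In_zero (b : LBx) : b.In (0, 0, 0) := by
  simp [LBx.In]

theorem LBx.diff (b : LBx) (P : LPrm) (u u' : ℝ × ℝ × ℝ) (n : ℕ) :
    b.X P u' n - b.X P u n = (u'.1 - u.1) * b.J P b.t u u' n + (u'.2.1 - u.2.1) * b.J P b.o u u' n
      + (u'.2.2 - u.2.2) * b.J P b.s u u' n := by
  apply LRec.diff_jr (lsq_rec _ _ _ _) (lsq_rec _ _ _ _) <;>
    simp only [lsq, LBx.pt] <;> ring

structure LInv (b : LBx) (P : LPrm) (n : ℕ) (S : LSt) : Prop where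
  c0 : S.c0.mem (b.X P (0, 0, 0) n)
  c1 : S.c1.mem (b.X P (0, 0, 0) (n + 1))
  c2 : S.c2.mem (b.X P (0, 0, 0) (n + 2))
  t0 : ∀ u u', b.In u → b.In u' → S.t0.mem (b.J P b.t u u' n)
  t1 : ∀ u u', b.In u → b.In u' → S.t1.mem (b.J P b.t u u' (n + 1))
  t2 : ∀ u u', b.In u → b.In u' → S.t2.mem (b.J P b.t u u' (n + 2))
  o0 : ∀ u u', b.In u → b.In u' → S.o0.mem (b.J P b.o u u' n)
  o1 : ∀ u u', b.In u → b.In u' → S.o1.mem (b.J P b.o u u' (n + 1))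
  o2 : ∀ u u', b.In u → b.In u' → S.o2.mem (b.J P b.o u u' (n + 2))
  s0 : ∀ u u', b.In u → b.In u' → S.s0.mem (b.J P b.s u u' n)
  s1 : ∀ u u', b.In u → b.In u' → S.s1.mem (b.J P b.s u u' (n + 1))
  s2 : ∀ u u', b.In u → b.In u' → S.s2.mem (b.J P b.s u u' (n + 2))
  b1 : ∀ u, b.In u → S.b1.mem (b.X P u (n + 1))
  b2 : ∀ u, b.In u → S.b2.mem (b.X P u (n + 2))

def LBx.start (b : LBx) : LSt :=
  lstart b.ht b.ho b.hs (b.c 0) (b.c 1) (b.c 2) (b.t 0) (b.t 1) (b.t 2)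
    (b.o 0) (b.o 1) (b.o 2) (b.s 0) (b.s 1) (b.s 2)

theorem LBx.start_inv (b : LBx) (P : LPrm) : LInv b P 0 b.start := by
  have hc : ∀ i, b.pt (0, 0, 0) i = (b.c i : ℝ) / 1099511627776 := by
    intro i; simp [LBx.pt]
  constructor
  · show LI.mem (b.pt (0, 0, 0) 0) _; rw [hc]; exact lint_mem _
  · show LI.mem (b.pt (0, 0, 0) 1) _; rw [hc]; exact lint_mem _
  · show LI.mem (b.pt (0, 0, 0) 2) _; rw [hc]; exact lint_mem _
  · intro u u' _ _; exact lint_mem _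
  · intro u u' _ _; exact lint_mem _
  · intro u u' _ _; exact lint_mem _
  · intro u u' _ _; exact lint_mem _
  · intro u u' _ _; exact lint_mem _
  · intro u u' _ _; exact lint_mem _
  · intro u u' _ _; exact lint_mem _
  · intro u u' _ _; exact lint_mem _
  · intro u u' _ _; exact lint_mem _
  · intro u h; exact lbox_mem h.1 h.2.1 h.2.2 (lint_mem _) (lint_mem _) (lint_mem _) (lint_mem _)
  · intro u h; exact lbox_mem h.1 h.2.1 h.2.2 (lint_mem _) (lint_mem _) (lint_mem _) (lint_mem _)

theorem LInv.step {b : LBx} {P : LPrm} {n : ℕ} {S : LSt} (h : LInv b P n S) :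
    LInv b P (n + 1) (lstep P b.ht b.ho b.hs S) := by
  unfold lstep
  simp only [LI.force_eq]
  set A := lin2 (Int.mul P.T1 1099511627776) (Nat.mul 2 P.a) P.b S.b2 S.b1 with hA
  set B := lin2 (Int.mul P.T2 1099511627776) P.b (Nat.mul 2 P.c) S.b2 S.b1 with hB
  have mA : ∀ u u', b.In u → b.In u' → A.mem (lAm P (b.X P u) (b.X P u') n) := by
    intro u u' hu hu'
    exact lin2_mem P.T1 (2 * P.a) P.b (lmem_mid (h.b2 u hu) (h.b2 u' hu'))
      (lmem_mid (h.b1 u hu) (h.b1 u' hu'))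
  have mB : ∀ u u', b.In u → b.In u' → B.mem (lBm P (b.X P u) (b.X P u') n) := by
    intro u u' hu hu'
    exact lin2_mem P.T2 P.b (2 * P.c) (lmem_mid (h.b2 u hu) (h.b2 u' hu'))
      (lmem_mid (h.b1 u hu) (h.b1 u' hu'))
  have hJ : ∀ (d : Fin 3 → ℤ) (T0 T1 T2 : LI) (u u' : ℝ × ℝ × ℝ), b.In u → b.In u' →
      T0.mem (b.J P d u u' n) → T1.mem (b.J P d u u' (n + 1)) → T2.mem (b.J P d u u' (n + 2)) →
      (ldot 109951162777600 T0 0 T2 A T1 B).mem (b.J P d u u' (n + 3)) := by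
    intro d T0 T1 T2 u u' hu hu' h0 h1 h2
    have := ldot_mem 100 (by norm_num) 109951162777600 (by norm_num) 0 0 (by norm_num)
      h0 h2 (mA u u' hu hu') h1 (mB u u' hu hu')
    have e : b.J P d u u' (n + 3) = b.J P d u u' n
      + (0 + b.J P d u u' (n + 2) * lAm P (b.X P u) (b.X P u') n
        + b.J P d u u' (n + 1) * lBm P (b.X P u) (b.X P u') n) / (100 : ℕ) := by
      rw [LBx.J, ljr]; push_cast; ring
    rw [e]; exact this
  have mC : (ldot 109951162777600 S.c0 (Int.mul P.al 1208925819614629174706176)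
    S.c2 (lin2 (Int.mul P.T1 1099511627776) P.a P.b S.c2 S.c1)
    S.c1 (lin2 (Int.mul P.T2 1099511627776) P.c 0 S.c1 S.c1)).mem (b.X P (0, 0, 0) (n + 3)) := by
    have := ldot_mem 100 (by norm_num) 109951162777600 (by norm_num)
      (Int.mul P.al 1208925819614629174706176) P.al
      (by show ((P.al * 1208925819614629174706176 : ℤ) : ℝ) = _; push_cast; ring)
      h.c0 h.c2 (lin2_mem P.T1 P.a P.b h.c2 h.c1) h.c1 (lin2_mem P.T2 P.c 0 h.c1 h.c1)
    have e := lsq_rec P (b.pt (0, 0, 0) 0) (b.pt (0, 0, 0) 1) (b.pt (0, 0, 0) 2) n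
    unfold LBx.X at this ⊢
    rw [e]
    convert this using 2
    push_cast; ring
  have mt := fun u u' hu hu' => hJ b.t _ _ _ u u' hu hu' (h.t0 u u' hu hu') (h.t1 u u' hu hu')
    (h.t2 u u' hu hu')
  have mo := fun u u' hu hu' => hJ b.o _ _ _ u u' hu hu' (h.o0 u u' hu hu') (h.o1 u u' hu hu')
    (h.o2 u u' hu hu')
  have ms := fun u u' hu hu' => hJ b.s _ _ _ u u' hu hu' (h.s0 u u' hu hu') (h.s1 u u' hu hu')
    (h.s2 u u' hu hu')
  refine ⟨h.c1, h.c2, mC, h.t1, h.t2, mt, h.o1, h.o2, mo, h.s1, h.s2, ms, h.b2, ?_⟩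
  intro u hu
  have := lbox_mem hu.1 hu.2.1 hu.2.2 mC (mt (0, 0, 0) u b.In_zero hu)
    (mo (0, 0, 0) u b.In_zero hu) (ms (0, 0, 0) u b.In_zero hu)
  have e := b.diff P (0, 0, 0) u (n + 3)
  have e' : b.X P u (n + 3) = b.X P (0, 0, 0) (n + 3) + (u.1 * b.J P b.t (0, 0, 0) u (n + 3)
      + u.2.1 * b.J P b.o (0, 0, 0) u (n + 3) + u.2.2 * b.J P b.s (0, 0, 0) u (n + 3)) := by
    simp only [sub_zero] at e
    linarith
  show LI.mem (b.X P u (n + 3)) _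
  rw [e']
  exact this

theorem LInv.run {b : LBx} {P : LPrm} (N : ℕ) : ∀ {n : ℕ} {S : LSt}, LInv b P n S →
    LInv b P (n + N) (lrun P b.ht b.ho b.hs N S) := by
  induction N with
  | zero => intro n S h; exact h
  | succ N ih =>
    intro n S h
    have := ih h.step
    rw [show n + (N + 1) = n + 1 + N by ring]
    exact this

theorem LBx.run_inv (b : LBx) (P : LPrm) (N : ℕ) :
    LInv b P N (lrun P b.ht b.ho b.hs N b.start) := by
  have := LInv.run N (b.start_inv P)
  simpa using this

noncomputable def LV (p q fp : ℝ) (X : ℕ → ℝ) (n : ℕ) : ℝ :=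
  (X (n + 2) - fp) ^ 2 + p * (X (n + 2) - fp) * (X (n + 1) - fp) + q * (X (n + 1) - fp) ^ 2

noncomputable def LW (p q fp : ℝ) (X : ℕ → ℝ) (n : ℕ) : ℝ :=
  (X (n + 2) - fp) + p * (X (n + 1) - fp) + q * (X n - fp)

/-- what the numerical check of a box provides -/
structure LCert (b : LBx) (P : LPrm) (N : ℕ) (p q fp R2 kap : ℝ) : Prop where
  V : ∀ u, b.In u → LV p q fp (b.X P u) N < R2
  up : ∀ u, b.In u → u.2.2 * 1099511627776 = b.hs → 0 < LW p q fp (b.X P u) N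
  dn : ∀ u, b.In u → u.2.2 * 1099511627776 = -b.hs → LW p q fp (b.X P u) N < -kap
  cone : ∀ u u', b.In u → b.In u' → |u'.2.1 - u.2.1| ≤ u'.2.2 - u.2.2 → u'.1 = u.1 →
    u.2.2 < u'.2.2 → b.X P u N < b.X P u' N ∧ b.X P u (N + 1) < b.X P u' (N + 1) ∧
      b.X P u (N + 2) < b.X P u' (N + 2)

theorem lpos_spec {z : ℤ} (h : lpos z = true) : 0 < z := by
  unfold lpos at h
  split at h
  · simp
  · simp at h

theorem lconeOK_spec {o s : ℝ} {O S : LI} (h : lconeOK O S = true) (ho : O.mem o) (hs : S.mem s) :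
    |o| < s := by
  have h1 : 0 < S.m - ((labs O + S.r : ℕ) : ℤ) := lpos_spec h
  have h2 : (0 : ℝ) < S.m - ((labs O : ℝ) + S.r) := by exact_mod_cast h1
  have h3 := labs_spec ho
  unfold LI.mem at hs
  rw [abs_le] at hs
  rw [abs_mul] at h3
  have e : |(1099511627776 : ℝ)| = 1099511627776 := by norm_num
  rw [e] at h3
  linarith [hs.1, hs.2]

theorem lfinal_sound {b : LBx} {S : LSide} {N : ℕ} {X : LSt} {p q fp : ℝ}
    (hX : LInv b S.P N X) (hp : S.p.mem p) (hph : S.ph.mem (p / 2)) (hq : S.q.mem q)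
    (hfp : S.fp.mem fp) (h : lfinal S b.ht b.ho b.hs X = true) :
    LCert b S.P N p q fp ((S.R2 : ℝ) / 1099511627776) ((S.kap : ℝ) / 1099511627776) := by
  unfold lfinal lV at h
  simp only [LI.force_eq, lforceN_eq, lforceZ_eq, Bool.and_eq_true] at h
  obtain ⟨⟨⟨⟨⟨⟨-, hV⟩, hup⟩, hdn⟩, hc0⟩, hc1⟩, hc2⟩ := h
  have mwc : (lw S (lsub X.c0 S.fp) (lsub X.c1 S.fp) (lsub X.c2 S.fp)).mem
      (LW p q fp (b.X S.P (0, 0, 0)) N) := by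
    have := ldot1_mem (lsub_mem hX.c2 hfp) hp (lsub_mem hX.c1 hfp) hq (lsub_mem hX.c0 hfp)
    unfold LW
    rw [add_assoc]; exact this
  have mw : ∀ (T0 T1 T2 : LI) (x0 x1 x2 : ℝ), T0.mem x0 → T1.mem x1 → T2.mem x2 →
      (lw S T0 T1 T2).mem (x2 + (p * x1 + q * x0)) := by
    intro T0 T1 T2 x0 x1 x2 h0 h1 h2
    exact ldot1_mem h2 hp h1 hq h0
  have hWd : ∀ u, LW p q fp (b.X S.P u) N = LW p q fp (b.X S.P (0, 0, 0)) N
      + u.1 * (b.J S.P b.t (0, 0, 0) u (N + 2) + (p * b.J S.P b.t (0, 0, 0) u (N + 1)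
        + q * b.J S.P b.t (0, 0, 0) u N))
      + u.2.1 * (b.J S.P b.o (0, 0, 0) u (N + 2) + (p * b.J S.P b.o (0, 0, 0) u (N + 1)
        + q * b.J S.P b.o (0, 0, 0) u N))
      + u.2.2 * (b.J S.P b.s (0, 0, 0) u (N + 2) + (p * b.J S.P b.s (0, 0, 0) u (N + 1)
        + q * b.J S.P b.s (0, 0, 0) u N)) := by
    intro u
    have e0 := b.diff S.P (0, 0, 0) u N
    have e1 := b.diff S.P (0, 0, 0) u (N + 1)
    have e2 := b.diff S.P (0, 0, 0) u (N + 2)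
    simp only [sub_zero] at e0 e1 e2
    rw [sub_eq_iff_eq_add] at e0 e1 e2
    unfold LW
    rw [e0, e1, e2]
    ring
  set wt := lw S X.t0 X.t1 X.t2 with hwt
  set wo := lw S X.o0 X.o1 X.o2 with hwo
  set ws := lw S X.s0 X.s1 X.s2 with hws
  set wc := lw S (lsub X.c0 S.fp) (lsub X.c1 S.fp) (lsub X.c2 S.fp) with hwc
  set R : ℕ := b.ht * labs wt + b.ho * labs wo with hR
  set G : ℤ := (b.hs : ℤ) * (ws.m - (ws.r : ℤ)) with hG
  have hup' : 0 < wc.m + lfd G 1099511627776 - ((Nat.div R 1099511627776 + 2 + wc.r : ℕ) : ℤ) :=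
    lpos_spec hup
  have hdn' : 0 < lfd G 1099511627776 -
      (wc.m + (((Nat.div R 1099511627776 + 2 + wc.r : ℕ) : ℤ) + (S.kap : ℤ))) := lpos_spec hdn
  have hupr : (0 : ℝ) < wc.m + lfd G 1099511627776
      - ((Nat.div R 1099511627776 : ℕ) + 2 + wc.r) := by exact_mod_cast hup'
  have hdnr : (0 : ℝ) < lfd G 1099511627776
      - (wc.m + (((Nat.div R 1099511627776 : ℕ) + 2 + wc.r) + S.kap)) := by exact_mod_cast hdn'
  have hRr := lndiv R 1099511627776 (by norm_num)
  have hRe : (R : ℝ) / (1099511627776 : ℕ) = b.ht * labs wt / 1099511627776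
      + b.ho * labs wo / 1099511627776 := by
    rw [hR]; push_cast; ring
  -- the gain is bounded by the true gain
  have hGr : ∀ x : ℝ, ws.mem x → (lfd G 1099511627776 : ℝ) ≤ b.hs * x + 1 := by
    intro x hx
    have h1 := lfd_spec G 1099511627776 (by norm_num)
    rw [abs_le] at h1
    have h2 : (G : ℝ) / (1099511627776 : ℕ) ≤ b.hs * x := by
      rw [hG]
      push_cast
      rw [div_le_iff₀ (by norm_num)]
      unfold LI.mem at hx
      rw [abs_le] at hx
      have : (ws.m : ℝ) - ws.r ≤ x * 1099511627776 := by linarith [hx.2]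
      calc _ ≤ (b.hs : ℝ) * (x * 1099511627776) := by gcongr
        _ = _ := by ring
    linarith [h1.1]
  have hbd : ∀ u, b.In u → ∃ x, ws.mem x ∧
      |LW p q fp (b.X S.P u) N * 1099511627776 - wc.m - u.2.2 * 1099511627776 * x|
        ≤ (Nat.div R 1099511627776 : ℕ) + 1 + wc.r := by
    intro u hu
    have z := b.In_zero
    have m1 := mw _ _ _ _ _ _ (hX.t0 _ u z hu) (hX.t1 _ u z hu) (hX.t2 _ u z hu)
    have m2 := mw _ _ _ _ _ _ (hX.o0 _ u z hu) (hX.o1 _ u z hu) (hX.o2 _ u z hu)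
    have m3 := mw _ _ _ _ _ _ (hX.s0 _ u z hu) (hX.s1 _ u z hu) (hX.s2 _ u z hu)
    refine ⟨_, m3, ?_⟩
    have a1 := lmul_le hu.1 m1
    have a2 := lmul_le hu.2.1 m2
    rw [hWd u]
    unfold LI.mem at mwc
    rw [abs_le] at mwc a1 a2 ⊢
    rw [hRe] at hRr
    constructor
    · linarith [mwc.1, a1.1, a2.1]
    · linarith [mwc.2, a1.2, a2.2]
  have hcone : ∀ u u' : ℝ × ℝ × ℝ, ∀ o s : ℝ, |o| < s → |u'.2.1 - u.2.1| ≤ u'.2.2 - u.2.2 →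
      u.2.2 < u'.2.2 → 0 < (u'.2.1 - u.2.1) * o + (u'.2.2 - u.2.2) * s := by
    intro u u' o s hos h1 h2
    have h3 : |(u'.2.1 - u.2.1) * o| ≤ (u'.2.2 - u.2.2) * |o| := by
      rw [abs_mul]
      exact mul_le_mul_of_nonneg_right h1 (abs_nonneg _)
    have h4 := neg_abs_le ((u'.2.1 - u.2.1) * o)
    have h5 : (u'.2.2 - u.2.2) * |o| < (u'.2.2 - u.2.2) * s :=
      mul_lt_mul_of_pos_left hos (by linarith)
    linarith
  refine ⟨?_, ?_, ?_, ?_⟩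
  · intro u hu
    have d1 := lsub_mem (hX.b1 u hu) hfp
    have d2 := lsub_mem (hX.b2 u hu) hfp
    have g := ldot1_mem d2 hph d1 lzero_mem lzero_mem
    have D := lsub_mem hq (ldot1_mem lzero_mem hph hph lzero_mem lzero_mem)
    have e := ldot1_mem lzero_mem d1 d1 lzero_mem lzero_mem
    have V := ldot1_mem lzero_mem g g D e
    have hV' := lpos_spec hV
    set VV := ldot 1099511627776 lzero 0 _ _ _ _
    have hV'' : 0 < (S.R2 : ℤ) - (VV.m + (VV.r : ℤ)) := hV'
    have hVr : (0 : ℝ) < (S.R2 : ℝ) - (VV.m + VV.r) := by exact_mod_cast hV''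
    unfold LI.mem at V
    rw [abs_le] at V
    rw [lt_div_iff₀ (by norm_num)]
    refine lt_of_eq_of_lt ?_ (lt_of_le_of_lt (sub_le_iff_le_add'.1 V.2) (by linarith))
    unfold LV
    ring
  · intro u hu hs
    obtain ⟨x, hx, h1⟩ := hbd u hu
    have h2 := hGr x hx
    rw [hs, abs_le] at h1
    by_contra hc
    push Not at hc
    linarith [h1.1]
  · intro u hu hs
    obtain ⟨x, hx, h1⟩ := hbd u hu
    have h2 := hGr x hx
    rw [hs, abs_le] at h1
    rw [← neg_div, lt_div_iff₀ (by norm_num)]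
    linarith [h1.2]
  · intro u u' hu hu' h1 ht h2
    have e0 := b.diff S.P u u' N
    have e1 := b.diff S.P u u' (N + 1)
    have e2 := b.diff S.P u u' (N + 2)
    rw [ht, sub_self, zero_mul, zero_add] at e0 e1 e2
    have k0 := hcone u u' _ _ (lconeOK_spec hc0 (hX.o0 u u' hu hu') (hX.s0 u u' hu hu')) h1 h2
    have k1 := hcone u u' _ _ (lconeOK_spec hc1 (hX.o1 u u' hu hu') (hX.s1 u u' hu hu')) h1 h2
    have k2 := hcone u u' _ _ (lconeOK_spec hc2 (hX.o2 u u' hu hu') (hX.s2 u u' hu hu')) h1 h2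
    exact ⟨by linarith, by linarith, by linarith⟩

/-! ### Dynamics near the fixed point -/

/-- constants attached to one of the two fixed points -/
structure LCon (P : LPrm) (fp p q mu k R kap s g : ℝ) : Prop where
  fix : (P.al : ℝ) + P.T1 * fp + P.T2 * fp + (P.a + P.b + P.c) * fp ^ 2 = 0
  hA : mu = (P.T1 + (2 * P.a + P.b) * fp) / 100 + p
  hB : mu * p = (P.T2 + (P.b + 2 * P.c) * fp) / 100 + q
  hq : mu * q = 1
  mu1 : 1 < mu
  q0 : 0 < q
  p0 : 0 ≤ p
  k0 : 0 ≤ k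
  disc : p ^ 2 < 4 * q
  Q0 : ∀ x y : ℝ, 0 ≤ P.a * x ^ 2 + P.b * x * y + P.c * y ^ 2
  Qk : ∀ x y : ℝ, (P.a * x ^ 2 + P.b * x * y + P.c * y ^ 2) / 100 ≤ k * (x ^ 2 + p * x * y + q * y ^ 2)
  R0 : 0 < R
  kap0 : 0 < kap
  s0 : 0 ≤ s
  sq : q ≤ s ^ 2
  kR : k * R ^ 2 ≤ (mu - 1) * kap
  sR : s * R + kap < R
  gx : ∀ x y : ℝ, x ^ 2 + p * x * y + q * y ^ 2 ≤ R ^ 2 → g ≤ fp + x ∧ g ≤ fp + y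
  gA : 0 ≤ P.T1 + (2 * P.a + P.b) * g
  gB : 0 ≤ P.T2 + (P.b + 2 * P.c) * g

def LTrap (p q fp R kap : ℝ) (X : ℕ → ℝ) (N : ℕ) : Prop :=
  ∀ n, N ≤ n → LV p q fp X n ≤ R ^ 2 ∧ -kap ≤ LW p q fp X n ∧ LW p q fp X n ≤ 0

section
variable {P : LPrm} {fp p q mu k R kap s g : ℝ}

noncomputable def LQ (P : LPrm) (fp : ℝ) (X : ℕ → ℝ) (n : ℕ) : ℝ :=
  (P.a * (X (n + 2) - fp) ^ 2 + P.b * (X (n + 2) - fp) * (X (n + 1) - fp)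
    + P.c * (X (n + 1) - fp) ^ 2) / 100

theorem LCon.W_succ (h : LCon P fp p q mu k R kap s g) {X : ℕ → ℝ} (hX : LRec P X) (n : ℕ) :
    LW p q fp X (n + 1) = mu * LW p q fp X n + LQ P fp X n := by
  have e := hX n
  have h1 := h.hA
  have h2 := h.hB
  have h3 := h.hq
  have h4 := h.fix
  unfold LW LQ
  rw [show n + 1 + 2 = n + 3 by ring, show n + 1 + 1 = n + 2 by ring, e]
  have : mu * (X (n + 2) - fp + p * (X (n + 1) - fp) + q * (X n - fp))
    = mu * (X (n + 2) - fp) + (mu * p) * (X (n + 1) - fp) + (mu * q) * (X n - fp) := by ring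
  rw [this, h2, h3]
  have h5 : mu * (X (n + 2) - fp) = ((P.T1 + (2 * P.a + P.b) * fp) / 100 + p) * (X (n + 2) - fp) := by
    rw [← h1]
  rw [h5]
  linear_combination (1 / 100) * h4

theorem LCon.Q_nonneg (h : LCon P fp p q mu k R kap s g) (X : ℕ → ℝ) (n : ℕ) : 0 ≤ LQ P fp X n := by
  have := h.Q0 (X (n + 2) - fp) (X (n + 1) - fp)
  unfold LQ
  positivity

theorem LCon.Q_le (h : LCon P fp p q mu k R kap s g) (X : ℕ → ℝ) (n : ℕ) :
    LQ P fp X n ≤ k * LV p q fp X n := h.Qk _ _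

theorem LCon.V_nonneg (h : LCon P fp p q mu k R kap s g) (X : ℕ → ℝ) (n : ℕ) :
    0 ≤ LV p q fp X n := by
  unfold LV
  have := h.disc
  nlinarith [sq_nonneg ((X (n + 2) - fp) + p / 2 * (X (n + 1) - fp)), sq_nonneg (X (n + 1) - fp),
    mul_nonneg (sub_nonneg.2 this.le) (sq_nonneg (X (n + 1) - fp))]

theorem LCon.V_succ (h : LCon P fp p q mu k R kap s g) (X : ℕ → ℝ) (n : ℕ) :
    √(LV p q fp X (n + 1)) ≤ s * √(LV p q fp X n) + |LW p q fp X (n + 1)| := by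
  have hs := h.s0
  apply Real.sqrt_le_iff.2
  refine ⟨by positivity, ?_⟩
  set x := X (n + 2) - fp
  set y := X (n + 1) - fp
  set w := LW p q fp X (n + 1) with hw
  set V := LV p q fp X n with hV
  have hV0 : 0 ≤ V := h.V_nonneg X n
  have hVe : V = x ^ 2 + p * x * y + q * y ^ 2 := rfl
  have hwe : w = (X (n + 3) - fp) + p * x + q * y := rfl
  have e : LV p q fp X (n + 1) = w ^ 2 - w * (p * x + 2 * q * y) + q * V := by
    have : LV p q fp X (n + 1) = (X (n + 3) - fp) ^ 2 + p * (X (n + 3) - fp) * x + q * x ^ 2 := rfl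
    rw [this, hwe, hVe]
    ring
  have hc : (p * x + 2 * q * y) ^ 2 ≤ (2 * (s * √V)) ^ 2 := by
    have h1 : (2 * (s * √V)) ^ 2 = 4 * s ^ 2 * V := by
      rw [mul_pow, mul_pow, Real.sq_sqrt hV0]; ring
    rw [h1]
    have h2 : 4 * q * V ≤ 4 * s ^ 2 * V := by
      have := mul_le_mul_of_nonneg_right h.sq hV0
      linarith
    refine le_trans ?_ h2
    rw [hVe]
    nlinarith [mul_nonneg (sub_nonneg.2 h.disc.le) (sq_nonneg x)]
  have hc' : |p * x + 2 * q * y| ≤ 2 * (s * √V) := abs_le_of_sq_le_sq hc (by positivity)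
  have h3 : -(w * (p * x + 2 * q * y)) ≤ |w| * (2 * (s * √V)) := by
    refine (neg_le_abs _).trans ?_
    rw [abs_mul]
    exact mul_le_mul_of_nonneg_left hc' (abs_nonneg _)
  have h4 : (s * √V + |w|) ^ 2 = s ^ 2 * V + 2 * (s * √V) * |w| + w ^ 2 := by
    have := Real.sq_sqrt hV0
    have h5 := sq_abs w
    calc _ = s ^ 2 * (√V) ^ 2 + 2 * (s * √V) * |w| + |w| ^ 2 := by ring
      _ = _ := by rw [this, h5]
  have h6 := mul_le_mul_of_nonneg_right h.sq hV0
  rw [e, h4]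
  linarith

theorem LCon.V_trap (h : LCon P fp p q mu k R kap s g) (X : ℕ → ℝ) (n : ℕ)
    (hV : LV p q fp X n < R ^ 2) (hw : |LW p q fp X (n + 1)| ≤ kap) :
    LV p q fp X (n + 1) < R ^ 2 := by
  have h1 := h.V_succ X n
  have hR := h.R0
  have h2 : √(LV p q fp X n) ≤ R := Real.sqrt_le_iff.2 ⟨hR.le, hV.le⟩
  have h3 : √(LV p q fp X (n + 1)) < R := by
    have := mul_le_mul_of_nonneg_left h2 h.s0
    linarith [h.sR]
  exact (Real.sqrt_lt' hR).1 h3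

theorem LCon.tendsto (h : LCon P fp p q mu k R kap s g) {X : ℕ → ℝ} (hX : LRec P X) {N : ℕ}
    (hT : LTrap p q fp R kap X N) : Tendsto X atTop (nhds fp) := by
  set E : ℕ → ℝ := fun n => √(LV p q fp X (N + n)) with hE
  set w : ℕ → ℝ := fun n => -LW p q fp X (N + n) with hw
  have hV0 := h.V_nonneg X
  have hR := h.R0
  have hE0 : ∀ n, 0 ≤ E n := fun n => Real.sqrt_nonneg _
  have hER : ∀ n, E n ≤ R := fun n =>
    Real.sqrt_le_iff.2 ⟨hR.le, (hT (N + n) (by omega)).1⟩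
  have hw0 : ∀ n, 0 ≤ w n := fun n => by have := (hT (N + n) (by omega)).2.2; simp only [hw]; linarith
  have hwk : ∀ n, w n ≤ kap := fun n => by
    have := (hT (N + n) (by omega)).2.1; simp only [hw]; linarith
  have hws : ∀ n, (mu - 1) * w n ≤ k * R * E n + w (n + 1) - w n := by
    intro n
    have h1 := h.W_succ hX (N + n)
    have h2 := h.Q_le X (N + n)
    have h3 : LV p q fp X (N + n) = E n * E n := (Real.mul_self_sqrt (hV0 _)).symm
    have h4 : k * LV p q fp X (N + n) ≤ k * R * E n := by
      rw [h3, mul_assoc]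
      exact mul_le_mul_of_nonneg_left (mul_le_mul_of_nonneg_right (hER n) (hE0 n)) h.k0
    have h5 : w (n + 1) = -LW p q fp X (N + n + 1) := rfl
    rw [h5, h1]
    simp only [hw]
    linarith
  have hEs : ∀ n, E (n + 1) ≤ s * E n + w (n + 1) := by
    intro n
    have h1 := h.V_succ X (N + n)
    have h2 : |LW p q fp X (N + n + 1)| = w (n + 1) := by
      rw [abs_of_nonpos (hT (N + n + 1) (by omega)).2.2]
      rfl
    rw [h2] at h1
    exact h1
  have hU : ∀ T, (mu - 1) * ∑ n ∈ Finset.range T, w n ≤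
      k * R * ∑ n ∈ Finset.range T, E n + w T - w 0 := by
    intro T
    induction T with
    | zero => simp
    | succ T ih =>
      rw [Finset.sum_range_succ, Finset.sum_range_succ]
      linarith [hws T]
  have hS : ∀ T, (1 - s) * ∑ n ∈ Finset.range T, E n + E T ≤
      E 0 + ∑ n ∈ Finset.range T, w n + w T - w 0 := by
    intro T
    induction T with
    | zero => simp
    | succ T ih =>
      rw [Finset.sum_range_succ, Finset.sum_range_succ]
      linarith [hEs T]
  have hmu : 0 < mu - 1 := by linarith [h.mu1]
  have hη : 0 < 1 - s - k * R / (mu - 1) := by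
    have h1 : k * R / (mu - 1) ≤ kap / R := by
      rw [div_le_div_iff₀ hmu hR]
      linarith [h.kR]
    have h2 : kap / R < 1 - s := by
      rw [div_lt_iff₀ hR]
      linarith [h.sR]
    linarith
  have hsum : Summable E := by
    apply summable_of_sum_range_le hE0 (c := (R + kap + kap / (mu - 1)) / (1 - s - k * R / (mu - 1)))
    intro T
    rw [le_div_iff₀ hη]
    have h1 : ∑ n ∈ Finset.range T, w n ≤ (k * R * ∑ n ∈ Finset.range T, E n + kap) / (mu - 1) := by
      rw [le_div_iff₀ hmu]
      linarith [hU T, hwk T, hw0 0]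
    have h2 : (k * R * ∑ n ∈ Finset.range T, E n + kap) / (mu - 1)
      = k * R / (mu - 1) * ∑ n ∈ Finset.range T, E n + kap / (mu - 1) := by ring
    rw [h2] at h1
    nlinarith [hS T, hER 0, hE0 T, hwk T, hw0 0]
  have hE1 : Tendsto E atTop (nhds 0) := hsum.tendsto_atTop_zero
  -- bound of the distance
  have hκ : 0 < 1 - p ^ 2 / (4 * q) := by
    have : p ^ 2 / (4 * q) < 1 := by
      rw [div_lt_one (by linarith [h.q0])]; exact h.disc
    linarith
  have hδ : ∀ n, (X (N + n + 2) - fp) ^ 2 ≤ (1 - p ^ 2 / (4 * q))⁻¹ * (E n * E n) := by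
    intro n
    have h3 : LV p q fp X (N + n) = E n * E n := (Real.mul_self_sqrt (hV0 _)).symm
    rw [← h3, inv_mul_eq_div, le_div_iff₀ hκ]
    unfold LV
    have hq := h.q0
    have : (X (N + n + 2) - fp) ^ 2 + p * (X (N + n + 2) - fp) * (X (N + n + 1) - fp)
      + q * (X (N + n + 1) - fp) ^ 2 - (X (N + n + 2) - fp) ^ 2 * (1 - p ^ 2 / (4 * q))
      = q * ((X (N + n + 1) - fp) + p / (2 * q) * (X (N + n + 2) - fp)) ^ 2 := by
      field_simp
      ring
    have h5 : 0 ≤ q * ((X (N + n + 1) - fp) + p / (2 * q) * (X (N + n + 2) - fp)) ^ 2 := by positivity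
    linarith
  have h6 : Tendsto (fun n => (X (N + n + 2) - fp) ^ 2) atTop (nhds 0) := by
    have h7 : Tendsto (fun n => (1 - p ^ 2 / (4 * q))⁻¹ * (E n * E n)) atTop (nhds 0) := by
      have := (hE1.mul hE1).const_mul ((1 - p ^ 2 / (4 * q))⁻¹)
      simpa using this
    exact squeeze_zero (fun n => sq_nonneg _) hδ h7
  have h8 : Tendsto (fun n => X (N + n + 2) - fp) atTop (nhds 0) := by
    have h9 := h6.sqrt
    simp only [Real.sqrt_sq_eq_abs, Real.sqrt_zero] at h9
    exact (tendsto_zero_iff_abs_tendsto_zero _).2 h9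
  have h10 : Tendsto (fun n => X (n + (N + 2))) atTop (nhds fp) := by
    have := h8.add_const fp
    simp only [sub_add_cancel, zero_add] at this
    refine this.congr (fun n => ?_)
    congr 1
    ring
  exact (tendsto_add_atTop_iff_nat (N + 2)).1 h10

/-- convergence together with the lower bounds needed for uniqueness -/
structure LGood (fp g : ℝ) (X : ℕ → ℝ) (N : ℕ) : Prop where
  lim : Tendsto X atTop (nhds fp)
  lb : ∀ n, N + 1 ≤ n → g ≤ X n

theorem LCon.lb_of_V (h : LCon P fp p q mu k R kap s g) {X : ℕ → ℝ} {n : ℕ}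
    (hV : LV p q fp X n ≤ R ^ 2) : g ≤ X (n + 2) ∧ g ≤ X (n + 1) := by
  have := h.gx (X (n + 2) - fp) (X (n + 1) - fp) hV
  simpa using this

theorem LCon.good (h : LCon P fp p q mu k R kap s g) {X : ℕ → ℝ} (hX : LRec P X) {N : ℕ}
    (hT : LTrap p q fp R kap X N) : LGood fp g X N := by
  refine ⟨h.tendsto hX hT, fun n hn => ?_⟩
  obtain ⟨m, rfl⟩ : ∃ m, n = m + 1 := ⟨n - 1, by omega⟩
  exact (h.lb_of_V (hT m (by omega)).1).2

theorem LCon.unique (h : LCon P fp p q mu k R kap s g) {X Y : ℕ → ℝ} (hX : LRec P X)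
    (hY : LRec P Y) {N : ℕ} (gX : LGood fp g X N) (gY : LGood fp g Y N)
    (h0 : X N < Y N) (h1 : X (N + 1) < Y (N + 1)) (h2 : X (N + 2) < Y (N + 2)) : False := by
  have hAB : ∀ n, N ≤ n → 0 ≤ lAm P X Y n ∧ 0 ≤ lBm P X Y n := by
    intro n hn
    have a1 := gX.lb (n + 1) (by omega)
    have a2 := gX.lb (n + 2) (by omega)
    have b1 := gY.lb (n + 1) (by omega)
    have b2 := gY.lb (n + 2) (by omega)
    have m1 : g ≤ (X (n + 1) + Y (n + 1)) / 2 := by linarith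
    have m2 : g ≤ (X (n + 2) + Y (n + 2)) / 2 := by linarith
    have ha : (0 : ℝ) ≤ P.a := Nat.cast_nonneg _
    have hb : (0 : ℝ) ≤ P.b := Nat.cast_nonneg _
    have hc : (0 : ℝ) ≤ P.c := Nat.cast_nonneg _
    unfold lAm lBm
    push_cast
    constructor
    · have := h.gA
      nlinarith [mul_le_mul_of_nonneg_left m2 ha, mul_le_mul_of_nonneg_left m1 hb]
    · have := h.gB
      nlinarith [mul_le_mul_of_nonneg_left m2 hb, mul_le_mul_of_nonneg_left m1 hc]
  have hpos : ∀ n, 0 < Y (N + n) - X (N + n) ∧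
      Y (N + n) - X (N + n) ≤ Y (N + n + 3) - X (N + n + 3) := by
    have hp : ∀ n, 0 < Y (N + n) - X (N + n) := by
      intro n
      induction n using lthree with
      | h0 => simpa using h0
      | h1 => simpa using h1
      | h2 => simpa using h2
      | h n i0 i1 i2 =>
        have e := hX.diff hY (N + n)
        obtain ⟨a, b⟩ := hAB (N + n) (by omega)
        have t1 := mul_nonneg i2.le a
        have t2 := mul_nonneg i1.le b
        rw [← add_assoc] at i1 i2 t1 t2 ⊢
        rw [e]
        linarith
    intro n
    refine ⟨hp n, ?_⟩
    have e := hX.diff hY (N + n)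
    obtain ⟨a, b⟩ := hAB (N + n) (by omega)
    have t1 := mul_nonneg (hp (n + 2)).le a
    have t2 := mul_nonneg (hp (n + 1)).le b
    rw [← add_assoc] at t1 t2
    rw [e]
    linarith
  have hj : ∀ j : ℕ, Y N - X N ≤ Y (N + 3 * j) - X (N + 3 * j) := by
    intro j
    induction j with
    | zero => simp
    | succ j ih =>
      have := (hpos (3 * j)).2
      rw [show N + 3 * (j + 1) = N + 3 * j + 3 by ring]
      linarith
  have hlim : Tendsto (fun j : ℕ => Y (N + 3 * j) - X (N + 3 * j)) atTop (nhds 0) := by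
    have h1 := gY.lim.sub gX.lim
    rw [sub_self] at h1
    refine h1.comp (tendsto_atTop_mono (fun j => ?_) tendsto_id)
    show j ≤ N + 3 * j
    omega
  have := ge_of_tendsto' hlim hj
  linarith

theorem LCon.ivt (h : LCon P fp p q mu k R kap s g) (X : ℝ → ℕ → ℝ) (hX : ∀ t, LRec P (X t))
    (hc : ∀ n, Continuous fun t => X t n) {N : ℕ} {α β : ℝ} (hαβ : α ≤ β)
    (hV : ∀ t ∈ Set.Icc α β, LV p q fp (X t) N < R ^ 2)
    (hdn : LW p q fp (X α) N < -kap) (hup : 0 < LW p q fp (X β) N) :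
    ∃ t ∈ Set.Icc α β, LTrap p q fp R kap (X t) N := by
  have cV : ∀ n, Continuous fun t => LV p q fp (X t) n := by
    intro n
    have c1 := hc (n + 1)
    have c2 := hc (n + 2)
    unfold LV
    fun_prop
  have cW : ∀ n, Continuous fun t => LW p q fp (X t) n := by
    intro n
    have c0 := hc n
    have c1 := hc (n + 1)
    have c2 := hc (n + 2)
    unfold LW
    fun_prop
  set G : ℕ → Set ℝ := fun n => {t | ∀ m ∈ Set.Ico N n, LV p q fp (X t) m < R ^ 2} with hG
  have oG : ∀ n, IsOpen (G n) := by
    intro n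
    have : G n = ⋂ m ∈ Set.Ico N n, {t | LV p q fp (X t) m < R ^ 2} := by
      ext t; simp [hG]
    rw [this]
    exact (Set.finite_Ico N n).isOpen_biInter (fun m _ => isOpen_lt (cV m) continuous_const)
  set Up : Set ℝ := ⋃ n ∈ Set.Ici N, (G n ∩ {t | 0 < LW p q fp (X t) n}) with hUp
  set Um : Set ℝ := ⋃ n ∈ Set.Ici N, (G n ∩ {t | LW p q fp (X t) n < -kap}) with hUm
  have oUp : IsOpen Up := isOpen_biUnion fun n _ =>
    (oG n).inter (isOpen_lt continuous_const (cW n))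
  have oUm : IsOpen Um := isOpen_biUnion fun n _ =>
    (oG n).inter (isOpen_lt (cW n) continuous_const)
  by_contra hcon
  push Not at hcon
  have hcov : Set.Icc α β ⊆ Up ∪ Um := by
    intro t ht
    by_contra hn
    rw [Set.mem_union, not_or] at hn
    obtain ⟨hn1, hn2⟩ := hn
    simp only [hUp, hUm, Set.mem_iUnion, not_exists, Set.mem_inter_iff, not_and, Set.mem_ofPred_eq,
      not_lt, Set.mem_Ici] at hn1 hn2
    have hW : ∀ n, N ≤ n → t ∈ G n → -kap ≤ LW p q fp (X t) n ∧ LW p q fp (X t) n ≤ 0 :=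
      fun n hn hg => ⟨hn2 n hn hg, hn1 n hn hg⟩
    have hall : ∀ j, ∀ m, N ≤ m → m ≤ N + j → LV p q fp (X t) m < R ^ 2 := by
      intro j
      induction j with
      | zero =>
        intro m h1 h2
        have : m = N := by omega
        rw [this]; exact hV t ht
      | succ j ih =>
        intro m h1 h2
        by_cases h3 : m ≤ N + j
        · exact ih m h1 h3
        · have h4 : m = N + j + 1 := by omega
          rw [h4]
          apply h.V_trap _ _ (ih (N + j) (by omega) le_rfl)
          have := hW (N + j + 1) (by omega) (fun m hm => ih m hm.1 (by have := hm.2; omega))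
          rw [abs_le]
          exact ⟨this.1, this.2.trans h.kap0.le⟩
    refine hcon t ht (fun n hn => ⟨(hall (n - N) n hn (by omega)).le, ?_⟩)
    exact hW n hn (fun m hm => hall (m - N) m hm.1 (by omega))
  have hne := isPreconnected_Icc Up Um oUp oUm hcov
    ⟨β, Set.right_mem_Icc.2 hαβ, by
      simp only [hUp, Set.mem_iUnion]
      exact ⟨N, Set.mem_Ici.2 le_rfl, fun m hm => absurd hm.2 (by have := hm.1; omega), hup⟩⟩
    ⟨α, Set.left_mem_Icc.2 hαβ, by
      simp only [hUm, Set.mem_iUnion]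
      exact ⟨N, Set.mem_Ici.2 le_rfl, fun m hm => absurd hm.2 (by have := hm.1; omega), hdn⟩⟩
  obtain ⟨t, -, h1, h2⟩ := hne
  simp only [hUp, hUm, Set.mem_iUnion, Set.mem_Ici] at h1 h2
  obtain ⟨n1, hn1, g1, w1⟩ := h1
  obtain ⟨n2, hn2, g2, w2⟩ := h2
  simp only [Set.mem_ofPred_eq] at w1 w2
  have hk0 := h.kap0
  have hmu := h.mu1
  rcases le_total n1 n2 with hle | hle
  · have : ∀ j, 0 < LW p q fp (X t) (n1 + j) := by
      intro j
      induction j with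
      | zero => exact w1
      | succ j ih =>
        rw [← add_assoc, h.W_succ (hX t)]
        have := h.Q_nonneg (X t) (n1 + j)
        have : 0 < mu * LW p q fp (X t) (n1 + j) := mul_pos (by linarith) ih
        linarith
    have := this (n2 - n1)
    rw [Nat.add_sub_cancel' hle] at this
    linarith
  · have : ∀ j, n2 + j ≤ n1 → LW p q fp (X t) (n2 + j) < -kap := by
      intro j
      induction j with
      | zero => intro _; exact w2
      | succ j ih =>
        intro hj
        rw [← add_assoc, h.W_succ (hX t)]
        have h3 := h.Q_le (X t) (n2 + j)
        have h4 := g1 (n2 + j) ⟨by omega, by omega⟩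
        have h5 := mul_le_mul_of_nonneg_left h4.le h.k0
        have h6 := ih (by omega)
        have h7 : mu * LW p q fp (X t) (n2 + j) < mu * (-kap) :=
          mul_lt_mul_of_pos_left h6 (by linarith)
        have := h.kR
        linarith
    have := this (n1 - n2) (by omega)
    rw [Nat.add_sub_cancel' hle] at this
    linarith

end

/-! ### The constants at the two fixed points -/

noncomputable def lfpF : ℝ := (3 / 10 + √(109 / 100)) / 2
noncomputable def lfpB : ℝ := (-(3 / 10) + √(109 / 100)) / 2

theorem lsqrt_bounds : (1.04403065089 : ℝ) < √(109 / 100) ∧ √(109 / 100) < (1.044030650893 : ℝ) := by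
  constructor
  · apply Real.lt_sqrt_of_sq_lt; norm_num
  · rw [Real.sqrt_lt' (by norm_num)]; norm_num

theorem lmu_exists (A B l u : ℝ) (hlu : l ≤ u) (hl : l ^ 3 - A * l ^ 2 - B * l - 1 ≤ 0)
    (hu : 0 ≤ u ^ 3 - A * u ^ 2 - B * u - 1) :
    ∃ m, l ≤ m ∧ m ≤ u ∧ m ^ 3 - A * m ^ 2 - B * m - 1 = 0 := by
  have hc : ContinuousOn (fun m : ℝ => m ^ 3 - A * m ^ 2 - B * m - 1) (Set.Icc l u) := by
    fun_prop
  obtain ⟨m, hm, h⟩ := intermediate_value_Icc hlu hc ⟨hl, hu⟩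
  exact ⟨m, hm.1, hm.2, h⟩

theorem lquad {α β γ : ℝ} (hα : 0 < α) (h : β ^ 2 ≤ 4 * α * γ) (x y : ℝ) :
    0 ≤ α * x ^ 2 + β * x * y + γ * y ^ 2 := by
  have h1 : 0 ≤ (2 * α * x + β * y) ^ 2 + (4 * α * γ - β ^ 2) * y ^ 2 :=
    add_nonneg (sq_nonneg _) (mul_nonneg (by linarith) (sq_nonneg _))
  have h2 : (2 * α * x + β * y) ^ 2 + (4 * α * γ - β ^ 2) * y ^ 2
    = 4 * α * (α * x ^ 2 + β * x * y + γ * y ^ 2) := by ring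
  rw [h2] at h1
  exact nonneg_of_mul_nonneg_right h1 (by linarith)

theorem lgx {p q R g fp : ℝ} (h1 : p ^ 2 ≤ 2 * q) (h2 : p ^ 2 ≤ 4 * (q - 1 / 4)) (hR : 0 ≤ R)
    (hg : g ≤ fp - 2 * R) (x y : ℝ) (hV : x ^ 2 + p * x * y + q * y ^ 2 ≤ R ^ 2) :
    g ≤ fp + x ∧ g ≤ fp + y := by
  have a1 := lquad (α := 1 / 2) (β := p) (γ := q) (by norm_num) (by linarith) x y
  have a2 := lquad (α := 1) (β := p) (γ := q - 1 / 4) (by norm_num) (by linarith) x y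
  have b1 : x ^ 2 ≤ (2 * R) ^ 2 := by nlinarith [sq_nonneg R]
  have b2 : y ^ 2 ≤ (2 * R) ^ 2 := by nlinarith [sq_nonneg R]
  have c1 := abs_le.1 (abs_le_of_sq_le_sq b1 (by linarith))
  have c2 := abs_le.1 (abs_le_of_sq_le_sq b2 (by linarith))
  constructor
  · linarith [c1.1]
  · linarith [c2.1]

theorem lconF : ∃ p q mu : ℝ, LCon sideF.P lfpF p q mu 0.7815 0.0755 0.01144 0.8482 0.28 ∧
    sideF.p.mem p ∧ sideF.ph.mem (p / 2) ∧ sideF.q.mem q := by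
  obtain ⟨s1, s2⟩ := lsqrt_bounds
  have hs := Real.sq_sqrt (show (0 : ℝ) ≤ 109 / 100 by norm_num)
  have f1 : (0.672015325445 : ℝ) < lfpF := by unfold lfpF; linarith
  have f2 : lfpF < (0.6720153254465 : ℝ) := by unfold lfpF; linarith
  have ff : 100 * lfpF ^ 2 - 30 * lfpF - 25 = 0 := by unfold lfpF; linarith
  obtain ⟨m, m1, m2, m3⟩ := lmu_exists ((-30 + 109 * lfpF) / 100) (91 * lfpF / 100)
    1.390010060905 1.390010061505 (by norm_num) (by norm_num; linarith) (by norm_num; linarith)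
  have mp : 0 < m := by linarith
  have q1 : (0.719419252920 : ℝ) ≤ 1 / m := by rw [le_div_iff₀ mp]; linarith
  have q2 : 1 / m ≤ (0.719419253235 : ℝ) := by rw [div_le_iff₀ mp]; linarith
  have hq : m * (1 / m) = 1 := by field_simp
  have hB : m * (m - (-30 + 109 * lfpF) / 100) = 91 * lfpF / 100 + 1 / m := by
    field_simp
    linarith
  generalize hqq : 1 / m = q at q1 q2 hq hB
  obtain ⟨p, hp⟩ : ∃ p, p = m - (-30 + 109 * lfpF) / 100 := ⟨_, rfl⟩
  rw [← hp] at hB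
  have p1 : (0.9575133561 : ℝ) ≤ p := by linarith
  have p2 : p ≤ (0.9575133569 : ℝ) := by linarith
  have pp : p ^ 2 ≤ 0.9575133569 ^ 2 := by gcongr
  refine ⟨p, q, m, ?_, ?_, ?_, ?_⟩
  · constructor
    · simp [sideF]; linarith
    · simp [sideF]; linarith
    · simp [sideF]; linarith
    · exact hq
    · linarith
    · linarith
    · linarith
    · norm_num
    · linarith
    · intro x y
      have := lquad (α := 44) (β := 21) (γ := 35) (by norm_num) (by norm_num) x y
      simpa [sideF] using this
    · intro x y
      have := lquad (α := 0.7815 - 0.44) (β := 0.7815 * p - 0.21) (γ := 0.7815 * q - 0.35)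
        (by norm_num) (by
          have : (0.7815 * p - 0.21) ^ 2 ≤ (0.7815 * 0.9575133569 - 0.21) ^ 2 := by
            apply pow_le_pow_left₀ <;> linarith
          linarith) x y
      simp only [sideF]
      push_cast
      linarith
    · norm_num
    · norm_num
    · norm_num
    · linarith
    · linarith
    · norm_num
    · exact lgx (by linarith) (by linarith) (by norm_num) (by linarith)
    · simp [sideF]; norm_num
    · simp [sideF]; norm_num
  · simp only [LI.mem, sideF, abs_le]; push_cast; constructor <;> linarith
  · simp only [LI.mem, sideF, abs_le]; push_cast; constructor <;> linarith
  · simp only [LI.mem, sideF, abs_le]; push_cast; constructor <;> linarith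

theorem lfpF_mem : sideF.fp.mem lfpF := by
  obtain ⟨s1, s2⟩ := lsqrt_bounds
  simp only [LI.mem, sideF, abs_le, lfpF]; push_cast; constructor <;> linarith

theorem lconB : ∃ p q mu : ℝ, LCon sideB.P lfpB p q mu 0.9544 0.0584 0.00863 0.85201 0 ∧
    sideB.p.mem p ∧ sideB.ph.mem (p / 2) ∧ sideB.q.mem q := by
  obtain ⟨s1, s2⟩ := lsqrt_bounds
  have hs := Real.sq_sqrt (show (0 : ℝ) ≤ 109 / 100 by norm_num)
  have f1 : (0.372015325445 : ℝ) < lfpB := by unfold lfpB; linarith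
  have f2 : lfpB < (0.3720153254465 : ℝ) := by unfold lfpB; linarith
  have ff : 100 * lfpB ^ 2 + 30 * lfpB - 25 = 0 := by unfold lfpB; linarith
  obtain ⟨m, m1, m2, m3⟩ := lmu_exists (91 * lfpB / 100) ((30 + 109 * lfpB) / 100)
    1.377593009977 1.377593010577 (by norm_num) (by norm_num; linarith) (by norm_num; linarith)
  have mp : 0 < m := by linarith
  have q1 : (0.725903799100 : ℝ) ≤ 1 / m := by rw [le_div_iff₀ mp]; linarith
  have q2 : 1 / m ≤ (0.725903799430 : ℝ) := by rw [div_le_iff₀ mp]; linarith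
  have hq : m * (1 / m) = 1 := by field_simp
  have hB : m * (m - 91 * lfpB / 100) = (30 + 109 * lfpB) / 100 + 1 / m := by
    field_simp
    linarith
  generalize hqq : 1 / m = q at q1 q2 hq hB
  obtain ⟨p, hp⟩ : ∃ p, p = m - 91 * lfpB / 100 := ⟨_, rfl⟩
  rw [← hp] at hB
  have p1 : (1.0390590637 : ℝ) ≤ p := by linarith
  have p2 : p ≤ (1.0390590645 : ℝ) := by linarith
  have pp : p ^ 2 ≤ 1.0390590645 ^ 2 := by gcongr
  refine ⟨p, q, m, ?_, ?_, ?_, ?_⟩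
  · constructor
    · simp [sideB]; linarith
    · simp [sideB]; linarith
    · simp [sideB]; linarith
    · exact hq
    · linarith
    · linarith
    · linarith
    · norm_num
    · linarith
    · intro x y
      have := lquad (α := 35) (β := 21) (γ := 44) (by norm_num) (by norm_num) x y
      simpa [sideB] using this
    · intro x y
      have := lquad (α := 0.9544 - 0.35) (β := 0.9544 * p - 0.21) (γ := 0.9544 * q - 0.44)
        (by norm_num) (by
          have : (0.9544 * p - 0.21) ^ 2 ≤ (0.9544 * 1.0390590645 - 0.21) ^ 2 := by
            apply pow_le_pow_left₀ <;> linarith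
          linarith) x y
      simp only [sideB]
      push_cast
      linarith
    · norm_num
    · norm_num
    · norm_num
    · linarith
    · linarith
    · norm_num
    · exact lgx (by linarith) (by linarith) (by norm_num) (by linarith)
    · simp [sideB]
    · simp [sideB]
  · simp only [LI.mem, sideB, abs_le]; push_cast; constructor <;> linarith
  · simp only [LI.mem, sideB, abs_le]; push_cast; constructor <;> linarith
  · simp only [LI.mem, sideB, abs_le]; push_cast; constructor <;> linarith

theorem lfpB_mem : sideB.fp.mem lfpB := by
  obtain ⟨s1, s2⟩ := lsqrt_bounds
  simp only [LI.mem, sideB, abs_le, lfpB]; push_cast; constructor <;> linarith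

/-! ### Pieces of the curve -/

noncomputable def lpF : ℝ := lconF.choose
noncomputable def lqF : ℝ := lconF.choose_spec.choose
noncomputable def lmF : ℝ := lconF.choose_spec.choose_spec.choose
theorem lconF' : LCon sideF.P lfpF lpF lqF lmF 0.7815 0.0755 0.01144 0.8482 0.28 ∧
    sideF.p.mem lpF ∧ sideF.ph.mem (lpF / 2) ∧ sideF.q.mem lqF :=
  lconF.choose_spec.choose_spec.choose_spec

noncomputable def lpB : ℝ := lconB.choose
noncomputable def lqB : ℝ := lconB.choose_spec.choose
noncomputable def lmB : ℝ := lconB.choose_spec.choose_spec.choose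
theorem lconB' : LCon sideB.P lfpB lpB lqB lmB 0.9544 0.0584 0.00863 0.85201 0 ∧
    sideB.p.mem lpB ∧ sideB.ph.mem (lpB / 2) ∧ sideB.q.mem lqB :=
  lconB.choose_spec.choose_spec.choose_spec

noncomputable def Fq (v : ℝ × ℝ × ℝ) : ℕ → ℝ := lsq sideF.P v.1 v.2.1 v.2.2
noncomputable def Gq (v : ℝ × ℝ × ℝ) : ℕ → ℝ := lsq sideB.P (-v.2.2) (-v.2.1) (-v.1)

theorem Fq_rec (v) : LRec sideF.P (Fq v) := lsq_rec _ _ _ _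
theorem Gq_rec (v) : LRec sideB.P (Gq v) := lsq_rec _ _ _ _

def TrapF (v : ℝ × ℝ × ℝ) (N : ℕ) : Prop := LTrap lpF lqF lfpF 0.0755 0.01144 (Fq v) N
def TrapB (v : ℝ × ℝ × ℝ) (N : ℕ) : Prop := LTrap lpB lqB lfpB 0.0584 0.00863 (Gq v) N
def GoodF (v : ℝ × ℝ × ℝ) (N : ℕ) : Prop := LGood lfpF 0.28 (Fq v) N
def GoodB (v : ℝ × ℝ × ℝ) (N : ℕ) : Prop := LGood lfpB 0 (Gq v) N

theorem TrapF.good {v N} (h : TrapF v N) : GoodF v N := lconF'.1.good (Fq_rec v) h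
theorem TrapB.good {v N} (h : TrapB v N) : GoodB v N := lconB'.1.good (Gq_rec v) h

structure LDat where
  ht : ℕ
  ry : ℕ
  rz : ℕ
  c0 : ℤ
  c1 : ℤ
  c2 : ℤ
  d0 : ℤ
  d1 : ℤ
  d2 : ℤ

def LDat.F (D : LDat) : LBx where
  ht := D.ht
  ho := D.ry
  hs := D.rz
  c := ![D.c0, D.c1, D.c2]
  t := ![D.d0, D.d1, D.d2]
  o := ![0, -1099511627776, -219902325555]
  s := ![0, 1429365116109, -1099511627776]

def LDat.B (D : LDat) : LBx where
  ht := D.ht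
  ho := D.rz
  hs := D.ry
  c := ![-D.c2, -D.c1, -D.c0]
  t := ![-D.d2, -D.d1, -D.d0]
  o := ![1099511627776, -1429365116109, 0]
  s := ![219902325555, 1099511627776, 0]

noncomputable def LDat.E (D : LDat) (u : ℝ × ℝ × ℝ) : ℝ × ℝ × ℝ :=
  (D.F.pt u 0, D.F.pt u 1, D.F.pt u 2)

theorem LDat.E_eq (D : LDat) (u : ℝ × ℝ × ℝ) : D.E u =
    ((D.c0 + u.1 * D.d0) / 1099511627776,
     (D.c1 + u.1 * D.d1) / 1099511627776 - u.2.1 + u.2.2 * (1429365116109 / 1099511627776),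
     (D.c2 + u.1 * D.d2) / 1099511627776 - u.2.1 * (219902325555 / 1099511627776) - u.2.2) := by
  simp only [LDat.E, LBx.pt, LDat.F]
  refine Prod.ext ?_ (Prod.ext ?_ ?_) <;> simp <;> ring

theorem LDat.XF (D : LDat) (u) : D.F.X sideF.P u = Fq (D.E u) := rfl

theorem LDat.XB (D : LDat) (τ y z : ℝ) : D.B.X sideB.P (τ, z, y) = Gq (D.E (τ, y, z)) := by
  unfold LBx.X Gq
  rw [D.E_eq]
  congr 1 <;> simp [LBx.pt, LDat.B] <;> ring

structure LDat.OK (D : LDat) (NF NB : ℕ) : Prop where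
  F : LCert D.F sideF.P NF lpF lqF lfpF (0.0755 ^ 2) 0.01144
  B : LCert D.B sideB.P NB lpB lqB lfpB (0.0584 ^ 2) 0.00863

theorem LCert.mono {b P N p q fp R R' k k'} (h : LCert b P N p q fp R k) (hR : R ≤ R') (hk : k' ≤ k) :
    LCert b P N p q fp R' k' :=
  ⟨fun u hu => (h.V u hu).trans_le hR, h.up, fun u hu e => by linarith [h.dn u hu e], h.cone⟩

theorem lchk_OK {D : LDat} {NF NB : ℕ}
    (h : lchk NF NB D.ht D.ry D.rz D.c0 D.c1 D.c2 D.d0 D.d1 D.d2 = true) : D.OK NF NB := by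
  unfold lchk at h
  rw [Bool.and_eq_true] at h
  obtain ⟨h1, h2⟩ := h
  constructor
  · have := lfinal_sound (D.F.run_inv sideF.P NF) lconF'.2.1 lconF'.2.2.1 lconF'.2.2.2 lfpF_mem h1
    exact this.mono (by norm_num [sideF]) (by norm_num [sideF])
  · have := lfinal_sound (D.B.run_inv sideB.P NB) lconB'.2.1 lconB'.2.2.1 lconB'.2.2.2 lfpB_mem h2
    exact this.mono (by norm_num [sideB]) (by norm_num [sideB])

/-- two good orbits cannot differ in a cone around the expanding direction -/
theorem lcontra {b : LBx} {P N p q fp mu k R kap s g R2 k2} (h : LCon P fp p q mu k R kap s g)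
    (hC : LCert b P N p q fp R2 k2) {u u'} (hu : b.In u) (hu' : b.In u')
    (gu : LGood fp g (b.X P u) N) (gu' : LGood fp g (b.X P u') N) (h1 : u'.1 = u.1)
    (h2 : |u'.2.1 - u.2.1| ≤ |u'.2.2 - u.2.2|) : u'.2.2 = u.2.2 := by
  rcases lt_trichotomy u.2.2 u'.2.2 with hl | he | hl
  · exfalso
    rw [abs_of_pos (show 0 < u'.2.2 - u.2.2 by linarith)] at h2
    obtain ⟨a, b, c⟩ := hC.cone u u' hu hu' h2 h1 hl
    exact h.unique (lsq_rec _ _ _ _) (lsq_rec _ _ _ _) gu gu' a b c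
  · exact he.symm
  · exfalso
    rw [abs_sub_comm, abs_sub_comm u'.2.2, abs_of_pos (show 0 < u.2.2 - u'.2.2 by linarith)] at h2
    obtain ⟨a, b, c⟩ := hC.cone u' u hu' hu h2 h1.symm hl
    exact h.unique (lsq_rec _ _ _ _) (lsq_rec _ _ _ _) gu' gu a b c

theorem LBx.In.InB {D : LDat} {τ y z : ℝ} (h : D.F.In (τ, y, z)) : D.B.In (τ, z, y) :=
  ⟨h.1, h.2.2, h.2.1⟩

theorem LDat.OK.uniq {D : LDat} {NF NB} (h : D.OK NF NB) {τ y z y' z' : ℝ}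
    (hu : D.F.In (τ, y, z)) (hu' : D.F.In (τ, y', z'))
    (f : GoodF (D.E (τ, y, z)) NF) (f' : GoodF (D.E (τ, y', z')) NF)
    (g : GoodB (D.E (τ, y, z)) NB) (g' : GoodB (D.E (τ, y', z')) NB) : y' = y ∧ z' = z := by
  have k1 := lcontra (u := (τ, y, z)) (u' := (τ, y', z')) lconF'.1 h.F hu hu' f f' rfl
  have k2 := lcontra (u := (τ, z, y)) (u' := (τ, z', y')) lconB'.1 h.B hu.InB hu'.InB
    (by rw [D.XB]; exact g) (by rw [D.XB]; exact g') rfl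
  dsimp only at k1 k2
  rcases le_total |y' - y| |z' - z| with hl | hl
  · have := k1 hl
    subst this
    simp at hl
    exact ⟨by linarith, rfl⟩
  · have := k2 hl
    subst this
    simp at hl
    exact ⟨rfl, by linarith⟩

theorem lsq_cont (P : LPrm) {T : Type*} [TopologicalSpace T] {a b c : T → ℝ} (ha : Continuous a)
    (hb : Continuous b) (hc : Continuous c) (n : ℕ) :
    Continuous fun t => lsq P (a t) (b t) (c t) n := by
  induction n using lthree with
  | h0 => exact ha
  | h1 => exact hb
  | h2 => exact hc
  | h n i0 i1 i2 =>
    simp only [lsq]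
    fun_prop

theorem Fq_cont (n : ℕ) : Continuous fun v => Fq v n := by
  apply lsq_cont <;> fun_prop
theorem Gq_cont (n : ℕ) : Continuous fun v => Gq v n := by
  apply lsq_cont <;> fun_prop

theorem LDat.E_cont (D : LDat) : Continuous D.E := by
  have : D.E = _ := funext D.E_eq
  rw [this]
  fun_prop

theorem LDat.OK.exists_slice {D : LDat} {NF NB} (h : D.OK NF NB) {τ : ℝ}
    (hτ : |τ| * 1099511627776 ≤ D.ht) :
    ∃ y z, D.F.In (τ, y, z) ∧ TrapF (D.E (τ, y, z)) NF ∧ TrapB (D.E (τ, y, z)) NB := by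
  set ry : ℝ := D.ry / 1099511627776 with hry
  set rz : ℝ := D.rz / 1099511627776 with hrz
  have ry0 : 0 ≤ ry := by positivity
  have rz0 : 0 ≤ rz := by positivity
  have mry : ry * 1099511627776 = D.ry := by rw [hry]; field_simp
  have mrz : rz * 1099511627776 = D.rz := by rw [hrz]; field_simp
  have hIn : ∀ y z, y ∈ Set.Icc (-ry) ry → z ∈ Set.Icc (-rz) rz → D.F.In (τ, y, z) := by
    intro y z hy hz
    refine ⟨hτ, ?_, ?_⟩
    · have := abs_le.2 hy
      show |y| * _ ≤ (D.ry : ℝ)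
      rw [← mry]; gcongr
    · have := abs_le.2 hz
      show |z| * _ ≤ (D.rz : ℝ)
      rw [← mrz]; gcongr
  -- backward direction in `y`, for each `z`
  have hY : ∀ z ∈ Set.Icc (-rz) rz, ∃ y ∈ Set.Icc (-ry) ry, TrapB (D.E (τ, y, z)) NB := by
    intro z hz
    refine lconB'.1.ivt (fun y => Gq (D.E (τ, y, z))) (fun y => Gq_rec _) (fun n => ?_)
      (by linarith) (fun y hy => ?_) ?_ ?_
    · exact (Gq_cont n).comp (D.E_cont.comp (by fun_prop))
    · rw [← D.XB]
      exact h.B.V _ (hIn y z hy hz).InB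
    · rw [← D.XB]
      refine h.B.dn _ (hIn _ z ⟨le_rfl, by linarith⟩ hz).InB ?_
      show -ry * _ = -(D.ry : ℝ)
      rw [← mry]; ring
    · rw [← D.XB]
      exact h.B.up _ (hIn _ z ⟨by linarith, le_rfl⟩ hz).InB mry
  choose! Y hY1 hY2 using hY
  have hlip : ∀ z ∈ Set.Icc (-rz) rz, ∀ z' ∈ Set.Icc (-rz) rz, |Y z' - Y z| ≤ |z' - z| := by
    intro z hz z' hz'
    by_contra hcon
    push Not at hcon
    have := lcontra (u := (τ, z, Y z)) (u' := (τ, z', Y z')) lconB'.1 h.B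
      (hIn _ _ (hY1 z hz) hz).InB (hIn _ _ (hY1 z' hz') hz').InB
      (by rw [D.XB]; exact (hY2 z hz).good) (by rw [D.XB]; exact (hY2 z' hz').good) rfl hcon.le
    dsimp only at this
    rw [this] at hcon
    simp at hcon
    linarith [abs_nonneg (z' - z)]
  have hYc : ContinuousOn Y (Set.Icc (-rz) rz) := by
    rw [Metric.continuousOn_iff]
    intro z hz ε hε
    refine ⟨ε, hε, fun z' hz' hd => ?_⟩
    rw [Real.dist_eq] at *
    exact (hlip z hz z' hz').trans_lt hd
  set cl : ℝ → ℝ := fun z => max (-rz) (min rz z) with hcl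
  have hclm : ∀ z, cl z ∈ Set.Icc (-rz) rz := fun z =>
    ⟨le_max_left _ _, max_le (by linarith) (min_le_left _ _)⟩
  have hcle : ∀ z ∈ Set.Icc (-rz) rz, cl z = z := fun z hz => by
    simp only [hcl, min_eq_right hz.2, max_eq_right hz.1]
  have hclc : Continuous cl := by fun_prop
  have hYcl : Continuous fun z => Y (cl z) := hYc.comp_continuous hclc hclm
  obtain ⟨z, hz, hT⟩ := lconF'.1.ivt (N := NF) (α := -rz) (β := rz)
      (fun z => Fq (D.E (τ, Y (cl z), cl z))) (fun y => Fq_rec _) (fun n => by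
        exact (Fq_cont n).comp (D.E_cont.comp (continuous_const.prodMk (hYcl.prodMk hclc))))
      (by linarith) (fun z hz => by
        rw [← D.XF]
        exact h.F.V _ (hIn _ _ (hY1 _ (hclm z)) (hclm z)))
      (by
        rw [← D.XF]
        refine h.F.dn _ (hIn _ _ (hY1 _ (hclm _)) (hclm _)) ?_
        rw [hcle _ ⟨le_rfl, by linarith⟩]
        show -rz * _ = -(D.rz : ℝ)
        rw [← mrz]; ring)
      (by
        rw [← D.XF]
        refine h.F.up _ (hIn _ _ (hY1 _ (hclm _)) (hclm _)) ?_
        rw [hcle _ ⟨by linarith, le_rfl⟩]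
        exact mrz)
  exact ⟨Y (cl z), cl z, hIn _ _ (hY1 _ (hclm z)) (hclm z), hT, hY2 _ (hclm z)⟩

theorem LTrap.closed {p q fp R kap : ℝ} {N : ℕ} {T : Type*} [TopologicalSpace T] {X : T → ℕ → ℝ}
    (hc : ∀ n, Continuous fun t => X t n) : IsClosed {t | LTrap p q fp R kap (X t) N} := by
  have e : {t | LTrap p q fp R kap (X t) N} = ⋂ n, ⋂ (_ : N ≤ n),
      ({t | LV p q fp (X t) n ≤ R ^ 2} ∩ ({t | -kap ≤ LW p q fp (X t) n} ∩
        {t | LW p q fp (X t) n ≤ 0})) := by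
    ext t; simp [LTrap]
  rw [e]
  have cV : ∀ n, Continuous fun t => LV p q fp (X t) n := by
    intro n
    have c1 := hc (n + 1)
    have c2 := hc (n + 2)
    unfold LV
    fun_prop
  have cW : ∀ n, Continuous fun t => LW p q fp (X t) n := by
    intro n
    have c0 := hc n
    have c1 := hc (n + 1)
    have c2 := hc (n + 2)
    unfold LW
    fun_prop
  exact isClosed_iInter fun n => isClosed_iInter fun _ =>
    (isClosed_le (cV n) continuous_const).inter
      ((isClosed_le continuous_const (cW n)).inter (isClosed_le (cW n) continuous_const))

theorem LBx.In_compact (b : LBx) : IsCompact {u | b.In u} := by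
  have : {u | b.In u} = Set.Icc (-(b.ht / 1099511627776) : ℝ) (b.ht / 1099511627776) ×ˢ
      (Set.Icc (-(b.ho / 1099511627776) : ℝ) (b.ho / 1099511627776) ×ˢ
        Set.Icc (-(b.hs / 1099511627776) : ℝ) (b.hs / 1099511627776)) := by
    ext u
    simp only [Set.mem_ofPred_eq, Set.mem_prod, LBx.In]
    simp only [Set.mem_Icc, ← abs_le]
    simp only [le_div_iff₀ (show (0 : ℝ) < 1099511627776 by norm_num)]
  rw [this]
  exact isCompact_Icc.prod (isCompact_Icc.prod isCompact_Icc)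

def LGd (v : ℝ × ℝ × ℝ) : Prop := GoodF v 23 ∧ GoodB v 21

/-- a continuous curve of good points, which contains all good points of the region `I` -/
structure LCurve (I : ℝ × ℝ × ℝ → Prop) (a b : ℝ) (γ : ℝ → ℝ × ℝ × ℝ) : Prop where
  ab : a ≤ b
  cont : Continuous γ
  fst : ∀ t ∈ Set.Icc a b, (γ t).1 = t
  good : ∀ t ∈ Set.Icc a b, LGd (γ t)
  mem : ∀ t ∈ Set.Icc a b, I (γ t)
  dom : ∀ v, I v → v.1 ∈ Set.Icc a b
  uniq : ∀ v, I v → LGd v → γ v.1 = v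

def LDat.Reg (D : LDat) (v : ℝ × ℝ × ℝ) : Prop := ∃ u, D.F.In u ∧ v = D.E u

theorem LDat.OK.curve {D : LDat} (h : D.OK 23 21) (hd : 0 < D.d0) (hh : D.ht = 549755813888) :
    ∃ γ, LCurve D.Reg ((2 * D.c0 - D.d0) / 2199023255552) ((2 * D.c0 + D.d0) / 2199023255552) γ := by
  have hd' : (0 : ℝ) < D.d0 := by exact_mod_cast hd
  have hτ : ∀ τ : ℝ, |τ| * 1099511627776 ≤ (D.ht : ℝ) ↔ τ ∈ Set.Icc (-(1 / 2)) (1 / 2 : ℝ) := by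
    intro τ
    rw [hh, Set.mem_Icc, ← abs_le]
    push_cast
    constructor <;> intro h <;> linarith
  have hex : ∀ τ ∈ Set.Icc (-(1 / 2)) (1 / 2 : ℝ), ∃ w : ℝ × ℝ, D.F.In (τ, w.1, w.2) ∧
      TrapF (D.E (τ, w.1, w.2)) 23 ∧ TrapB (D.E (τ, w.1, w.2)) 21 := by
    intro τ h1
    obtain ⟨y, z, h⟩ := h.exists_slice ((hτ τ).2 h1)
    exact ⟨(y, z), h⟩
  choose! w hw1 hw2 hw3 using hex
  have hc : ContinuousOn (fun τ => ((τ, (w τ).1, (w τ).2) : ℝ × ℝ × ℝ))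
      (Set.Icc (-(1 / 2)) (1 / 2 : ℝ)) := by
    intro τ0 h0
    unfold ContinuousWithinAt
    have hS : IsClosed {u : ℝ × ℝ × ℝ | D.F.In u ∧ TrapF (D.E u) 23 ∧ TrapB (D.E u) 21} := by
      refine D.F.In_compact.isClosed.inter (IsClosed.inter ?_ ?_)
      · exact LTrap.closed fun n => (Fq_cont n).comp D.E_cont
      · exact LTrap.closed fun n => (Gq_cont n).comp D.E_cont
    refine D.F.In_compact.tendsto_nhds_of_unique_mapClusterPt ?_ ?_
    · filter_upwards [self_mem_nhdsWithin] with τ hτ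
      exact hw1 τ hτ
    · intro u hu hcl
      have m : u ∈ {u : ℝ × ℝ × ℝ | D.F.In u ∧ TrapF (D.E u) 23 ∧ TrapB (D.E u) 21} := by
        refine hS.mem_of_mapClusterPt hcl ?_
        filter_upwards [self_mem_nhdsWithin] with τ hτ
        exact ⟨hw1 τ hτ, hw2 τ hτ, hw3 τ hτ⟩
      have e : u.1 = τ0 := by
        have c1 : MapClusterPt u.1 (nhdsWithin τ0 (Set.Icc (-(1 / 2)) (1 / 2 : ℝ))) (fun τ => τ) :=
          hcl.continuousAt_comp continuous_fst.continuousAt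
        have c2 : ClusterPt u.1 (nhdsWithin τ0 (Set.Icc (-(1 / 2)) (1 / 2 : ℝ))) := by
          simpa [MapClusterPt] using c1
        have c3 : ClusterPt u.1 (nhds τ0) := c2.mono nhdsWithin_le_nhds
        exact eq_of_nhds_neBot c3
      obtain ⟨τ, y, z⟩ := u
      dsimp only at e
      subst e
      obtain ⟨e1, e2⟩ := h.uniq (hw1 _ h0) m.1 (hw2 _ h0).good m.2.1.good (hw3 _ h0).good m.2.2.good
      rw [e1, e2]
  set cl : ℝ → ℝ := fun τ => max (-(1 / 2)) (min (1 / 2) τ) with hcl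
  have hclm : ∀ z, cl z ∈ Set.Icc (-(1 / 2)) (1 / 2 : ℝ) := fun z =>
    ⟨le_max_left _ _, max_le (by norm_num) (min_le_left _ _)⟩
  have hcle : ∀ z ∈ Set.Icc (-(1 / 2)) (1 / 2 : ℝ), cl z = z := fun z hz => by
    simp only [hcl, min_eq_right hz.2, max_eq_right hz.1]
  have hclc : Continuous cl := by fun_prop
  set σ : ℝ → ℝ := fun t => (t * 1099511627776 - D.c0) / D.d0 with hσ
  have hσc : Continuous σ := by fun_prop
  have hσm : ∀ t ∈ Set.Icc ((2 * D.c0 - D.d0) / 2199023255552 : ℝ)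
      ((2 * D.c0 + D.d0) / 2199023255552), σ t ∈ Set.Icc (-(1 / 2)) (1 / 2 : ℝ) := by
    intro t ht
    have h1 := (div_le_iff₀ (by norm_num)).1 ht.1
    have h2 := (le_div_iff₀ (by norm_num)).1 ht.2
    constructor
    · rw [hσ, le_div_iff₀ hd']; linarith
    · rw [hσ, div_le_iff₀ hd']; linarith
  have hσE : ∀ u, σ (D.E u).1 = u.1 := by
    intro u
    rw [D.E_eq, hσ]
    field_simp
    ring
  have hEσ : ∀ t y z, (D.E (σ t, y, z)).1 = t := by
    intro t y z
    rw [D.E_eq, hσ]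
    field_simp
    ring
  refine ⟨fun t => D.E (cl (σ t), w (cl (σ t))), ?_, ?_, ?_, ?_, ?_, ?_, ?_⟩
  · apply div_le_div_of_nonneg_right _ (by norm_num); linarith
  · exact D.E_cont.comp (hc.comp_continuous (hclc.comp hσc) (fun t => hclm _))
  · intro t ht
    rw [hcle _ (hσm t ht)]
    exact hEσ _ _ _
  · intro t ht
    exact ⟨(hw2 _ (hclm _)).good, (hw3 _ (hclm _)).good⟩
  · intro t ht
    exact ⟨_, hw1 _ (hclm _), rfl⟩
  · rintro _ ⟨u, hu, rfl⟩
    have := (hτ _).1 hu.1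
    rw [D.E_eq]
    have a1 := mul_le_mul_of_nonneg_right this.1 hd'.le
    have a2 := mul_le_mul_of_nonneg_right this.2 hd'.le
    constructor
    · dsimp only
      rw [div_le_div_iff₀ (by norm_num) (by norm_num)]; linarith
    · dsimp only
      rw [div_le_div_iff₀ (by norm_num) (by norm_num)]; linarith
  · rintro _ ⟨⟨τ, y, z⟩, hu, rfl⟩ hg
    have hm := (hτ _).1 hu.1
    dsimp only at hm
    rw [hσE]
    dsimp only
    rw [hcle _ hm]
    obtain ⟨e1, e2⟩ := h.uniq hu (hw1 _ hm) hg.1 (hw2 _ hm).good hg.2 (hw3 _ hm).good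
    congr 2
    exact Prod.ext e1 e2

theorem LCurve.glue {I J : ℝ × ℝ × ℝ → Prop} {a m b : ℝ} {γ δ} (h1 : LCurve I a m γ)
    (h2 : LCurve J m b δ) (hIJ : ∀ v, I v → v.1 = m → J v) :
    ∃ ε, LCurve (fun v => I v ∨ J v) a b ε := by
  have hm : m ∈ Set.Icc a m := ⟨h1.ab, le_rfl⟩
  have hag : γ m = δ m := by
    have e := h1.fst m hm
    have := h2.uniq (γ m) (hIJ _ (h1.mem m hm) e) (h1.good m hm)
    rw [e] at this
    exact this.symm
  refine ⟨fun t => if t ≤ m then γ t else δ t, h1.ab.trans h2.ab, ?_, ?_, ?_, ?_, ?_, ?_⟩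
  · refine Continuous.if_le h1.cont h2.cont continuous_id continuous_const ?_
    rintro x rfl
    exact hag
  · intro t ht
    split_ifs with hc
    · exact h1.fst t ⟨ht.1, hc⟩
    · exact h2.fst t ⟨(not_le.1 hc).le, ht.2⟩
  · intro t ht
    split_ifs with hc
    · exact h1.good t ⟨ht.1, hc⟩
    · exact h2.good t ⟨(not_le.1 hc).le, ht.2⟩
  · intro t ht
    split_ifs with hc
    · exact Or.inl (h1.mem t ⟨ht.1, hc⟩)
    · exact Or.inr (h2.mem t ⟨(not_le.1 hc).le, ht.2⟩)
  · rintro v (hv | hv)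
    · exact ⟨(h1.dom v hv).1, (h1.dom v hv).2.trans h2.ab⟩
    · exact ⟨h1.ab.trans (h2.dom v hv).1, (h2.dom v hv).2⟩
  · rintro v (hv | hv) hg
    · rw [if_pos (h1.dom v hv).2]
      exact h1.uniq v hv hg
    · split_ifs with hc
      · have e : v.1 = m := le_antisymm hc (h2.dom v hv).1
        rw [e, hag, ← e]
        exact h2.uniq v hv hg
      · exact h2.uniq v hv hg

def lDn (A B : LNode) : LDat :=
  ⟨549755813888, 43980465, 41781442, A.t + B.t, A.y + B.y, A.z + B.z,
    2 * (B.t - A.t), 2 * (B.y - A.y), 2 * (B.z - A.z)⟩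

theorem lpiece_OK {A B : LNode} (h : lpiece A B = true) : (lDn A B).OK 23 21 ∧ 0 < (lDn A B).d0 := by
  unfold lpiece at h
  simp only [lforceZ_eq, Bool.and_eq_true] at h
  exact ⟨lchk_OK h.2, lpos_spec h.1⟩

def LAny : List LNode → ℝ × ℝ × ℝ → Prop
  | [], _ => False
  | A :: l, v =>
    match l with
    | [] => False
    | B :: _ => (lDn A B).Reg v ∨ LAny l v

def llast : LNode → List LNode → LNode
  | A, [] => A
  | _, B :: l => llast B l

theorem lDn_E_half (A B : LNode) (y z : ℝ) : (lDn A B).E (1 / 2, y, z) =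
    ((B.t : ℝ) / 549755813888, B.y / 549755813888 - y + z * (1429365116109 / 1099511627776),
      B.z / 549755813888 - y * (219902325555 / 1099511627776) - z) := by
  rw [LDat.E_eq]
  simp only [lDn]
  push_cast
  refine Prod.ext ?_ (Prod.ext ?_ ?_) <;> dsimp only <;> ring

theorem lDn_E_nhalf (A B : LNode) (y z : ℝ) : (lDn A B).E (-(1 / 2), y, z) =
    ((A.t : ℝ) / 549755813888, A.y / 549755813888 - y + z * (1429365116109 / 1099511627776),
      A.z / 549755813888 - y * (219902325555 / 1099511627776) - z) := by
  rw [LDat.E_eq]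
  simp only [lDn]
  push_cast
  refine Prod.ext ?_ (Prod.ext ?_ ?_) <;> dsimp only <;> ring

theorem lDn_next {A B C : LNode} (hd : 0 < (lDn A B).d0) {v} (hv : (lDn A B).Reg v)
    (h1 : v.1 = B.t / 549755813888) : (lDn B C).Reg v := by
  obtain ⟨⟨τ, y, z⟩, hu, rfl⟩ := hv
  have e : τ = 1 / 2 := by
    rw [LDat.E_eq] at h1
    have hd' : (0 : ℝ) < (lDn A B).d0 := by exact_mod_cast hd
    have hd2 : ((lDn A B).d0 : ℝ) = 2 * (B.t - A.t) := by simp [lDn]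
    have hc : ((lDn A B).c0 : ℝ) = A.t + B.t := by simp [lDn]
    dsimp only at h1
    rw [div_eq_div_iff (by norm_num) (by norm_num), hc] at h1
    have : (τ - 1 / 2) * ((lDn A B).d0 : ℝ) = 0 := by
      rw [sub_mul, hd2]; rw [hd2] at h1; linarith
    rcases mul_eq_zero.1 this with h | h
    · linarith
    · linarith
  subst e
  refine ⟨(-(1 / 2), y, z), ⟨?_, hu.2.1, hu.2.2⟩, ?_⟩
  · have := hu.1
    simpa [lDn, LDat.F] using this
  · rw [lDn_E_half, lDn_E_nhalf]

theorem lchain_curve : ∀ (l : List LNode) (A B : LNode), lchain (A :: B :: l) = true →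
    ∃ γ, LCurve (LAny (A :: B :: l)) (A.t / 549755813888) ((llast B l).t / 549755813888) γ := by
  intro l
  induction l with
  | nil =>
    intro A B h
    simp only [lchain, Bool.and_eq_true] at h
    obtain ⟨hO, hd⟩ := lpiece_OK h.1
    obtain ⟨γ, hγ⟩ := hO.curve hd rfl
    refine ⟨γ, ?_⟩
    convert hγ using 1
    · funext v; simp [LAny]
    · simp [lDn]; ring
    · simp [lDn, llast]; ring
  | cons C l ih =>
    intro A B h
    simp only [lchain, Bool.and_eq_true] at h
    obtain ⟨hO, hd⟩ := lpiece_OK h.1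
    obtain ⟨γ, hγ⟩ := hO.curve hd rfl
    obtain ⟨δ, hδ⟩ := ih B C (by simp only [lchain, Bool.and_eq_true]; exact h.2)
    have e1 : ((2 * (lDn A B).c0 - (lDn A B).d0) / 2199023255552 : ℝ) = A.t / 549755813888 := by
      simp [lDn]; ring
    have e2 : ((2 * (lDn A B).c0 + (lDn A B).d0) / 2199023255552 : ℝ) = B.t / 549755813888 := by
      simp [lDn]; ring
    rw [e1, e2] at hγ
    exact hγ.glue hδ fun v hv hm => Or.inl (lDn_next hd hv hm)

/-! ### Numerical data: an approximation of the curve -/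

def lomN0 : List LNode := [
  ⟨225399883694, -105490929944, -599453138290⟩,
  ⟨226774273229, -105559209209, -599531196693⟩,
  ⟨228148662764, -105625280020, -599606743581⟩,
  ⟨229523052299, -105689133316, -599679782809⟩,
  ⟨230897441834, -105750760368, -599750317903⟩,
  ⟨232271831369, -105810152787, -599818352068⟩,
  ⟨233646220904, -105867302516, -599883888180⟩,
  ⟨235020610439, -105922201832, -599946928791⟩,
  ⟨236394999974, -105974843347, -600007476131⟩,
  ⟨237769389509, -106025220003, -600065532108⟩,
  ⟨239143779044, -106073325074, -600121098305⟩,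
  ⟨240518168579, -106119152167, -600174175989⟩,
  ⟨241892558114, -106162695212, -600224766104⟩,
  ⟨243266947649, -106203948473, -600272869281⟩,
  ⟨244641337184, -106242906535, -600318485830⟩,
  ⟨246015726719, -106279564312, -600361615748⟩,
  ⟨247390116254, -106313917039, -600402258719⟩,
  ⟨248764505789, -106345960272, -600440414116⟩,
  ⟨250138895324, -106375689890, -600476081000⟩,
  ⟨251513284859, -106403102086, -600509258125⟩,
  ⟨252887674394, -106428193373, -600539943939⟩,
  ⟨254262063929, -106450960576, -600568136584⟩,
  ⟨255636453464, -106471400833, -600593833902⟩,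
  ⟨257010842999, -106489511591, -600617033433⟩,
  ⟨258385232534, -106505290607, -600637732420⟩,
  ⟨259759622069, -106518735940, -600655927811⟩,
  ⟨261134011604, -106529845954, -600671616258⟩,
  ⟨262508401139, -106538619313, -600684794125⟩,
  ⟨263882790674, -106545054978, -600695457487⟩,
  ⟨265257180209, -106549152207, -600703602132⟩,
  ⟨266631569744, -106550910547, -600709223567⟩,
  ⟨268005959279, -106550329836, -600712317017⟩,
  ⟨269380348814, -106547410197, -600712877431⟩]

def lomN1 : List LNode := [
  ⟨270754738349, -106542152038, -600710899483⟩,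
  ⟨272129127884, -106534556043, -600706377578⟩,
  ⟨273503517419, -106524623176, -600699305848⟩,
  ⟨274877906954, -106512354672, -600689678166⟩,
  ⟨276252296489, -106497752035, -600677488140⟩,
  ⟨277626686024, -106480817035, -600662729120⟩,
  ⟨279001075559, -106461551705, -600645394202⟩,
  ⟨280375465094, -106439958333, -600625476232⟩,
  ⟨281749854629, -106416039465, -600602967807⟩,
  ⟨283124244164, -106389797892, -600577861280⟩,
  ⟨284498633699, -106361236656, -600550148766⟩,
  ⟨285873023234, -106330359036, -600519822143⟩,
  ⟨287247412769, -106297168550, -600486873058⟩,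
  ⟨288621802304, -106261668947, -600451292929⟩,
  ⟨289996191839, -106223864206, -600413072950⟩,
  ⟨291370581374, -106183758528, -600372204098⟩,
  ⟨292744970909, -106141356330, -600328677133⟩,
  ⟨294119360444, -106096662246, -600282482605⟩,
  ⟨295493749979, -106049681115, -600233610858⟩,
  ⟨296868139514, -106000417980, -600182052034⟩,
  ⟨298242529049, -105948878083, -600127796077⟩,
  ⟨299616918584, -105895066856, -600070832742⟩,
  ⟨300991308119, -105838989920, -600011151594⟩,
  ⟨302365697654, -105780653075, -599948742016⟩,
  ⟨303740087189, -105720062298, -599883593214⟩,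
  ⟨305114476724, -105657223736, -599815694221⟩,
  ⟨306488866259, -105592143699, -599745033902⟩,
  ⟨307863255794, -105524828654, -599671600960⟩,
  ⟨309237645329, -105455285222, -599595383943⟩,
  ⟨310612034864, -105383520169, -599516371243⟩,
  ⟨311986424399, -105309540398, -599434551109⟩,
  ⟨313360813934, -105233352947, -599349911647⟩,
  ⟨314735203469, -105154964980, -599262440827⟩]

def lomN2 : List LNode := [
  ⟨316109593004, -105074383782, -599172126491⟩,
  ⟨317483982539, -104991616749, -599078956354⟩,
  ⟨318858372074, -104906671386, -598982918012⟩,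
  ⟨320232761609, -104819555297, -598883998949⟩,
  ⟨321607151144, -104730276177, -598782186540⟩,
  ⟨322981540679, -104638841810, -598677468057⟩,
  ⟨324355930214, -104545260058, -598569830677⟩,
  ⟨325730319749, -104449538855, -598459261485⟩,
  ⟨327104709284, -104351686200, -598345747483⟩,
  ⟨328479098819, -104251710150, -598229275592⟩,
  ⟨329853488354, -104149618811, -598109832659⟩,
  ⟨331227877889, -104045420335, -597987405466⟩,
  ⟨332602267424, -103939122908, -597861980730⟩,
  ⟨333976656959, -103830734745, -597733545116⟩,
  ⟨335351046494, -103720264083, -597602085234⟩,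
  ⟨336725436029, -103607719172, -597467587655⟩,
  ⟨338099825564, -103493108270, -597330038908⟩,
  ⟨339474215099, -103376439632, -597189425490⟩,
  ⟨340848604634, -103257721505, -597045733872⟩,
  ⟨342222994169, -103136962121, -596898950503⟩,
  ⟨343597383704, -103014169689, -596749061818⟩,
  ⟨344971773239, -102889352385, -596596054241⟩,
  ⟨346346162774, -102762518347, -596439914191⟩,
  ⟨347720552309, -102633675670, -596280628093⟩,
  ⟨349094941844, -102502832392, -596118182375⟩,
  ⟨350469331379, -102369996493, -595952563479⟩,
  ⟨351843720914, -102235175883, -595783757866⟩,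
  ⟨353218110449, -102098378398, -595611752021⟩,
  ⟨354592499984, -101959611789, -595436532458⟩,
  ⟨355966889519, -101818883721, -595258085724⟩,
  ⟨357341279054, -101676201756, -595076398407⟩,
  ⟨358715668589, -101531573356, -594891457141⟩,
  ⟨360090058124, -101385005870, -594703248607⟩]

def lomN3 : List LNode := [
  ⟨361464447659, -101236506528, -594511759545⟩,
  ⟨362838837194, -101086082434, -594316976750⟩,
  ⟨364213226729, -100933740560, -594118887086⟩,
  ⟨365587616264, -100779487737, -593917477486⟩,
  ⟨366962005799, -100623330653, -593712734953⟩,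
  ⟨368336395334, -100465275840, -593504646574⟩,
  ⟨369710784869, -100305329672, -593293199517⟩,
  ⟨371085174404, -100143498356, -593078381035⟩,
  ⟨372459563939, -99979787929, -592860178477⟩,
  ⟨373833953474, -99814204248, -592638579284⟩,
  ⟨375208343009, -99646752984, -592413570999⟩,
  ⟨376582732544, -99477439620, -592185141267⟩,
  ⟨377957122079, -99306269441, -591953277841⟩,
  ⟨379331511614, -99133247531, -591717968584⟩,
  ⟨380705901149, -98958378763, -591479201474⟩,
  ⟨382080290684, -98781667802, -591236964607⟩,
  ⟨383454680219, -98603119088, -590991246198⟩,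
  ⟨384829069754, -98422736843, -590742034588⟩,
  ⟨386203459289, -98240525055, -590489318241⟩,
  ⟨387577848824, -98056487483, -590233085755⟩,
  ⟨388952238359, -97870627643, -589973325856⟩,
  ⟨390326627894, -97682948811, -589710027406⟩,
  ⟨391701017429, -97493454014, -589443179405⟩,
  ⟨393075406964, -97302146027, -589172770990⟩,
  ⟨394449796499, -97109027371, -588898791438⟩,
  ⟨395824186034, -96914100304, -588621230171⟩,
  ⟨397198575569, -96717366823, -588340076755⟩,
  ⟨398572965104, -96518828658, -588055320899⟩,
  ⟨399947354639, -96318487266, -587766952463⟩,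
  ⟨401321744174, -96116343832, -587474961453⟩,
  ⟨402696133709, -95912399265, -587179338025⟩,
  ⟨404070523244, -95706654192, -586880072486⟩,
  ⟨405444912779, -95499108959, -586577155292⟩]

def lomN4 : List LNode := [
  ⟨406819302314, -95289763627, -586270577054⟩,
  ⟨408193691849, -95078617970, -585960328531⟩,
  ⟨409568081384, -94865671472, -585646400637⟩,
  ⟨410942470919, -94650923326, -585328784438⟩,
  ⟨412316860454, -94434372432, -585007471152⟩,
  ⟨413691249989, -94216017394, -584682452148⟩,
  ⟨415065639524, -93995856522, -584353718949⟩,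
  ⟨416440029059, -93773887826, -584021263226⟩,
  ⟨417814418594, -93550109019, -583685076804⟩,
  ⟨419188808129, -93324517515, -583345151655⟩,
  ⟨420563197664, -93097110426, -583001479901⟩,
  ⟨421937587199, -92867884566, -582654053811⟩,
  ⟨423311976734, -92636836445, -582302865799⟩,
  ⟨424686366269, -92403962273, -581947908426⟩,
  ⟨426060755804, -92169257960, -581589174395⟩,
  ⟨427435145339, -91932719112, -581226656551⟩,
  ⟨428809534874, -91694341037, -580860347878⟩,
  ⟨430183924409, -91454118741, -580490241498⟩,
  ⟨431558313944, -91212046929, -580116330669⟩,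
  ⟨432932703479, -90968120009, -579738608782⟩,
  ⟨434307093014, -90722332092, -579357069358⟩,
  ⟨435681482549, -90474676987, -578971706048⟩,
  ⟨437055872084, -90225148214, -578582512627⟩,
  ⟨438430261619, -89973738992, -578189482995⟩,
  ⟨439804651154, -89720442253, -577792611171⟩,
  ⟨441179040689, -89465250633, -577391891290⟩,
  ⟨442553430224, -89208156481, -576987317603⟩,
  ⟨443927819759, -88949151859, -576578884471⟩,
  ⟨445302209294, -88688228543, -576166586363⟩,
  ⟨446676598829, -88425378026, -575750417850⟩,
  ⟨448050988364, -88160591518, -575330373606⟩,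
  ⟨449425377899, -87893859955, -574906448401⟩,
  ⟨450799767434, -87625173993, -574478637098⟩]

def lomN5 : List LNode := [
  ⟨452174156969, -87354524018, -574046934648⟩,
  ⟨453548546504, -87081900144, -573611336090⟩,
  ⟨454922936039, -86807292217, -573171836542⟩,
  ⟨456297325574, -86530689820, -572728431201⟩,
  ⟨457671715109, -86252082274, -572281115335⟩,
  ⟨459046104644, -85971458641, -571829884284⟩,
  ⟨460420494179, -85688807731, -571374733449⟩,
  ⟨461794883714, -85404118099, -570915658294⟩,
  ⟨463169273249, -85117378054, -570452654336⟩,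
  ⟨464543662784, -84828575661, -569985717145⟩,
  ⟨465918052319, -84537698741, -569514842336⟩,
  ⟨467292441854, -84244734882, -569040025567⟩,
  ⟨468666831389, -83949671435, -568561262532⟩,
  ⟨470041220924, -83652495524, -568078548957⟩,
  ⟨471415610459, -83353194046, -567591880597⟩,
  ⟨472789999994, -83051753677, -567101253227⟩,
  ⟨474164389529, -82748160874, -566606662641⟩,
  ⟨475538779064, -82442401883, -566108104645⟩,
  ⟨476913168599, -82134462737, -565605575052⟩,
  ⟨478287558134, -81824329266, -565099069677⟩,
  ⟨479661947669, -81511987099, -564588584332⟩,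
  ⟨481036337204, -81197421666, -564074114822⟩,
  ⟨482410726739, -80880618207, -563555656938⟩,
  ⟨483785116274, -80561561773, -563033206450⟩,
  ⟨485159505809, -80240237229, -562506759108⟩,
  ⟨486533895344, -79916629263, -561976310630⟩,
  ⟨487908284879, -79590722388, -561441856698⟩,
  ⟨489282674414, -79262500944, -560903392958⟩,
  ⟨490657063949, -78931949108, -560360915006⟩,
  ⟨492031453484, -78599050892, -559814418388⟩,
  ⟨493405843019, -78263790154, -559263898596⟩,
  ⟨494780232554, -77926150596, -558709351056⟩,
  ⟨496154622089, -77586115776, -558150771128⟩]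

def lomN6 : List LNode := [
  ⟨497529011624, -77243669104, -557588154100⟩,
  ⟨498903401159, -76898793855, -557021495178⟩,
  ⟨500277790694, -76551473167, -556450789485⟩,
  ⟨501652180229, -76201690048, -555876032055⟩,
  ⟨503026569764, -75849427383, -555297217823⟩,
  ⟨504400959299, -75494667934, -554714341625⟩,
  ⟨505775348834, -75137394348, -554127398188⟩,
  ⟨507149738369, -74777589161, -553536382127⟩,
  ⟨508524127904, -74415234799, -552941287938⟩,
  ⟨509898517439, -74050313588, -552342109991⟩,
  ⟨511272906974, -73682807758, -551738842528⟩,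
  ⟨512647296509, -73312699441, -551131479652⟩,
  ⟨514021686044, -72939970683, -550520015326⟩,
  ⟨515396075579, -72564603446, -549904443364⟩,
  ⟨516770465114, -72186579612, -549284757426⟩,
  ⟨518144854649, -71805880986, -548660951014⟩,
  ⟨519519244184, -71422489304, -548033017461⟩,
  ⟨520893633719, -71036386236, -547400949932⟩,
  ⟨522268023254, -70647553390, -546764741413⟩,
  ⟨523642412789, -70255972315, -546124384707⟩,
  ⟨525016802324, -69861624510, -545479872425⟩,
  ⟨526391191859, -69464491423, -544831196987⟩,
  ⟨527765581394, -69064554459, -544178350608⟩,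
  ⟨529139970929, -68661794984, -543521325297⟩,
  ⟨530514360464, -68256194329, -542860112849⟩,
  ⟨531888749999, -67847733792, -542194704838⟩,
  ⟨533263139534, -67436394646, -541525092615⟩,
  ⟨534637529069, -67022158142, -540851267296⟩,
  ⟨536011918604, -66605005513, -540173219760⟩,
  ⟨537386308139, -66184917978, -539490940643⟩,
  ⟨538760697674, -65761876747, -538804420328⟩,
  ⟨540135087209, -65335863025, -538113648942⟩,
  ⟨541509476744, -64906858015, -537418616349⟩]

def lomN7 : List LNode := [
  ⟨542883866279, -64474842925, -536719312144⟩,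
  ⟨544258255814, -64039798970, -536015725643⟩,
  ⟨545632645349, -63601707376, -535307845884⟩,
  ⟨547007034884, -63160549387, -534595661613⟩,
  ⟨548381424419, -62716306264, -533879161282⟩,
  ⟨549755813954, -62268959295, -533158333041⟩,
  ⟨551130203489, -61818489796, -532433164730⟩,
  ⟨552504593024, -61364879113, -531703643877⟩,
  ⟨553878982559, -60908108630, -530969757685⟩,
  ⟨555253372094, -60448159773, -530231493031⟩,
  ⟨556627761629, -59985014011, -529488836456⟩,
  ⟨558002151164, -59518652861, -528741774157⟩,
  ⟨559376540699, -59049057893, -527990291985⟩,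
  ⟨560750930234, -58576210735, -527234375433⟩,
  ⟨562125319769, -58100093075, -526474009633⟩,
  ⟨563499709304, -57620686663, -525709179343⟩,
  ⟨564874098839, -57137973321, -524939868948⟩,
  ⟨566248488374, -56651934941, -524166062447⟩,
  ⟨567622877909, -56162553493, -523387743447⟩,
  ⟨568997267444, -55669811026, -522604895156⟩,
  ⟨570371656979, -55173689672, -521817500375⟩,
  ⟨571746046514, -54674171654, -521025541492⟩,
  ⟨573120436049, -54171239284, -520229000472⟩,
  ⟨574494825584, -53664874972, -519427858852⟩,
  ⟨575869215119, -53155061224, -518622097730⟩,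
  ⟨577243604654, -52641780652, -517811697760⟩,
  ⟨578617994189, -52125015974, -516996639144⟩,
  ⟨579992383724, -51604750020, -516176901619⟩,
  ⟨581366773259, -51080965733, -515352464457⟩,
  ⟨582741162794, -50553646174, -514523306448⟩,
  ⟨584115552329, -50022774528, -513689405899⟩,
  ⟨585489941864, -49488334104, -512850740621⟩,
  ⟨586864331399, -48950308341, -512007287920⟩]

theorem lchain_append (x : LNode) (m : List LNode) : ∀ l : List LNode,
    lchain (l ++ [x]) = true → lchain (x :: m) = true → lchain (l ++ x :: m) = true := by
  intro l
  induction l with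
  | nil => intro _ h; exact h
  | cons A l ih =>
    intro h1 h2
    cases l with
    | nil =>
      simp only [lchain, List.cons_append, List.nil_append, Bool.and_eq_true] at h1 ⊢
      exact ⟨h1.1, h2⟩
    | cons B l =>
      simp only [lchain, List.cons_append, Bool.and_eq_true] at h1 ⊢
      exact ⟨h1.1, ih h1.2 h2⟩

set_option maxRecDepth 100000 in
theorem lomN0_ok : lchain (lomN0 ++ [⟨270754738349, -106542152038, -600710899483⟩]) = true := by decide +kernel

set_option maxRecDepth 100000 in
theorem lomN1_ok : lchain (lomN1 ++ [⟨316109593004, -105074383782, -599172126491⟩]) = true := by decide +kernel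

set_option maxRecDepth 100000 in
theorem lomN2_ok : lchain (lomN2 ++ [⟨361464447659, -101236506528, -594511759545⟩]) = true := by decide +kernel

set_option maxRecDepth 100000 in
theorem lomN3_ok : lchain (lomN3 ++ [⟨406819302314, -95289763627, -586270577054⟩]) = true := by decide +kernel

set_option maxRecDepth 100000 in
theorem lomN4_ok : lchain (lomN4 ++ [⟨452174156969, -87354524018, -574046934648⟩]) = true := by decide +kernel

set_option maxRecDepth 100000 in
theorem lomN5_ok : lchain (lomN5 ++ [⟨497529011624, -77243669104, -557588154100⟩]) = true := by decide +kernel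

set_option maxRecDepth 100000 in
theorem lomN6_ok : lchain (lomN6 ++ [⟨542883866279, -64474842925, -536719312144⟩]) = true := by decide +kernel

set_option maxRecDepth 100000 in
theorem lomN7_ok : lchain lomN7 = true := by decide +kernel

def lomNodes : List LNode :=
  lomN0 ++ (lomN1 ++ (lomN2 ++ (lomN3 ++ (lomN4 ++ (lomN5 ++ (lomN6 ++ lomN7))))))

theorem lomNodes_ok : lchain lomNodes = true :=
  lchain_append _ _ lomN0 lomN0_ok (
  lchain_append _ _ lomN1 lomN1_ok (
  lchain_append _ _ lomN2 lomN2_ok (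
  lchain_append _ _ lomN3 lomN3_ok (
  lchain_append _ _ lomN4 lomN4_ok (
  lchain_append _ _ lomN5 lomN5_ok (
  lchain_append _ _ lomN6 lomN6_ok (
  lomN7_ok)))))))

/-! ### Closing up the curve -/

def lP0 : LNode := ⟨225399883694, -105490929944, -599453138290⟩
def lP1 : LNode := ⟨226774273229, -105559209209, -599531196693⟩
def lQ0 : LNode := ⟨585489941864, -49488334104, -512850740621⟩
def lQ1 : LNode := ⟨586864331399, -48950308341, -512007287920⟩

def lD0 : LDat := ⟨0, 19791209, 19791209, 450799767388, -210981859888, -1198906276580, 0, 0, 0⟩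

set_option maxRecDepth 100000 in
theorem lD0_chk : lchk 25 23 lD0.ht lD0.ry lD0.rz lD0.c0 lD0.c1 lD0.c2 lD0.d0 lD0.d1 lD0.d2 = true := by
  decide +kernel

theorem lD0_OK : lD0.OK 25 23 := lchk_OK lD0_chk

theorem lprod_bd {y j : ℝ} {m : ℤ} {r h : ℕ} (hj : LI.mem j ⟨m, r⟩) (hy : |y| * 1099511627776 ≤ h) :
    |y * j - y * (m / 1099511627776)| ≤ h * r / 1208925819614629174706176 := by
  unfold LI.mem at hj
  dsimp only at hj
  have e : y * j - y * (m / 1099511627776) =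
      (y * 1099511627776) * (j * 1099511627776 - m) / 1208925819614629174706176 := by ring
  rw [e, abs_div, abs_mul, abs_mul, abs_of_pos (show (0 : ℝ) < 1099511627776 by norm_num),
    abs_of_pos (show (0 : ℝ) < 1208925819614629174706176 by norm_num)]
  gcongr

theorem lD0_st : ∃ S : LSt, LInv lD0.F sideF.P 3 S ∧ S.c0 = ⟨1173280674135, 2⟩ ∧
    S.c1 = ⟨-98076476247, 3⟩ ∧ S.c2 = ⟨-1024290159867, 3⟩ ∧
    S.o0 = ⟨685297060463, 42942967⟩ ∧ S.o1 = ⟨-699931214891, 40999831⟩ ∧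
    S.o2 = ⟨387227454648, 92478476⟩ ∧ S.s0 = ⟨909902296295, 78365273⟩ ∧
    S.s1 = ⟨2395322992465, 79830808⟩ ∧ S.s2 = ⟨-806744612478, 215670610⟩ :=
  ⟨_, lD0.F.run_inv sideF.P 3, rfl, rfl, rfl, rfl, rfl, rfl, rfl, rfl, rfl⟩

theorem lD0_end {y z : ℝ} (h : lD0.F.In (0, y, z)) :
    (lDn lQ0 lQ1).Reg (Fq (lD0.E (0, y, z)) 3, Fq (lD0.E (0, y, z)) 4, Fq (lD0.E (0, y, z)) 5) ∧
    lP0.t / 549755813888 < Fq (lD0.E (0, y, z)) 3 := by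
  obtain ⟨S, hS, c0, c1, c2, o0, o1, o2, s0, s1, s2⟩ := lD0_st
  have hy : |y| * 1099511627776 ≤ (19791209 : ℕ) := h.2.1
  have hz : |z| * 1099511627776 ≤ (19791209 : ℕ) := h.2.2
  have i0 := lD0.F.In_zero
  have C0 := hS.c0
  have C1 := hS.c1
  have C2 := hS.c2
  rw [c0] at C0
  rw [c1] at C1
  rw [c2] at C2
  have O0 := lprod_bd (o0 ▸ hS.o0 _ _ i0 h) hy
  have O1 := lprod_bd (o1 ▸ hS.o1 _ _ i0 h) hy
  have O2 := lprod_bd (o2 ▸ hS.o2 _ _ i0 h) hy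
  have S0 := lprod_bd (s0 ▸ hS.s0 _ _ i0 h) hz
  have S1 := lprod_bd (s1 ▸ hS.s1 _ _ i0 h) hz
  have S2 := lprod_bd (s2 ▸ hS.s2 _ _ i0 h) hz
  have x3 := lD0.F.diff sideF.P (0, 0, 0) (0, y, z) 3
  have x4 := lD0.F.diff sideF.P (0, 0, 0) (0, y, z) 4
  have x5 := lD0.F.diff sideF.P (0, 0, 0) (0, y, z) 5
  dsimp only at x3 x4 x5
  rw [lD0.XF (0, y, z)] at x3 x4 x5
  unfold LI.mem at C0 C1 C2
  dsimp only at C0 C1 C2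
  simp only [show 3 + 1 = 4 from rfl, show 3 + 2 = 5 from rfl] at C1 C2 O1 O2 S1 S2
  simp only [sub_zero, zero_mul, zero_add] at x3 x4 x5
  generalize Fq (lD0.E (0, y, z)) 3 = X3 at *
  generalize Fq (lD0.E (0, y, z)) 4 = X4 at *
  generalize Fq (lD0.E (0, y, z)) 5 = X5 at *
  generalize lD0.F.X sideF.P (0, 0, 0) 3 = K3 at *
  generalize lD0.F.X sideF.P (0, 0, 0) 4 = K4 at *
  generalize lD0.F.X sideF.P (0, 0, 0) 5 = K5 at *
  generalize y * lD0.F.J sideF.P lD0.F.o (0, 0, 0) (0, y, z) 3 = a3 at *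
  generalize y * lD0.F.J sideF.P lD0.F.o (0, 0, 0) (0, y, z) 4 = a4 at *
  generalize y * lD0.F.J sideF.P lD0.F.o (0, 0, 0) (0, y, z) 5 = a5 at *
  generalize z * lD0.F.J sideF.P lD0.F.s (0, 0, 0) (0, y, z) 3 = b3 at *
  generalize z * lD0.F.J sideF.P lD0.F.s (0, 0, 0) (0, y, z) 4 = b4 at *
  generalize z * lD0.F.J sideF.P lD0.F.s (0, 0, 0) (0, y, z) 5 = b5 at *
  have hy' : |y| ≤ 19791209 / 1099511627776 := by
    rw [le_div_iff₀ (by norm_num)]; exact_mod_cast hy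
  have hz' : |z| ≤ 19791209 / 1099511627776 := by
    rw [le_div_iff₀ (by norm_num)]; exact_mod_cast hz
  clear hS hy hz c0 c1 c2 o0 o1 o2 s0 s1 s2 i0 h
  push_cast at C0 C1 C2 O0 O1 O2 S0 S1 S2
  rw [abs_le] at *
  obtain ⟨τ, hτ⟩ : ∃ τ : ℝ, τ * 2748779070 = X3 * 1099511627776 - 1172354273263 :=
    ⟨(X3 * 1099511627776 - 1172354273263) / 2748779070, by ring⟩
  obtain ⟨e1, he1⟩ : ∃ e1 : ℝ, e1 = X4 - (-98438642445 + τ * 1076051526) / 1099511627776 := ⟨_, rfl⟩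
  obtain ⟨e2, he2⟩ : ∃ e2 : ℝ, e2 = X5 - (-1024858028541 + τ * 1686905402) / 1099511627776 :=
    ⟨_, rfl⟩
  obtain ⟨Y, hY⟩ : ∃ Y : ℝ, Y * (1 + 219902325555 / 1099511627776 * (1429365116109 / 1099511627776))
      = -(e1 + 1429365116109 / 1099511627776 * e2) :=
    ⟨-(e1 + 1429365116109 / 1099511627776 * e2) /
      (1 + 219902325555 / 1099511627776 * (1429365116109 / 1099511627776)), by field_simp⟩
  obtain ⟨Z, hZ⟩ : ∃ Z : ℝ, Z = -e2 - 219902325555 / 1099511627776 * Y := ⟨_, rfl⟩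
  norm_num at C0 C1 C2 O0 O1 O2 S0 S1 S2 hy' hz' hY
  have hτb : |τ| ≤ 1 / 2 := by
    rw [abs_le]; constructor <;> linarith
  have hYb : |Y| ≤ 43980465 / 1099511627776 := by
    rw [abs_le]; constructor <;> linarith
  have hZb : |Z| ≤ 41781442 / 1099511627776 := by
    rw [abs_le]; constructor <;> linarith
  refine ⟨⟨(τ, Y, Z), ⟨?_, ?_, ?_⟩, ?_⟩, ?_⟩
  · show |τ| * 1099511627776 ≤ ((549755813888 : ℕ) : ℝ)
    push_cast; linarith
  · show |Y| * 1099511627776 ≤ ((43980465 : ℕ) : ℝ)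
    push_cast; linarith
  · show |Z| * 1099511627776 ≤ ((41781442 : ℕ) : ℝ)
    push_cast; linarith
  · rw [LDat.E_eq]
    simp only [lDn, lQ0, lQ1]
    push_cast
    refine Prod.ext ?_ (Prod.ext ?_ ?_) <;> dsimp only <;> linarith
  · simp only [lP0]
    push_cast
    linarith

theorem lD0_back {y z : ℝ} (h : lD0.F.In (0, y, z)) : 0 ≤ Gq (lD0.E (0, y, z)) 21 := by
  have h1 := (lD0.B.run_inv sideB.P 20).b1 (0, z, y) h.InB
  rw [lD0.XB] at h1
  have e : (lrun sideB.P lD0.B.ht lD0.B.ho lD0.B.hs 20 lD0.B.start).b1 =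
      ⟨387484648244, 3618492560⟩ := by rfl
  rw [e] at h1
  unfold LI.mem at h1
  rw [abs_le] at h1
  have := h1.1
  push_cast at this
  linarith

theorem lD0_E (y z : ℝ) : lD0.E (0, y, z) = (lDn lP0 lP1).E (-(1 / 2), y, z) := by
  rw [lDn_E_nhalf, LDat.E_eq]
  simp only [lD0, lP0]
  push_cast
  refine Prod.ext ?_ (Prod.ext ?_ ?_) <;> dsimp only <;> ring

theorem lD0_In {y z : ℝ} (h : lD0.F.In (0, y, z)) : (lDn lP0 lP1).F.In (-(1 / 2), y, z) := by
  have h1 : |y| * 1099511627776 ≤ ((19791209 : ℕ) : ℝ) := h.2.1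
  have h2 : |z| * 1099511627776 ≤ ((19791209 : ℕ) : ℝ) := h.2.2
  refine ⟨?_, ?_, ?_⟩
  · show |(-(1 / 2) : ℝ)| * 1099511627776 ≤ ((549755813888 : ℕ) : ℝ)
    rw [abs_neg, abs_of_pos (by norm_num)]
    norm_num
  · show |y| * 1099511627776 ≤ ((43980465 : ℕ) : ℝ)
    push_cast at *; linarith
  · show |z| * 1099511627776 ≤ ((41781442 : ℕ) : ℝ)
    push_cast at *; linarith

theorem Fq_shift (v : ℝ × ℝ × ℝ) (n : ℕ) : Fq (Fq v 3, Fq v 4, Fq v 5) n = Fq v (n + 3) := by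
  induction n using lthree with
  | h0 => rfl
  | h1 => rfl
  | h2 => rfl
  | h n i0 i1 i2 => rw [Fq_rec _ n, Fq_rec _ (n + 3), i0, i1, i2]

theorem Gq_shift (v : ℝ × ℝ × ℝ) (n : ℕ) : Gq (Fq v 3, Fq v 4, Fq v 5) (n + 3) = Gq v n := by
  have e3 := Fq_rec v 0
  have e4 := Fq_rec v 1
  have e5 := Fq_rec v 2
  set w := (Fq v 3, Fq v 4, Fq v 5) with hw
  have g0 : Gq w 0 = -Fq v 5 := rfl
  have g1 : Gq w 1 = -Fq v 4 := rfl
  have g2 : Gq w 2 = -Fq v 3 := rfl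
  have g3 : Gq w 3 = -Fq v 2 := by
    have := Gq_rec w 0
    simp only [zero_add, Nat.reduceAdd] at this e3 e4 e5
    rw [this, g0, g1, g2, e5]
    simp only [sideF, sideB]
    push_cast
    ring
  have g4 : Gq w 4 = -Fq v 1 := by
    have := Gq_rec w 1
    simp only [zero_add, Nat.reduceAdd] at this e3 e4 e5
    rw [this, g1, g2, g3, e4]
    simp only [sideF, sideB]
    push_cast
    ring
  have g5 : Gq w 5 = -Fq v 0 := by
    have := Gq_rec w 2
    simp only [zero_add, Nat.reduceAdd] at this e3 e4 e5
    rw [this, g2, g3, g4, e3]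
    simp only [sideF, sideB]
    push_cast
    ring
  induction n using lthree with
  | h0 => exact g3
  | h1 => exact g4
  | h2 => exact g5
  | h n i0 i1 i2 => rw [Gq_rec w (n + 3), Gq_rec v n, i0, i1, i2]

theorem LGood.of_V {P fp p q mu k R kap s g N} {X : ℕ → ℝ} (h : LCon P fp p q mu k R kap s g)
    (hl : Tendsto X atTop (nhds fp)) (hV : LV p q fp X N < R ^ 2) (hb : ∀ n, N + 3 ≤ n → g ≤ X n) :
    LGood fp g X N := by
  refine ⟨hl, fun n hn => ?_⟩
  have := h.lb_of_V hV.le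
  rcases Nat.lt_or_ge n (N + 3) with h1 | h1
  · obtain rfl | rfl : n = N + 1 ∨ n = N + 2 := by omega
    · exact this.2
    · exact this.1
  · exact hb n h1

theorem LDat.OK.VB {D : LDat} {NF NB : ℕ} (h : D.OK NF NB) {v} (hv : D.Reg v) :
    LV lpB lqB lfpB (Gq v) NB < 0.0584 ^ 2 := by
  obtain ⟨⟨τ, y, z⟩, hu, rfl⟩ := hv
  rw [← D.XB]
  exact h.B.V _ hu.InB

theorem LDat.OK.VF {D : LDat} {NF NB : ℕ} (h : D.OK NF NB) {v} (hv : D.Reg v) :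
    LV lpF lqF lfpF (Fq v) NF < 0.0755 ^ 2 := by
  obtain ⟨u, hu, rfl⟩ := hv
  exact h.F.V _ hu

theorem lAny_tail {A B : LNode} {l : List LNode} {v} (h : LAny (B :: l) v) : LAny (A :: B :: l) v :=
  Or.inr h

theorem lAny_last {A B : LNode} {v} (h : (lDn A B).Reg v) :
    ∀ l : List LNode, LAny (l ++ [A, B]) v := by
  intro l
  induction l with
  | nil => exact Or.inl h
  | cons C l ih =>
    cases l with
    | nil => exact Or.inr ih
    | cons D l => exact Or.inr ih

theorem lchain_last {A B : LNode} : ∀ l : List LNode, lchain (l ++ [A, B]) = true →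
    lpiece A B = true := by
  intro l
  induction l with
  | nil =>
    intro h
    simp only [lchain, List.nil_append, Bool.and_eq_true] at h
    exact h.1
  | cons C l ih =>
    intro h
    apply ih
    cases l with
    | nil =>
      simp only [lchain, List.cons_append, List.nil_append, Bool.and_eq_true] at h ⊢
      exact h.2
    | cons D l =>
      simp only [List.cons_append] at h ⊢
      rw [lchain, Bool.and_eq_true] at h
      exact h.2

set_option maxRecDepth 100000 in
/-- the arc, in the coordinates used for the computation -/
theorem lom_arc : ∃ (γ : ℝ → ℝ × ℝ × ℝ) (t0 t1 : ℝ), t0 < t1 ∧ Continuous γ ∧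
    (∀ t ∈ Set.Icc t0 t1, (γ t).1 = t ∧ Tendsto (Fq (γ t)) atTop (nhds lfpF) ∧
      Tendsto (Gq (γ t)) atTop (nhds lfpB)) ∧
    γ t1 = (Fq (γ t0) 3, Fq (γ t0) 4, Fq (γ t0) 5) := by
  have hl1 : lomNodes = lP0 :: lP1 :: lomNodes.tail.tail := rfl
  have hl2 : lomNodes = (lomNodes.take 262) ++ [lQ0, lQ1] := rfl
  have hok := lomNodes_ok
  have hok2 := lomNodes_ok
  rw [hl1] at hok
  rw [hl2] at hok2
  obtain ⟨γ, hγ⟩ := lchain_curve _ _ _ hok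
  have oP := lpiece_OK (A := lP0) (B := lP1) (by
    rw [lchain, Bool.and_eq_true] at hok
    exact hok.1)
  have oQ := lpiece_OK (lchain_last _ hok2)
  obtain ⟨y, z, hin, hF, hB⟩ := lD0_OK.exists_slice (τ := 0) (by simp [lD0])
  obtain ⟨hr1, hlt⟩ := lD0_end hin
  have hr0 : (lDn lP0 lP1).Reg (lD0.E (0, y, z)) := ⟨_, lD0_In hin, lD0_E y z⟩
  have hbk := lD0_back hin
  have hfst : (lD0.E (0, y, z)).1 = lP0.t / 549755813888 := by
    rw [lD0_E, lDn_E_nhalf]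
  generalize lD0.E (0, y, z) = q0 at *
  have a0 : LAny (lP0 :: lP1 :: lomNodes.tail.tail) q0 := Or.inl hr0
  have a1 : LAny (lP0 :: lP1 :: lomNodes.tail.tail) (Fq q0 3, Fq q0 4, Fq q0 5) := by
    rw [← hl1, hl2]
    exact lAny_last hr1 _
  have gF0 : GoodF q0 23 := LGood.of_V lconF'.1 hF.good.lim (oP.1.VF hr0)
    (fun n hn => hF.good.lb n (by omega))
  have gB0 : GoodB q0 21 := LGood.of_V lconB'.1 hB.good.lim (oP.1.VB hr0)
    (fun n hn => hB.good.lb n (by omega))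
  have gF1 : GoodF (Fq q0 3, Fq q0 4, Fq q0 5) 23 := by
    have e : Fq (Fq q0 3, Fq q0 4, Fq q0 5) = fun n => Fq q0 (n + 3) := funext (Fq_shift q0)
    unfold GoodF
    rw [e]
    exact ⟨(tendsto_add_atTop_iff_nat 3).2 gF0.lim, fun n hn => gF0.lb _ (by omega)⟩
  have gB1 : GoodB (Fq q0 3, Fq q0 4, Fq q0 5) 21 := by
    refine LGood.of_V lconB'.1 ?_ (oQ.1.VB hr1) ?_
    · rw [← tendsto_add_atTop_iff_nat 3]
      have e : (fun n => Gq (Fq q0 3, Fq q0 4, Fq q0 5) (n + 3)) = Gq q0 := funext (Gq_shift q0)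
      rw [e]
      exact gB0.lim
    · intro n hn
      obtain ⟨m, rfl⟩ : ∃ m, n = m + 3 := ⟨n - 3, by omega⟩
      rw [Gq_shift]
      rcases Nat.lt_or_ge 21 m with h | h
      · exact gB0.lb m (by omega)
      · obtain rfl : m = 21 := by omega
        exact hbk
  have u0 := hγ.uniq _ a0 ⟨gF0, gB0⟩
  have u1 := hγ.uniq _ a1 ⟨gF1, gB1⟩
  rw [hfst] at u0
  dsimp only at u1
  refine ⟨γ, _, Fq q0 3, hlt, hγ.cont, ?_, ?_⟩
  · intro t ht
    have hm : t ∈ Set.Icc ((lP0.t : ℝ) / 549755813888)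
        ((llast lP1 lomNodes.tail.tail).t / 549755813888) :=
      ⟨ht.1, ht.2.trans (hγ.dom _ a1).2⟩
    exact ⟨hγ.fst t hm, (hγ.good t hm).1.lim, (hγ.good t hm).2.lim⟩
  · rw [u0, u1]

theorem lvec_tendsto {X : ℕ → Fin 3 → ℝ} {p : Fin 3 → ℝ} (h0 : Tendsto (fun n => X n 0) atTop (nhds (p 0)))
    (h1 : Tendsto (fun n => X n 1) atTop (nhds (p 1)))
    (h2 : Tendsto (fun n => X n 2) atTop (nhds (p 2))) : Tendsto X atTop (nhds p) := by
  rw [tendsto_pi_nhds]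
  intro i
  fin_cases i
  · exact h0
  · exact h1
  · exact h2

/-- Existence of heteroclinic arcs for the Lomelí map with parameters
`a = 44/100, b = 21/100, c = 35/100, α = −1/4, τ = −3/10` (Section 4.3.2 of the paper).
The map `f` is a bijection of `ℝ³` (with explicit inverse `g`), and there exist two
distinct fixed points `p₁ ≠ p₂` and an injective continuous curve `γ : [0,1] → ℝ³` with
`γ(1) = f³(γ(0))` all of whose points are heteroclinic from `p₁` to `p₂`. -/
theorem lomeli_heteroclinic_arc
    (f g : (Fin 3 → ℝ) → (Fin 3 → ℝ))
    (hf : ∀ v, f v =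
      ![v 2 + (-1 / 4 : ℝ) + (-3 / 10 : ℝ) * v 0 + (44 / 100 : ℝ) * (v 0) ^ 2 +
          (21 / 100 : ℝ) * v 0 * v 1 + (35 / 100 : ℝ) * (v 1) ^ 2, v 0, v 1])
    (hg : ∀ v, g v =
      ![v 1, v 2, v 0 - (-1 / 4 : ℝ) - (-3 / 10 : ℝ) * v 1 - (44 / 100 : ℝ) * (v 1) ^ 2 -
          (21 / 100 : ℝ) * v 1 * v 2 - (35 / 100 : ℝ) * (v 2) ^ 2]) :
    Function.Bijective f ∧
    Function.LeftInverse g f ∧ Function.RightInverse g f ∧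
    ∃ p1 p2 : Fin 3 → ℝ, p1 ≠ p2 ∧ f p1 = p1 ∧ f p2 = p2 ∧
      ∃ γ : ℝ → (Fin 3 → ℝ),
        ContinuousOn γ (Set.Icc 0 1) ∧
        Set.InjOn γ (Set.Icc 0 1) ∧
        γ 1 = f^[3] (γ 0) ∧
        ∀ s ∈ Set.Icc (0 : ℝ) 1,
          Tendsto (fun n => f^[n] (γ s)) atTop (nhds p2) ∧
          Tendsto (fun n => g^[n] (γ s)) atTop (nhds p1) := by
  have hL : Function.LeftInverse g f := by
    intro v
    rw [hg, hf]
    ext i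
    fin_cases i
    · simp
    · simp
    · simp; ring
  have hR : Function.RightInverse g f := by
    intro v
    rw [hf, hg]
    ext i
    fin_cases i
    · simp; ring
    · simp
    · simp
  have hF : ∀ (v : ℝ × ℝ × ℝ) (n : ℕ), f^[n] ![v.2.2, v.2.1, v.1] =
      ![Fq v (n + 2), Fq v (n + 1), Fq v n] := by
    intro v n
    induction n with
    | zero => rfl
    | succ n ih =>
      rw [Function.iterate_succ_apply', ih, hf]
      have := Fq_rec v n
      ext i
      fin_cases i
      · simp only [sideF] at this
        push_cast at this
        simp
        rw [this]; ring
      · rfl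
      · rfl
  have hG : ∀ (v : ℝ × ℝ × ℝ) (n : ℕ), g^[n] ![v.2.2, v.2.1, v.1] =
      ![-Gq v n, -Gq v (n + 1), -Gq v (n + 2)] := by
    intro v n
    induction n with
    | zero => simp [Gq, lsq]
    | succ n ih =>
      rw [Function.iterate_succ_apply', ih, hg]
      have := Gq_rec v n
      ext i
      fin_cases i
      · rfl
      · rfl
      · simp only [sideB] at this
        push_cast at this
        simp
        rw [this]; ring
  obtain ⟨γ, t0, t1, hlt, hc, hγ, hend⟩ := lom_arc
  have hsq := Real.sq_sqrt (show (0 : ℝ) ≤ 109 / 100 by norm_num)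
  have hpos := Real.sqrt_nonneg (109 / 100 : ℝ)
  have htm : ∀ s ∈ Set.Icc (0 : ℝ) 1, t0 + s * (t1 - t0) ∈ Set.Icc t0 t1 := by
    intro s hs
    constructor
    · nlinarith [hs.1]
    · nlinarith [hs.2]
  refine ⟨⟨hL.injective, hR.surjective⟩, hL, hR, fun _ => -lfpB, fun _ => lfpF, ?_, ?_, ?_,
    fun s => ![(γ (t0 + s * (t1 - t0))).2.2, (γ (t0 + s * (t1 - t0))).2.1, (γ (t0 + s * (t1 - t0))).1],
    ?_, ?_, ?_, ?_⟩
  · intro h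
    have := congrFun h 0
    simp only [lfpB, lfpF] at this
    nlinarith
  · rw [hf]
    ext i
    fin_cases i
    · simp; unfold lfpB; nlinarith
    · simp
    · simp
  · rw [hf]
    ext i
    fin_cases i
    · simp; unfold lfpF; nlinarith
    · simp
    · simp
  · apply Continuous.continuousOn
    have hc' : Continuous fun s : ℝ => γ (t0 + s * (t1 - t0)) := hc.comp (by fun_prop)
    refine continuous_pi fun i => ?_
    fin_cases i
    · exact hc'.snd.snd
    · exact hc'.snd.fst
    · exact hc'.fst
  · intro s hs s' hs' he
    have h2 := congrFun he 2
    have h3 : (γ (t0 + s * (t1 - t0))).1 = (γ (t0 + s' * (t1 - t0))).1 := h2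
    rw [(hγ _ (htm s hs)).1, (hγ _ (htm s' hs')).1] at h3
    have h4 : (s - s') * (t1 - t0) = 0 := by linarith
    rcases mul_eq_zero.1 h4 with h | h
    · linarith
    · linarith
  · dsimp only
    rw [hF]
    have e1 : t0 + 1 * (t1 - t0) = t1 := by ring
    have e0 : t0 + 0 * (t1 - t0) = t0 := by ring
    rw [e1, e0, hend]
  · intro s hs
    obtain ⟨-, l1, l2⟩ := hγ _ (htm s hs)
    dsimp only
    simp only [hF, hG]
    constructor
    · exact lvec_tendsto ((tendsto_add_atTop_iff_nat 2).2 l1) ((tendsto_add_atTop_iff_nat 1).2 l1) l1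
    · exact lvec_tendsto l2.neg ((tendsto_add_atTop_iff_nat 1).2 l2).neg
        ((tendsto_add_atTop_iff_nat 2).2 l2).neg
end

section
/- (Zeros of F give heteroclinic points.) Let f : ℝ^k → ℝ^k be a continuous bijection with continuous inverse and fixed points p_1, p_2. Let A_1 : ℝ^u → ℝ^u and A_2 : ℝ^s → ℝ^s be invertible linear maps with operator norms ‖A_1^{−1}‖ < 1 and ‖A_2‖ < 1. Let P_1 : B̄_u → ℝ^k and P_2 : B̄_s → ℝ^k be continuous with P_1(0) = p_1, P_2(0) = p_2, and suppose f^{−1}(P_1(θ)) = P_1(A_1^{−1}θ) for all θ ∈ B̄_u and f(P_2(φ)) = P_2(A_2 φ) for all φ ∈ B̄_s. Fix l_1, l_2 ∈ ℕ and suppose (θ*, φ*) ∈ B̄_u × B̄_s satisfies f^{l_1}(P_1(θ*)) − f^{−l_2}(P_2(φ*)) = 0. Then the point q = f^{l_1}(P_1(θ*)) satisfies f^{l_1+l_2}(P_1(θ*)) = P_2(φ*), lim_{n→∞} f^n(q) = p_2, and lim_{n→∞} f^{−n}(q) = p_1; i.e. q is a heteroclinic point from p_1 to p_2. -/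
open Filter

/-- Orbits through a parameterized local manifold converge to the fixed point. -/
lemma param_orbit_tendsto {k d : ℕ} (h : (Fin k → ℝ) → (Fin k → ℝ))
    (A : (Fin d → ℝ) →L[ℝ] (Fin d → ℝ)) (hA : ‖A‖ < 1)
    (P : (Fin d → ℝ) → (Fin k → ℝ))
    (hPc : ContinuousOn P (Metric.closedBall 0 1))
    (hP : ∀ x ∈ Metric.closedBall (0 : Fin d → ℝ) 1, h (P x) = P (A x))
    (x : Fin d → ℝ) (hx : x ∈ Metric.closedBall (0 : Fin d → ℝ) 1) :
    Tendsto (fun n => h^[n] (P x)) atTop (nhds (P 0)) := by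
  have hx1 : ‖x‖ ≤ 1 := by simpa using hx
  have hb : ∀ n : ℕ, ‖A^[n] x‖ ≤ ‖A‖ ^ n := by
    intro n
    induction n with
    | zero => simpa using hx1
    | succ n ih =>
      rw [Function.iterate_succ_apply', pow_succ']
      exact (A.le_opNorm _).trans (mul_le_mul_of_nonneg_left ih (norm_nonneg _))
  have hmem : ∀ n : ℕ, A^[n] x ∈ Metric.closedBall (0 : Fin d → ℝ) 1 := by
    intro n
    rw [mem_closedBall_zero_iff]
    exact (hb n).trans (pow_le_one₀ (norm_nonneg _) hA.le)
  have hconj : ∀ n : ℕ, h^[n] (P x) = P (A^[n] x) := by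
    intro n
    induction n with
    | zero => rfl
    | succ n ih =>
      rw [Function.iterate_succ_apply', Function.iterate_succ_apply', ih, hP _ (hmem n)]
  have hlim : Tendsto (fun n => A^[n] x) atTop (nhds 0) :=
    squeeze_zero_norm hb (tendsto_pow_atTop_nhds_zero_of_lt_one (norm_nonneg _) hA)
  have h0 : (0 : Fin d → ℝ) ∈ Metric.closedBall (0 : Fin d → ℝ) 1 := by simp
  have := (hPc 0 h0).tendsto.comp
    (tendsto_nhdsWithin_iff.2 ⟨hlim, Eventually.of_forall hmem⟩)
  exact this.congr fun n => (hconj n).symm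

/-- Zeros of `F` give heteroclinic points (equations (4.1)–(4.2) of the
paper).  If `P₁`, `P₂` parameterize local unstable/stable manifolds of the fixed points
`p₁`, `p₂` of the invertible map `f` (conjugating the dynamics to the linear maps `A₁`
with `‖A₁⁻¹‖ < 1` and `A₂` with `‖A₂‖ < 1`), and `(θ*, φ*)` is a zero of
`F(θ,φ) = f^{l₁}(P₁(θ)) − f^{−l₂}(P₂(φ))`, then `q = f^{l₁}(P₁(θ*))` satisfies
`f^{l₁+l₂}(P₁(θ*)) = P₂(φ*)` and is heteroclinic from `p₁` to `p₂`. -/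
theorem zeros_give_heteroclinic_points
    {k u s : ℕ}
    (f g : (Fin k → ℝ) → (Fin k → ℝ))
    (hfc : Continuous f) (hgc : Continuous g)
    (hgf : Function.LeftInverse g f) (hfg : Function.RightInverse g f)
    (p1 p2 : Fin k → ℝ) (hp1 : f p1 = p1) (hp2 : f p2 = p2)
    (A1 : (Fin u → ℝ) ≃L[ℝ] (Fin u → ℝ)) (A2 : (Fin s → ℝ) ≃L[ℝ] (Fin s → ℝ))
    (hA1 : ‖(A1.symm : (Fin u → ℝ) →L[ℝ] (Fin u → ℝ))‖ < 1)
    (hA2 : ‖(A2 : (Fin s → ℝ) →L[ℝ] (Fin s → ℝ))‖ < 1)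
    (P1 : (Fin u → ℝ) → (Fin k → ℝ)) (P2 : (Fin s → ℝ) → (Fin k → ℝ))
    (hP1c : ContinuousOn P1 (Metric.closedBall 0 1))
    (hP2c : ContinuousOn P2 (Metric.closedBall 0 1))
    (hP10 : P1 0 = p1) (hP20 : P2 0 = p2)
    (hP1 : ∀ θ ∈ Metric.closedBall (0 : Fin u → ℝ) 1, g (P1 θ) = P1 (A1.symm θ))
    (hP2 : ∀ φ ∈ Metric.closedBall (0 : Fin s → ℝ) 1, f (P2 φ) = P2 (A2 φ))
    (l1 l2 : ℕ) (θs : Fin u → ℝ) (φs : Fin s → ℝ)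
    (hθ : θs ∈ Metric.closedBall (0 : Fin u → ℝ) 1)
    (hφ : φs ∈ Metric.closedBall (0 : Fin s → ℝ) 1)
    (hzero : f^[l1] (P1 θs) - g^[l2] (P2 φs) = 0) :
    f^[l1 + l2] (P1 θs) = P2 φs ∧
    Tendsto (fun n => f^[n] (f^[l1] (P1 θs))) atTop (nhds p2) ∧
    Tendsto (fun n => g^[n] (f^[l1] (P1 θs))) atTop (nhds p1) := by
  have h1 : f^[l1] (P1 θs) = g^[l2] (P2 φs) := sub_eq_zero.1 hzero
  have h2 : f^[l2] (f^[l1] (P1 θs)) = P2 φs := by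
    rw [h1]
    exact (Function.LeftInverse.iterate hfg l2) _
  have h3 : g^[l1] (f^[l1] (P1 θs)) = P1 θs := (hgf.iterate l1) _
  refine ⟨?_, ?_, ?_⟩
  · rw [add_comm l1 l2, Function.iterate_add_apply f l2 l1, h2]
  · have h5 := param_orbit_tendsto f (A2 : (Fin s → ℝ) →L[ℝ] (Fin s → ℝ)) hA2 P2 hP2c hP2 φs hφ
    rw [hP20] at h5
    refine (tendsto_add_atTop_iff_nat l2).1 (h5.congr fun n => ?_)
    rw [Function.iterate_add_apply f n l2, h2]
  · have h5 := param_orbit_tendsto g (A1.symm : (Fin u → ℝ) →L[ℝ] (Fin u → ℝ)) hA1 P1 hP1c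
      hP1 θs hθ
    rw [hP10] at h5
    refine (tendsto_add_atTop_iff_nat l1).1 (h5.congr fun n => ?_)
    rw [Function.iterate_add_apply g n l1, h3]
end
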